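/- arXiv:math/9812080 — 2 statements merged into one kernel-verified Lean document; each statement's English description precedes it below -/
import Mathlib

section
/- Let κ be a partition with at most n parts and δ := (n−1,n−2,…,1,0). Let P_κ(x;q,qt) be the symmetric Macdonald polynomial with parameters (q,qt) (i.e. with t replaced by qt throughout its definition) and let S_{κ+δ}(x;q,t) be the q-antisymmetric Macdonald polynomial with parameters (q,t); assume both exist and are unique. Then S_{κ+δ}(x;q,t) = t^{−n(n−1)/2}·Δ_t(x)·P_κ(x;q,qt), where Δ_t(x) := ∏_{1≤i<j≤n}(t x_i − x_j). -/
/- STATEMENT 17: S_{κ+δ}(x;q,t) = t^{−n(n−1)/2}·Δ_t(x)·P_κ(x;q,qt), where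
δ = (n−1,…,1,0) and Δ_t(x) = ∏_{i<j}(t·x_i − x_j). -/

open Finset MvPolynomial

namespace Stmt17

/-- leg colength l'_η(i) -/
def legCo (n : ℕ) (η : Fin n → ℕ) (i : Fin n) : ℕ :=
  (univ.filter fun k => k < i ∧ η i ≤ η k).card +
  (univ.filter fun k => i < k ∧ η i < η k).card

/-- leg length l(s) of the node s = (i,j) -/
def leg (n : ℕ) (η : Fin n → ℕ) (i : Fin n) (j : ℕ) : ℕ :=
  (univ.filter fun k => i < k ∧ j ≤ η k ∧ η k ≤ η i).card +
  (univ.filter fun k => k < i ∧ j ≤ η k + 1 ∧ η k + 1 ≤ η i).card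

/-- The field K = ℚ(q,t). -/
abbrev K : Type := FractionRing (MvPolynomial (Fin 2) ℚ)

noncomputable def q : K := algebraMap (MvPolynomial (Fin 2) ℚ) K (X 0)
noncomputable def t : K := algebraMap (MvPolynomial (Fin 2) ℚ) K (X 1)

/-- The polynomial ring K[x_1,…,x_n]. -/
abbrev P (n : ℕ) : Type := MvPolynomial (Fin n) K

/-- the automorphism s_k exchanging x_k and x_{k+1} (0-indexed; identity out of range) -/
noncomputable def sOp (n : ℕ) (k : ℕ) : P n →ₗ[K] P n :=
  if h : k + 1 < n then
    (rename (Equiv.swap (⟨k, Nat.lt_of_succ_lt h⟩ : Fin n) ⟨k + 1, h⟩)).toLinearMap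
  else LinearMap.id

/-- τ_1 : x_1 ↦ qv·x_1 (the first variable is 0-indexed) -/
noncomputable def tauOp (n : ℕ) (qv : K) : P n →ₗ[K] P n :=
  (aeval (fun j : Fin n => if (j : ℕ) = 0 then C qv * X j else X j)).toLinearMap

/-- ω := s_{n−1}⋯s_2 s_1 τ_1 -/
noncomputable def omegaOp (n : ℕ) (qv : K) : P n →ₗ[K] P n :=
  (List.range (n - 1)).foldl (fun acc k => sOp n k ∘ₗ acc) (tauOp n qv)

/-- The defining property of the Demazure–Lustig operators T_k (0-indexed), for the
parameter value tv: (x_k − x_{k+1})·(T_k f) = (x_k − x_{k+1})·tv·f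
+ (tv·x_k − x_{k+1})·(s_k f − f), i.e. T_k f is the polynomial quotient from the usual
definition. -/
def IsDL (n : ℕ) (tv : K) (T : ℕ → P n →ₗ[K] P n) : Prop :=
  ∀ k, ∀ hk : k + 1 < n, ∀ f : P n,
    (X (⟨k, Nat.lt_of_succ_lt hk⟩ : Fin n) - X ⟨k + 1, hk⟩) * T k f =
      (X (⟨k, Nat.lt_of_succ_lt hk⟩ : Fin n) - X ⟨k + 1, hk⟩) * (C tv * f) +
      (C tv * X (⟨k, Nat.lt_of_succ_lt hk⟩ : Fin n) - X ⟨k + 1, hk⟩) * (sOp n k f - f)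

/-- T_k⁻¹ = tv⁻¹ − 1 + tv⁻¹ T_k -/
noncomputable def Tinv (n : ℕ) (tv : K) (T : ℕ → P n →ₗ[K] P n) (k : ℕ) : P n →ₗ[K] P n :=
  tv⁻¹ • LinearMap.id - LinearMap.id + tv⁻¹ • T k

/-- The Cherednik operator Y_i (0-indexed i):
Y_i = tv^{i+1−n}·T_i⋯T_{n−2}·ω·T_0⁻¹⋯T_{i−1}⁻¹. -/
noncomputable def Yop (n : ℕ) (qv tv : K) (T : ℕ → P n →ₗ[K] P n) (i : Fin n) :
    P n →ₗ[K] P n :=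
  (tv ^ (n - 1 - (i : ℕ)))⁻¹ •
    (((List.range' (i : ℕ) (n - 1 - (i : ℕ))).foldr (fun k acc => T k ∘ₗ acc) LinearMap.id) ∘ₗ
      omegaOp n qv ∘ₗ
      ((List.range (i : ℕ)).foldr (fun k acc => Tinv n tv T k ∘ₗ acc) LinearMap.id))

/-- the decreasing rearrangement η⁺ of η -/
noncomputable def sortDesc (n : ℕ) (η : Fin n → ℕ) : Fin n → ℕ :=
  fun i => η (Tuple.sort η i.rev)

/-- dominance order on n-tuples (of equal sum) -/
def domLE (n : ℕ) (ν μ : Fin n → ℕ) : Prop :=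
  (∑ i, ν i = ∑ i, μ i) ∧
  ∀ p : Fin n, ∑ i ∈ univ.filter (· ≤ p), ν i ≤ ∑ i ∈ univ.filter (· ≤ p), μ i

def domLT (n : ℕ) (ν μ : Fin n → ℕ) : Prop := domLE n ν μ ∧ ν ≠ μ

/-- the order ≺ : ν ≺ η iff ν⁺ < η⁺, or ν⁺ = η⁺ and ν < η (dominance order) -/
noncomputable def prec (n : ℕ) (ν η : Fin n → ℕ) : Prop :=
  domLT n (sortDesc n ν) (sortDesc n η) ∨ (sortDesc n ν = sortDesc n η ∧ domLT n ν η)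

/-- E is the non-symmetric Macdonald polynomial for the composition η (with parameters
qv, tv and Demazure–Lustig operators T): it has the triangular form
E = x^η + Σ_{ν≺η} b_{ην} x^ν and satisfies Y_i E = qv^{η_i}·tv^{−l'_η(i)}·E for all i. -/
noncomputable def IsNSMac (n : ℕ) (qv tv : K) (T : ℕ → P n →ₗ[K] P n)
    (η : Fin n → ℕ) (E : P n) : Prop :=
  coeff (Finsupp.equivFunOnFinite.symm η) E = 1 ∧
  (∀ ν : Fin n →₀ ℕ, coeff ν E ≠ 0 → (ν : Fin n → ℕ) = η ∨ prec n (ν : Fin n → ℕ) η) ∧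
  ∀ i : Fin n, Yop n qv tv T i E = (qv ^ η i / tv ^ legCo n η i) • E

/-- the adjacent transposition s_k as a permutation (identity out of range, 0-indexed) -/
def sPerm (n : ℕ) (k : ℕ) : Equiv.Perm (Fin n) :=
  if h : k + 1 < n then Equiv.swap ⟨k, Nat.lt_of_succ_lt h⟩ ⟨k + 1, h⟩ else 1

/-- the length l(σ) of a permutation, i.e. its number of inversions -/
def inversions {n : ℕ} (σ : Equiv.Perm (Fin n)) : ℕ :=
  (univ.filter fun p : Fin n × Fin n => p.1 < p.2 ∧ σ p.2 < σ p.1).card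

/-- The defining property of σ ↦ T_σ: T_1 = id and T_{σ·s_k} = T_σ ∘ T_k whenever
l(σ·s_k) = l(σ)+1; by the braid relations this determines T_σ = T_{i_1}⋯T_{i_p} for any
reduced word σ = s_{i_1}⋯s_{i_p}. -/
def IsTsigma (n : ℕ) (T : ℕ → P n →ₗ[K] P n)
    (Tw : Equiv.Perm (Fin n) → P n →ₗ[K] P n) : Prop :=
  Tw 1 = LinearMap.id ∧
  ∀ σ : Equiv.Perm (Fin n), ∀ k, k + 1 < n →
    inversions (σ * sPerm n k) = inversions σ + 1 →
    Tw (σ * sPerm n k) = Tw σ ∘ₗ T k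

/-- U⁺ := Σ_σ T_σ -/
noncomputable def Uplus (n : ℕ) (Tw : Equiv.Perm (Fin n) → P n →ₗ[K] P n) :
    P n →ₗ[K] P n := ∑ σ : Equiv.Perm (Fin n), Tw σ

/-- U⁻ := Σ_σ (−tv)^{−l(σ)} T_σ -/
noncomputable def Uminus (n : ℕ) (tv : K) (Tw : Equiv.Perm (Fin n) → P n →ₗ[K] P n) :
    P n →ₗ[K] P n := ∑ σ : Equiv.Perm (Fin n), ((-tv) ^ inversions σ)⁻¹ • Tw σ

/-- the monomial x^η -/
noncomputable def xmon (n : ℕ) (η : Fin n → ℕ) : P n :=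
  monomial (Finsupp.equivFunOnFinite.symm η) 1

/-- S is the q-antisymmetric Macdonald polynomial for the partition-with-distinct-parts κ:
it is q-antisymmetric (T_k S = −S), of the form m'_κ + Σ_{μ<κ} v_{κμ} m'_μ with
m'_μ := U⁻ x^μ, and satisfies (Σ_i Y_i) S = (Σ_i qv^{κ_i}·tv^{1−i}) S. -/
noncomputable def IsQASMac (n : ℕ) (qv tv : K) (T : ℕ → P n →ₗ[K] P n)
    (Tw : Equiv.Perm (Fin n) → P n →ₗ[K] P n) (κ : Fin n → ℕ) (S : P n) : Prop :=
  (∀ k, k + 1 < n → T k S = -S) ∧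
  (∃ v : (Fin n → ℕ) → K,
    S = Uminus n tv Tw (xmon n κ) +
      ∑ᶠ μ ∈ {μ : Fin n → ℕ | StrictAnti μ ∧ domLT n μ κ},
        v μ • Uminus n tv Tw (xmon n μ)) ∧
  (∑ i : Fin n, Yop n qv tv T i) S = (∑ i : Fin n, qv ^ κ i * (tv ^ (i : ℕ))⁻¹) • S

/-- Pp is the symmetric Macdonald polynomial for the partition κ (with parameters qv, tv
and Demazure–Lustig operators T): it is symmetric, of the triangular form
m_κ + Σ_{μ<κ} u_{κμ} m_μ, and satisfies (Σ_i Y_i) Pp = (Σ_i qv^{κ_i}·tv^{1−i}) Pp. -/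
noncomputable def IsSymMac (n : ℕ) (qv tv : K) (T : ℕ → P n →ₗ[K] P n)
    (κ : Fin n → ℕ) (Pp : P n) : Prop :=
  Pp.IsSymmetric ∧
  coeff (Finsupp.equivFunOnFinite.symm κ) Pp = 1 ∧
  (∀ ν : Fin n →₀ ℕ, coeff ν Pp ≠ 0 →
    sortDesc n (ν : Fin n → ℕ) = κ ∨ domLT n (sortDesc n (ν : Fin n → ℕ)) κ) ∧
  (∑ i : Fin n, Yop n qv tv T i) Pp = (∑ i : Fin n, qv ^ κ i * (tv ^ (i : ℕ))⁻¹) • Pp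

end Stmt17

namespace Stmt17

section Abstract
variable {L : Type*} [Field L]

/-- the factor (c x_i - x_j)/(x_i - x_j) -/
def Bf (c : L) (x : ℕ → L) (i j : ℕ) : L := (c * x i - x j) / (x i - x j)

/-- partial product of the factors -/
def Pf (N : ℕ) (c : L) (x : ℕ → L) (k i : ℕ) : L := ∏ j ∈ (Icc k N).erase i, Bf c x i j

theorem Pf_step {N : ℕ} {c : L} {x : ℕ → L} {k i : ℕ} (hk : k < i) (hi : i ≤ N) :
    Pf N c x k i = Bf c x i k * Pf N c x (k + 1) i := by
  unfold Pf
  have : (Icc k N).erase i = insert k ((Icc (k + 1) N).erase i) := by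
    ext j; simp only [mem_erase, mem_Icc, mem_insert]; omega
  rw [this, prod_insert]
  simp

theorem Z_formula (N : ℕ) (c : L) (x : ℕ → L)
    (hx : ∀ i j, i ≤ N → j ≤ N → i ≠ j → x i - x j ≠ 0)
    (s : ℕ → L →+* L) (hc : ∀ k, k < N → s k c = c)
    (hs1 : ∀ k, k < N → s k (x k) = x (k + 1))
    (hs2 : ∀ k, k < N → s k (x (k + 1)) = x k)
    (hs3 : ∀ k, k < N → ∀ j, j ≤ N → j ≠ k → j ≠ k + 1 → s k (x j) = x j)
    (u : ℕ → L) (hu1 : ∀ k, k < N → s k (u (k + 1)) = u k)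
    (hu2 : ∀ k, k < N → ∀ i, i ≤ N → k + 2 ≤ i → s k (u i) = u i)
    (Z : ℕ → L) (hZN : Z N = u N)
    (hZ : ∀ k, k < N → Z k = Bf c x k (k + 1) * s k (Z (k + 1)) +
      (c - Bf c x k (k + 1)) * Z (k + 1)) :
    ∀ k, k ≤ N → Z k = Pf N c x k k * u k +
      ∑ i ∈ Ioc k N, (Bf c x i k - 1) * Pf N c x (k + 1) i * u i := by
  intro k hk
  induction hk using Nat.decreasingInduction with
  | self => simp [hZN, Pf]
  | of_succ k hk ih =>
    have hk' : k < N := hk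
    have sB : ∀ i, k + 2 ≤ i → i ≤ N → s k (Bf c x i (k + 1)) = Bf c x i k := by
      intro i h1 h2
      simp only [Bf, map_div₀, map_sub, map_mul, hc k hk', hs2 k hk',
        hs3 k hk' i h2 (by omega) (by omega)]
    have sP : ∀ i, k + 2 ≤ i → i ≤ N → s k (Pf N c x (k + 2) i) = Pf N c x (k + 2) i := by
      intro i h1 h2
      simp only [Pf, map_prod]
      refine prod_congr rfl fun j hj => ?_
      simp only [mem_erase, mem_Icc] at hj
      simp only [Bf, map_div₀, map_sub, map_mul, hc k hk',
        hs3 k hk' i h2 (by omega) (by omega), hs3 k hk' j (by omega) (by omega) (by omega)]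
    have sPP : s k (Pf N c x (k + 1) (k + 1)) * Bf c x k (k + 1) = Pf N c x k k := by
      simp only [Pf, map_prod]
      have e1 : (Icc (k + 1) N).erase (k + 1) = Icc (k + 2) N := by
        ext j; simp only [mem_erase, mem_Icc]; omega
      have e2 : (Icc k N).erase k = insert (k + 1) (Icc (k + 2) N) := by
        ext j; simp only [mem_erase, mem_Icc, mem_insert]; omega
      rw [e1, e2, prod_insert (by simp), mul_comm]
      congr 1
      refine prod_congr rfl fun j hj => ?_
      simp only [mem_Icc] at hj
      simp only [Bf, map_div₀, map_sub, map_mul, hc k hk', hs2 k hk',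
        hs3 k hk' j (by omega) (by omega) (by omega)]
    have e3 : Ioc k N = insert (k + 1) (Ioc (k + 1) N) := by
      ext j; simp only [mem_Ioc, mem_insert]; omega
    rw [hZ k hk', ih, e3, sum_insert (by simp)]
    simp only [map_add, map_mul, map_sum, map_sub, map_one, hu1 k hk']
    have hA : c - Bf c x k (k + 1) = Bf c x (k + 1) k - 1 := by
      have h1 := hx k (k + 1) (by omega) (by omega) (by omega)
      have h2 := hx (k + 1) k (by omega) (by omega) (by omega)
      simp only [Bf]; field_simp; ring
    rw [← sPP]
    have key : Bf c x k (k + 1) * ∑ i ∈ Ioc (k + 1) N, (s k (Bf c x i (k + 1)) - 1) *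
          s k (Pf N c x (k + 1 + 1) i) * s k (u i) +
        (c - Bf c x k (k + 1)) * ∑ i ∈ Ioc (k + 1) N, (Bf c x i (k + 1) - 1) *
          Pf N c x (k + 1 + 1) i * u i =
        ∑ i ∈ Ioc (k + 1) N, (Bf c x i k - 1) * Pf N c x (k + 1) i * u i := by
      rw [mul_sum, mul_sum, ← sum_add_distrib]
      refine sum_congr rfl fun i hi => ?_
      simp only [mem_Ioc] at hi
      rw [sB i (by omega) hi.2, sP i (by omega) hi.2, hu2 k hk' i hi.2 (by omega),
        Pf_step (k := k + 1) (i := i) (by omega) hi.2]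
      have h3 : Bf c x k (k + 1) * (Bf c x i k - 1) + (c - Bf c x k (k + 1)) *
          (Bf c x i (k + 1) - 1) = (Bf c x i k - 1) * Bf c x i (k + 1) := by
        have h1 := hx k (k + 1) (by omega) (by omega) (by omega)
        have h2 := hx i k (by omega) (by omega) (by omega)
        have h3 := hx i (k + 1) (by omega) (by omega) (by omega)
        simp only [Bf]; field_simp; ring
      linear_combination (Pf N c x (k + 2) i * u i) * h3
    rw [← hA] at *
    linear_combination key

theorem Z_sum (N : ℕ) (c : L) (x : ℕ → L)
    (hx : ∀ i j, i ≤ N → j ≤ N → i ≠ j → x i - x j ≠ 0)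
    (s : ℕ → L →+* L) (hc : ∀ k, k < N → s k c = c)
    (hs1 : ∀ k, k < N → s k (x k) = x (k + 1))
    (hs2 : ∀ k, k < N → s k (x (k + 1)) = x k)
    (hs3 : ∀ k, k < N → ∀ j, j ≤ N → j ≠ k → j ≠ k + 1 → s k (x j) = x j)
    (u : ℕ → L) (hu1 : ∀ k, k < N → s k (u (k + 1)) = u k)
    (hu2 : ∀ k, k < N → ∀ i, i ≤ N → k + 2 ≤ i → s k (u i) = u i)
    (Z : ℕ → L) (hZN : Z N = u N)
    (hZ : ∀ k, k < N → Z k = Bf c x k (k + 1) * s k (Z (k + 1)) +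
      (c - Bf c x k (k + 1)) * Z (k + 1)) :
    ∑ k ∈ range (N + 1), Z k = ∑ i ∈ range (N + 1), Pf N c x 0 i * u i := by
  have hf := Z_formula N c x hx s hc hs1 hs2 hs3 u hu1 hu2 Z hZN hZ
  have tail : ∀ m, m ≤ N → ∑ k ∈ Icc m N, Z k = ∑ i ∈ Icc m N, Pf N c x m i * u i := by
    intro m hm
    induction hm using Nat.decreasingInduction with
    | self => simp [hZN, Pf]
    | of_succ m hm ih =>
      have e : Icc m N = insert m (Icc (m + 1) N) := by
        ext j; simp only [mem_Icc, mem_insert]; omega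
      have e2 : Ioc m N = Icc (m + 1) N := by ext j; simp only [mem_Icc, mem_Ioc]; omega
      rw [e, sum_insert (by simp), sum_insert (by simp), ih, hf m hm.le, e2, add_assoc,
        ← sum_add_distrib]
      congr 1
      refine sum_congr rfl fun i hi => ?_
      simp only [mem_Icc] at hi
      rw [Pf_step (k := m) (i := i) (by omega) hi.2]; ring
  have := tail 0 (Nat.zero_le _)
  have e : range (N + 1) = Icc 0 N := by ext j; simp only [mem_Icc, mem_range]; omega
  rw [e, this]

end Abstract
end Stmt17

namespace Stmt17

theorem q_ne : q ≠ 0 := by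
  unfold q
  rw [Ne, FaithfulSMul.algebraMap_eq_zero_iff]
  exact X_ne_zero _

theorem t_ne : t ≠ 0 := by
  unfold t
  rw [Ne, FaithfulSMul.algebraMap_eq_zero_iff]
  exact X_ne_zero _

theorem sPerm_of_lt {n k : ℕ} (h : k + 1 < n) :
    sPerm n k = Equiv.swap ⟨k, Nat.lt_of_succ_lt h⟩ ⟨k + 1, h⟩ := by
  simp [sPerm, h]

theorem sOp_eq (n k : ℕ) (f : P n) : sOp n k f = rename (sPerm n k) f := by
  unfold sOp sPerm
  split_ifs
  · rfl
  · simp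

theorem sPerm_val {n k : ℕ} (h : k + 1 < n) (j : Fin n) :
    ((sPerm n k j : Fin n) : ℕ) = Equiv.swap k (k + 1) (j : ℕ) := by
  rw [sPerm_of_lt h, Equiv.swap_apply_def, Equiv.swap_apply_def]
  simp only [Fin.ext_iff]
  split_ifs <;> rfl

/-- the fraction field of the polynomial ring -/
abbrev LL (n : ℕ) : Type := FractionRing (P n)

/-- the embedding of the polynomial ring into its fraction field -/
noncomputable abbrev io (n : ℕ) : P n →+* LL n := algebraMap (P n) (LL n)

theorem io_inj (n : ℕ) : Function.Injective (io n) := IsFractionRing.injective _ _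

/-- s_k on the fraction field -/
noncomputable def sL (n k : ℕ) : LL n →+* LL n :=
  (IsFractionRing.ringEquivOfRingEquiv (K := LL n) (L := LL n)
    (renameEquiv K (sPerm n k)).toRingEquiv).toRingHom

theorem sL_io (n k : ℕ) (f : P n) : sL n k (io n f) = io n (rename (sPerm n k) f) := by
  simp [sL]

/-- the variables in the fraction field, indexed by natural numbers -/
noncomputable def xL (n j : ℕ) : LL n := if h : j < n then io n (X ⟨j, h⟩) else 0

theorem xL_of_lt {n j : ℕ} (h : j < n) : xL n j = io n (X ⟨j, h⟩) := by simp [xL, h]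

theorem sL_xL {n k j : ℕ} (h : k + 1 < n) (hj : j < n) :
    sL n k (xL n j) = xL n (Equiv.swap k (k + 1) j) := by
  have h1 : Equiv.swap k (k + 1) j < n := by
    rw [Equiv.swap_apply_def]; split_ifs <;> omega
  rw [xL_of_lt hj, xL_of_lt h1, sL_io, rename_X]
  congr 2
  ext
  rw [sPerm_val h]

/-- constants in the fraction field -/
noncomputable abbrev ioC (n : ℕ) (c : K) : LL n := io n (C c)

theorem ioC_ne {n : ℕ} {c : K} (h : c ≠ 0) : ioC n c ≠ 0 := by
  intro h0
  apply h
  have := io_inj n (h0.trans (map_zero _).symm)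
  simpa using this

theorem sL_ioC (n k : ℕ) (c : K) : sL n k (ioC n c) = ioC n c := by
  rw [ioC, sL_io, rename_C]

/-- the scaling x_i ↦ qv x_i -/
noncomputable def tauA (n : ℕ) (qv : K) (i : ℕ) : P n →ₐ[K] P n :=
  aeval (fun j : Fin n => if (j : ℕ) = i then C qv * X j else X j)

theorem tauA_X (n : ℕ) (qv : K) (i : ℕ) (j : Fin n) :
    tauA n qv i (X j) = if (j : ℕ) = i then C qv * X j else X j := by
  simp [tauA]

theorem rename_tauA {n : ℕ} (qv : K) {k i : ℕ} (h : k + 1 < n) (f : P n) :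
    rename (sPerm n k) (tauA n qv i f) =
      tauA n qv (Equiv.swap k (k + 1) i) (rename (sPerm n k) f) := by
  have : (rename (sPerm n k) : P n →ₐ[K] P n).comp (tauA n qv i) =
      (tauA n qv (Equiv.swap k (k + 1) i)).comp (rename (sPerm n k)) := by
    apply algHom_ext
    intro j
    simp only [AlgHom.comp_apply, rename_X, tauA_X, sPerm_val h,
      Equiv.apply_eq_iff_eq]
    split_ifs <;> simp
  exact DFunLike.congr_fun this f

theorem TL {n : ℕ} {tv : K} {T : ℕ → P n →ₗ[K] P n} (hT : IsDL n tv T) {k : ℕ} (h : k + 1 < n)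
    (hx : xL n k - xL n (k + 1) ≠ 0) (f : P n) :
    io n (T k f) = Bf (ioC n tv) (xL n) k (k + 1) * sL n k (io n f) +
      (ioC n tv - Bf (ioC n tv) (xL n) k (k + 1)) * io n f := by
  have h1 := congrArg (io n) (hT k h f)
  rw [sOp_eq] at h1
  simp only [map_mul, map_add, map_sub] at h1
  rw [← xL_of_lt, ← xL_of_lt, ← sL_io] at h1
  simp only [Bf]
  field_simp
  linear_combination h1

theorem hx_ne (N : ℕ) : ∀ i j, i ≤ N → j ≤ N → i ≠ j → xL (N + 1) i - xL (N + 1) j ≠ 0 := by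
  intro i j hi hj hij
  rw [xL_of_lt (by omega), xL_of_lt (by omega), sub_ne_zero]
  intro h
  have := X_injective (io_inj _ h)
  simp at this
  exact hij this

/-- the vector T_i ⋯ T_{N-1} u -/
noncomputable def Zp (N : ℕ) {n : ℕ} (T : ℕ → P n →ₗ[K] P n) (u : P n) (i : ℕ) : P n :=
  ((List.range' i (N - i)).foldr (fun k acc => T k ∘ₗ acc) LinearMap.id) u

theorem Zp_N (N : ℕ) {n : ℕ} (T : ℕ → P n →ₗ[K] P n) (u : P n) : Zp N T u N = u := by
  simp [Zp]

theorem Zp_step (N : ℕ) {n : ℕ} (T : ℕ → P n →ₗ[K] P n) (u : P n) {i : ℕ} (h : i < N) :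
    Zp N T u i = T i (Zp N T u (i + 1)) := by
  obtain ⟨m, hm⟩ : ∃ m, N - i = m + 1 := ⟨N - i - 1, by omega⟩
  have hm' : N - (i + 1) = m := by omega
  simp [Zp, hm, hm', List.range'_succ]

theorem foldr_scal {n : ℕ} (c : K) (f : P n) (G : ℕ → P n →ₗ[K] P n) (l : List ℕ)
    (h : ∀ k ∈ l, G k f = c • f) :
    (l.foldr (fun k acc => G k ∘ₗ acc) LinearMap.id) f = c ^ l.length • f := by
  induction l with
  | nil => simp
  | cons a l ih =>
    simp only [List.foldr_cons, LinearMap.comp_apply, List.length_cons]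
    rw [ih (fun k hk => h k (by simp [hk])), map_smul, h a (by simp), smul_smul, pow_succ]

theorem Yop_scal {N : ℕ} (qv tv c : K) (T : ℕ → P (N + 1) →ₗ[K] P (N + 1)) (i : Fin (N + 1))
    (f : P (N + 1)) (h : ∀ k, k < N → Tinv (N + 1) tv T k f = c • f) :
    Yop (N + 1) qv tv T i f = ((tv ^ (N - (i : ℕ)))⁻¹ * c ^ (i : ℕ)) •
      Zp N T (omegaOp (N + 1) qv f) i := by
  unfold Yop Zp
  have hi := i.2
  simp only [Nat.add_sub_cancel, LinearMap.smul_apply, LinearMap.comp_apply]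
  rw [foldr_scal c f (Tinv (N + 1) tv T) (List.range i)
    (fun k hk => h k (by simp at hk; omega))]
  simp [smul_smul]

/-- partial omega -/
theorem omega_part {N : ℕ} (qv : K) (f : P (N + 1)) (m : ℕ) (hm : m ≤ N) :
    ((List.range m).foldl (fun acc k => sOp (N + 1) k ∘ₗ acc) (tauOp (N + 1) qv)) f =
      tauA (N + 1) qv m
        (((List.range m).foldl (fun acc k => sOp (N + 1) k ∘ₗ acc) LinearMap.id) f) := by
  induction m with
  | zero => rfl
  | succ m ih =>
    simp only [List.range_succ, List.foldl_append, List.foldl_cons, List.foldl_nil,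
      LinearMap.comp_apply]
    rw [ih (by omega), sOp_eq, sOp_eq, rename_tauA qv (by omega)]
    simp

theorem omega_eq {N : ℕ} (qv : K) (f : P (N + 1)) :
    omegaOp (N + 1) qv f = tauA (N + 1) qv N
        (((List.range N).foldl (fun acc k => sOp (N + 1) k ∘ₗ acc) LinearMap.id) f) :=
  omega_part qv f N le_rfl

theorem cyc_sym {N : ℕ} (f : P (N + 1))
    (hf : ∀ k, k < N → rename (sPerm (N + 1) k) f = f) (m : ℕ) (hm : m ≤ N) :
    (((List.range m).foldl (fun acc k => sOp (N + 1) k ∘ₗ acc) LinearMap.id) f) = f := by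
  induction m with
  | zero => rfl
  | succ m ih =>
    simp only [List.range_succ, List.foldl_append, List.foldl_cons, List.foldl_nil,
      LinearMap.comp_apply]
    rw [ih (by omega), sOp_eq, hf m (by omega)]

theorem cyc_mul {N : ℕ} (f g : P (N + 1)) (m : ℕ) :
    (((List.range m).foldl (fun acc k => sOp (N + 1) k ∘ₗ acc) LinearMap.id) (f * g)) =
    (((List.range m).foldl (fun acc k => sOp (N + 1) k ∘ₗ acc) LinearMap.id) f) *
    (((List.range m).foldl (fun acc k => sOp (N + 1) k ∘ₗ acc) LinearMap.id) g) := by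
  induction m with
  | zero => rfl
  | succ m ih =>
    simp only [List.range_succ, List.foldl_append, List.foldl_cons, List.foldl_nil,
      LinearMap.comp_apply]
    rw [ih, sOp_eq, sOp_eq, sOp_eq, map_mul]

/-- q-symmetric eigenvalue for T on symmetric polynomials -/
theorem T_sym {n : ℕ} {tv : K} {T : ℕ → P n →ₗ[K] P n} (hT : IsDL n tv T) {k : ℕ} (h : k + 1 < n)
    (f : P n) (hf : rename (sPerm n k) f = f) : T k f = tv • f := by
  have h1 := hT k h f
  rw [sOp_eq, hf, sub_self, mul_zero, add_zero] at h1
  rw [smul_eq_C_mul]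
  refine mul_left_cancel₀ ?_ h1
  rw [sub_ne_zero]
  intro h2
  have := X_injective h2
  simp at this

theorem swap_hs {N : ℕ} : (∀ k, k < N → sL (N + 1) k (xL (N + 1) k) = xL (N + 1) (k + 1)) ∧
    (∀ k, k < N → sL (N + 1) k (xL (N + 1) (k + 1)) = xL (N + 1) k) ∧
    (∀ k, k < N → ∀ j, j ≤ N → j ≠ k → j ≠ k + 1 → sL (N + 1) k (xL (N + 1) j) = xL (N + 1) j) := by
  refine ⟨?_, ?_, ?_⟩
  · intro k hk
    rw [sL_xL (by omega) (by omega), Equiv.swap_apply_left]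
  · intro k hk
    rw [sL_xL (by omega) (by omega), Equiv.swap_apply_right]
  · intro k hk j hj h1 h2
    rw [sL_xL (by omega) (by omega), Equiv.swap_apply_of_ne_of_ne h1 h2]

/-- the eigenvalue equation for Macdonald's operator -/
def MacEq (N : ℕ) (qv c e : K) (g : P (N + 1)) : Prop :=
  ∑ i ∈ range (N + 1), Pf N (ioC (N + 1) c) (xL (N + 1)) 0 i * io (N + 1) (tauA (N + 1) qv i g) =
    ioC (N + 1) e * io (N + 1) g

theorem MacEq_sym {N : ℕ} {qv tv : K} (htv : tv ≠ 0) {T : ℕ → P (N + 1) →ₗ[K] P (N + 1)}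
    (hT : IsDL (N + 1) tv T) (f : P (N + 1))
    (hf : ∀ k, k < N → rename (sPerm (N + 1) k) f = f) (κ : Fin (N + 1) → ℕ)
    (hE : (∑ i : Fin (N + 1), Yop (N + 1) qv tv T i) f =
      (∑ i : Fin (N + 1), qv ^ κ i * (tv ^ (i : ℕ))⁻¹) • f) :
    MacEq N qv tv (∑ i : Fin (N + 1), qv ^ κ i * tv ^ (N - (i : ℕ))) f := by
  have hinv : ∀ k, k < N → Tinv (N + 1) tv T k f = tv⁻¹ • f := by
    intro k hk
    simp only [Tinv, LinearMap.add_apply, LinearMap.sub_apply, LinearMap.smul_apply,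
      LinearMap.id_apply, T_sym hT (show k + 1 < N + 1 by omega) f (hf k hk), smul_smul,
      inv_mul_cancel₀ htv, one_smul]
    abel
  have hom : omegaOp (N + 1) qv f = tauA (N + 1) qv N f := by
    rw [omega_eq, cyc_sym f hf N le_rfl]
  obtain ⟨hs1, hs2, hs3⟩ := swap_hs (N := N)
  have hsum := Z_sum N (ioC (N + 1) tv) (xL (N + 1)) (hx_ne N) (sL (N + 1))
    (fun k _ => sL_ioC _ _ _) hs1 hs2 hs3
    (fun i => io (N + 1) (tauA (N + 1) qv i f))
    (fun k hk => by
      rw [sL_io, rename_tauA qv (by omega), hf k hk, Equiv.swap_apply_right])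
    (fun k hk i hi hki => by
      rw [sL_io, rename_tauA qv (by omega), hf k hk,
        Equiv.swap_apply_of_ne_of_ne (by omega) (by omega)])
    (fun i => io (N + 1) (Zp N T (omegaOp (N + 1) qv f) i))
    (by simp only [Zp_N, hom])
    (fun k hk => by
      simp only [Zp_step N T _ hk]
      exact TL hT (by omega) (hx_ne N _ _ (by omega) (by omega) (by omega)) _)
  unfold MacEq
  rw [← hsum]
  have hE' := congrArg (fun g => tv ^ N • g) hE
  simp only [LinearMap.sum_apply, smul_sum, smul_smul, mul_sum] at hE'
  have e1 : ∀ i : Fin (N + 1), tv ^ N • Yop (N + 1) qv tv T i f =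
      Zp N T (omegaOp (N + 1) qv f) i := by
    intro i
    have hi := i.2
    rw [Yop_scal qv tv tv⁻¹ T i f hinv, smul_smul]
    have : tv ^ N * ((tv ^ (N - (i : ℕ)))⁻¹ * tv⁻¹ ^ (i : ℕ)) = 1 := by
      have : tv ^ N = tv ^ (N - (i : ℕ)) * tv ^ (i : ℕ) := by rw [← pow_add]; congr 1; omega
      rw [this, inv_pow]; field_simp
    rw [this, one_smul]
  have e2 : ∀ i : Fin (N + 1), tv ^ N * (qv ^ κ i * (tv ^ (i : ℕ))⁻¹) =
      qv ^ κ i * tv ^ (N - (i : ℕ)) := by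
    intro i
    have hi := i.2
    have : tv ^ N = tv ^ (N - (i : ℕ)) * tv ^ (i : ℕ) := by rw [← pow_add]; congr 1; omega
    rw [this]; field_simp
  simp only [e1, e2] at hE'
  rw [← Fin.sum_univ_eq_sum_range (fun k => io (N + 1) (Zp N T (omegaOp (N + 1) qv f) k)),
    ← map_sum, hE', smul_eq_C_mul, map_mul]

end Stmt17

namespace Stmt17

/-- ordered pairs -/
abbrev prs (n : ℕ) : Finset (Fin n × Fin n) := univ.filter fun p : Fin n × Fin n => p.1 < p.2

/-- Δ_t -/
noncomputable def Del (n : ℕ) (tv : K) : P n := ∏ p ∈ prs n, (C tv * X p.1 - X p.2)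

theorem lin_ne {n : ℕ} (tv : K) {i j : Fin n} (h : i ≠ j) :
    (C tv * X i - X j : P n) ≠ 0 := by
  intro h0
  have := congrArg (coeff (Finsupp.single j 1)) h0
  simp [coeff_C_mul, coeff_X, Finsupp.single_left_inj, h] at this

theorem Del_ne (n : ℕ) (tv : K) : Del n tv ≠ 0 := by
  unfold Del
  rw [prod_ne_zero_iff]
  intro p hp
  simp at hp
  exact lin_ne tv hp.ne

theorem swap_lt {n k : ℕ} (h : k + 1 < n) (i j : Fin n) (hij : i < j)
    (hne : ¬ ((i : ℕ) = k ∧ (j : ℕ) = k + 1)) : sPerm n k i < sPerm n k j := by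
  rw [Fin.lt_def, sPerm_val h, sPerm_val h, Equiv.swap_apply_def, Equiv.swap_apply_def]
  rw [Fin.lt_def] at hij
  split_ifs <;> omega

/-- the pairs other than (k,k+1) are permuted by s_k -/
theorem swap_pairs {n k : ℕ} (h : k + 1 < n) (p : Fin n × Fin n) :
    p ∈ (prs n).erase (⟨k, Nat.lt_of_succ_lt h⟩, ⟨k + 1, h⟩) ↔
    (sPerm n k p.1, sPerm n k p.2) ∈ (prs n).erase (⟨k, Nat.lt_of_succ_lt h⟩, ⟨k + 1, h⟩) := by
  have inv : ∀ i, sPerm n k (sPerm n k i) = i := by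
    intro i; rw [sPerm_of_lt h]; simp
  have fwd : ∀ p : Fin n × Fin n, p ∈ (prs n).erase (⟨k, Nat.lt_of_succ_lt h⟩, ⟨k + 1, h⟩) →
    (sPerm n k p.1, sPerm n k p.2) ∈ (prs n).erase (⟨k, Nat.lt_of_succ_lt h⟩, ⟨k + 1, h⟩) := by
    rintro ⟨i, j⟩ hp
    simp only [mem_erase, ne_eq, Prod.mk.injEq, Fin.ext_iff, mem_filter, mem_univ,
      true_and] at hp ⊢
    refine ⟨?_, swap_lt h i j hp.2 hp.1⟩
    rintro ⟨h1, h2⟩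
    rw [sPerm_val h, Equiv.swap_apply_def] at h1 h2
    have := hp.2
    rw [Fin.lt_def] at this
    split_ifs at h1 h2 <;> omega
  refine ⟨fwd p, fun hp => ?_⟩
  have := fwd _ hp
  simpa [inv] using this

theorem mem_prs {n k : ℕ} (h : k + 1 < n) :
    ((⟨k, Nat.lt_of_succ_lt h⟩, ⟨k + 1, h⟩) : Fin n × Fin n) ∈ prs n := by
  simp [Fin.lt_def]

theorem Del_swap {n k : ℕ} (tv : K) (h : k + 1 < n) :
    rename (sPerm n k) (Del n tv) *
        (C tv * X ⟨k, Nat.lt_of_succ_lt h⟩ - X ⟨k + 1, h⟩) =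
      Del n tv * (C tv * X ⟨k + 1, h⟩ - X ⟨k, Nat.lt_of_succ_lt h⟩) := by
  have h1 : Del n tv = (C tv * X ⟨k, Nat.lt_of_succ_lt h⟩ - X ⟨k + 1, h⟩) *
      ∏ p ∈ (prs n).erase (⟨k, Nat.lt_of_succ_lt h⟩, ⟨k + 1, h⟩), (C tv * X p.1 - X p.2) := by
    rw [Del, ← mul_prod_erase _ _ (mem_prs h)]
  have h2 : rename (sPerm n k)
      (∏ p ∈ (prs n).erase (⟨k, Nat.lt_of_succ_lt h⟩, ⟨k + 1, h⟩), (C tv * X p.1 - X p.2) : P n) =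
      ∏ p ∈ (prs n).erase (⟨k, Nat.lt_of_succ_lt h⟩, ⟨k + 1, h⟩), (C tv * X p.1 - X p.2) := by
    rw [map_prod]
    refine prod_equiv ((sPerm n k).prodCongr (sPerm n k)) (swap_pairs h) ?_
    intro p hp
    simp
  have h3 : rename (sPerm n k) (C tv * X ⟨k, Nat.lt_of_succ_lt h⟩ - X ⟨k + 1, h⟩ : P n) =
      (C tv * X ⟨k + 1, h⟩ - X ⟨k, Nat.lt_of_succ_lt h⟩) := by
    simp [sPerm_of_lt h]
  rw [h1, map_mul, h2, h3]
  ring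

theorem sL_Del {n k : ℕ} (tv : K) (h : k + 1 < n) :
    sL n k (io n (Del n tv)) * (ioC n tv * xL n k - xL n (k + 1)) =
      io n (Del n tv) * (ioC n tv * xL n (k + 1) - xL n k) := by
  have := congrArg (io n) (Del_swap tv h)
  simp only [map_mul, map_sub] at this
  rw [← xL_of_lt, ← xL_of_lt, ← sL_io] at this
  exact this

theorem cyc_Del {N : ℕ} (tv : K) (m : ℕ) (hm : m ≤ N) :
    io (N + 1) ((List.range m).foldl (fun acc k => sOp (N + 1) k ∘ₗ acc) LinearMap.id
        (Del (N + 1) tv)) *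
      ∏ j ∈ range m, (ioC (N + 1) tv * xL (N + 1) j - xL (N + 1) m) =
    io (N + 1) (Del (N + 1) tv) *
      ∏ j ∈ range m, (ioC (N + 1) tv * xL (N + 1) m - xL (N + 1) j) := by
  obtain ⟨hs1, hs2, hs3⟩ := swap_hs (N := N)
  induction m with
  | zero => simp
  | succ m ih =>
    have ih' := congrArg (sL (N + 1) m) (ih (by omega))
    simp only [map_mul, map_prod, map_sub, sL_ioC, hs1 m hm] at ih'
    rw [sL_io, ← sOp_eq] at ih'
    have e1 : ∏ j ∈ range m, (ioC (N + 1) tv * sL (N + 1) m (xL (N + 1) j) - xL (N + 1) (m + 1)) =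
        ∏ j ∈ range m, (ioC (N + 1) tv * xL (N + 1) j - xL (N + 1) (m + 1)) := by
      refine prod_congr rfl fun j hj => ?_
      simp at hj
      rw [hs3 m hm j (by omega) (by omega) (by omega)]
    have e2 : ∏ j ∈ range m, (ioC (N + 1) tv * xL (N + 1) (m + 1) - sL (N + 1) m (xL (N + 1) j)) =
        ∏ j ∈ range m, (ioC (N + 1) tv * xL (N + 1) (m + 1) - xL (N + 1) j) := by
      refine prod_congr rfl fun j hj => ?_
      simp at hj
      rw [hs3 m hm j (by omega) (by omega) (by omega)]
    rw [e1, e2] at ih'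
    simp only [List.range_succ, List.foldl_append, List.foldl_cons, List.foldl_nil,
      LinearMap.comp_apply]
    rw [prod_range_succ, prod_range_succ]
    have h3 := sL_Del tv (show m + 1 < N + 1 by omega)
    linear_combination (ioC (N + 1) tv * xL (N + 1) m - xL (N + 1) (m + 1)) * ih' +
      (∏ j ∈ range m, (ioC (N + 1) tv * xL (N + 1) (m + 1) - xL (N + 1) j)) * h3

theorem Del_split (N : ℕ) (tv : K) : ∃ D : P (N + 1), tauA (N + 1) q N D = D ∧
    Del (N + 1) tv = D * ∏ j : Fin N, (C tv * X j.castSucc - X (Fin.last N)) := by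
  refine ⟨∏ p ∈ (prs (N + 1)).filter (fun p => p.2 ≠ Fin.last N), (C tv * X p.1 - X p.2), ?_, ?_⟩
  · rw [map_prod]
    refine prod_congr rfl fun p hp => ?_
    simp only [ne_eq, mem_filter, mem_univ, true_and] at hp
    have h2 : (p.2 : ℕ) ≠ N := fun h => hp.2 (Fin.ext h)
    have h1 : (p.1 : ℕ) ≠ N := by
      have := hp.1
      have := p.2.2
      omega
    simp only [map_sub, map_mul, tauA_X, h1, h2, if_false, algHom_C]
    rfl
  · have h1 : ∏ j : Fin N, (C tv * X j.castSucc - X (Fin.last N) : P (N + 1)) =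
        ∏ p ∈ (prs (N + 1)).filter (fun p => ¬ p.2 ≠ Fin.last N), (C tv * X p.1 - X p.2) := by
      refine prod_bij (fun j _ => (j.castSucc, Fin.last N)) ?_ ?_ ?_ ?_
      · intro j _
        simp [Fin.castSucc_lt_last]
      · intro a _ b _ h
        simpa using h
      · rintro ⟨a, b⟩ hp
        simp only [ne_eq, not_not, mem_filter, mem_univ, true_and] at hp
        obtain ⟨h1, h2⟩ := hp
        subst h2
        exact ⟨a.castPred h1.ne, mem_univ _, by simp⟩
      · intros; rfl
    rw [h1, Del, prod_filter_mul_prod_filter_not]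

theorem omega_Del (N : ℕ) (tv : K) :
    io (N + 1) (omegaOp (N + 1) q (Del (N + 1) tv)) *
      ∏ j ∈ range N, (ioC (N + 1) tv * xL (N + 1) j - xL (N + 1) N) =
    io (N + 1) (Del (N + 1) tv) *
      ∏ j ∈ range N, (ioC (N + 1) (q * tv) * xL (N + 1) N - xL (N + 1) j) := by
  obtain ⟨D, hD1, hD2⟩ := Del_split N tv
  set Ps : P (N + 1) := ∏ j : Fin N, (C tv * X j.castSucc - X (Fin.last N)) with hPs
  set Ps' : P (N + 1) := ∏ j : Fin N, (C tv * X (Fin.last N) - X j.castSucc) with hPs'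
  have i1 : io (N + 1) Ps = ∏ j ∈ range N, (ioC (N + 1) tv * xL (N + 1) j - xL (N + 1) N) := by
    rw [← Fin.prod_univ_eq_prod_range
      (fun j => (ioC (N + 1) tv * xL (N + 1) j - xL (N + 1) N)), hPs, map_prod]
    refine prod_congr rfl fun j _ => ?_
    rw [xL_of_lt (by omega), xL_of_lt (by omega), map_sub, map_mul]; rfl
  have i2 : io (N + 1) Ps' = ∏ j ∈ range N, (ioC (N + 1) tv * xL (N + 1) N - xL (N + 1) j) := by
    rw [← Fin.prod_univ_eq_prod_range
      (fun j => (ioC (N + 1) tv * xL (N + 1) N - xL (N + 1) j)), hPs', map_prod]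
    refine prod_congr rfl fun j _ => ?_
    rw [xL_of_lt (by omega), xL_of_lt (by omega), map_sub, map_mul]; rfl
  have i3 : io (N + 1) (tauA (N + 1) q N Ps') =
      ∏ j ∈ range N, (ioC (N + 1) (q * tv) * xL (N + 1) N - xL (N + 1) j) := by
    rw [← Fin.prod_univ_eq_prod_range
      (fun j => (ioC (N + 1) (q * tv) * xL (N + 1) N - xL (N + 1) j)), hPs', map_prod, map_prod]
    refine prod_congr rfl fun j _ => ?_
    have hj := j.2
    have hj' : ¬ ((j.castSucc : Fin (N + 1)) : ℕ) = N := by simp; omega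
    rw [xL_of_lt (by omega), xL_of_lt (by omega), ← map_mul, ← map_sub]
    congr 1
    simp only [map_sub, map_mul, tauA_X, hj', algHom_C, Fin.val_last, if_true, if_false]
    rw [show algebraMap K (P (N + 1)) tv = C tv from rfl]
    rw [show (⟨N, by omega⟩ : Fin (N + 1)) = Fin.last N from rfl]
    rw [show (⟨(j : ℕ), by omega⟩ : Fin (N + 1)) = j.castSucc from rfl]
    ring
  have hc := cyc_Del (N := N) tv N le_rfl
  rw [← i1, ← i2, ← map_mul, ← map_mul] at hc
  have hc' := io_inj _ hc
  have hPs0 : Ps ≠ 0 := by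
    rw [hPs, prod_ne_zero_iff]
    intro j _
    exact lin_ne tv (Fin.castSucc_lt_last j).ne
  rw [hD2] at hc'
  have hc2 : (((List.range N).foldl (fun acc k => sOp (N + 1) k ∘ₗ acc) LinearMap.id)
      (Del (N + 1) tv)) = D * Ps' := by
    apply mul_right_cancel₀ hPs0
    rw [hD2, hc']; ring
  rw [omega_eq, hc2, map_mul, hD1, ← i1, ← i3, hD2]
  simp only [map_mul]
  ring

/-- the q-antisymmetry relation in multiplicative form -/
theorem anti_rel {n : ℕ} {tv : K} {T : ℕ → P n →ₗ[K] P n} (hT : IsDL n tv T) {k : ℕ}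
    (h : k + 1 < n) (f : P n) (hf : T k f = -f) :
    rename (sPerm n k) f * (C tv * X ⟨k, Nat.lt_of_succ_lt h⟩ - X ⟨k + 1, h⟩) =
      f * (C tv * X ⟨k + 1, h⟩ - X ⟨k, Nat.lt_of_succ_lt h⟩) := by
  have h1 := hT k h f
  rw [sOp_eq, hf] at h1
  linear_combination -h1

theorem anti_quot {n : ℕ} {tv : K} {T : ℕ → P n →ₗ[K] P n} (hT : IsDL n tv T) {k : ℕ}
    (h : k + 1 < n) (g : P n) (hf : T k (Del n tv * g) = -(Del n tv * g)) :
    rename (sPerm n k) g = g := by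
  have h1 := anti_rel hT h _ hf
  have h2 := Del_swap tv h
  rw [map_mul] at h1
  have hne : Del n tv * (C tv * X ⟨k + 1, h⟩ - X ⟨k, Nat.lt_of_succ_lt h⟩) ≠ 0 :=
    mul_ne_zero (Del_ne n tv) (lin_ne tv (by simp))
  apply mul_left_cancel₀ hne
  linear_combination h1 - (rename (sPerm n k) g) * h2

end Stmt17

namespace Stmt17

theorem lin_ne_L {N : ℕ} (tv : K) {i j : ℕ} (hi : i ≤ N) (hj : j ≤ N) (h : i ≠ j) :
    ioC (N + 1) tv * xL (N + 1) i - xL (N + 1) j ≠ 0 := by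
  rw [xL_of_lt (by omega), xL_of_lt (by omega), ← map_mul, ← map_sub]
  intro h0
  have := io_inj _ (h0.trans (map_zero _).symm)
  exact lin_ne tv (by simpa using h) this

/-- ω Δ_t g / Δ_t, with x_n replaced by x_i -/
noncomputable def uA (N : ℕ) (g : P (N + 1)) (i : ℕ) : LL (N + 1) :=
  (∏ j ∈ (Icc 0 N).erase i, ((ioC (N + 1) (q * t) * xL (N + 1) i - xL (N + 1) j) /
    (ioC (N + 1) t * xL (N + 1) j - xL (N + 1) i))) * io (N + 1) (tauA (N + 1) q i g)

theorem uA_swap {N : ℕ} (g : P (N + 1)) (hg : ∀ k, k < N → rename (sPerm (N + 1) k) g = g)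
    {k i : ℕ} (hk : k < N) (hi : i ≤ N) :
    sL (N + 1) k (uA N g i) = uA N g (Equiv.swap k (k + 1) i) := by
  unfold uA
  rw [map_mul, sL_io, rename_tauA q (by omega), hg k hk, map_prod]
  congr 1
  refine prod_equiv (Equiv.swap k (k + 1)) ?_ ?_
  · intro j
    simp only [mem_erase, mem_Icc, ne_eq, Equiv.apply_eq_iff_eq]
    have : Equiv.swap k (k + 1) j ≤ N ↔ j ≤ N := by
      rw [Equiv.swap_apply_def]; split_ifs <;> omega
    simp [this]
  · intro j hj
    simp only [mem_erase, mem_Icc] at hj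
    simp only [map_div₀, map_sub, map_mul, sL_ioC]
    rw [sL_xL (by omega) (by omega), sL_xL (by omega) (by omega)]

theorem MacEq_anti {N : ℕ} {T : ℕ → P (N + 1) →ₗ[K] P (N + 1)}
    (hT : IsDL (N + 1) t T) (g : P (N + 1))
    (hf : ∀ k, k < N → T k (Del (N + 1) t * g) = -(Del (N + 1) t * g)) (κ : Fin (N + 1) → ℕ)
    (hE : (∑ i : Fin (N + 1), Yop (N + 1) q t T i) (Del (N + 1) t * g) =
      (∑ i : Fin (N + 1), q ^ (κ i + (N - (i : ℕ))) * (t ^ (i : ℕ))⁻¹) • (Del (N + 1) t * g)) :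
    MacEq N q (q * t) (∑ i : Fin (N + 1), q ^ κ i * (q * t) ^ (N - (i : ℕ))) g := by
  have hg : ∀ k, k < N → rename (sPerm (N + 1) k) g = g := fun k hk =>
    anti_quot hT (show k + 1 < N + 1 by omega) g (hf k hk)
  have htL : ioC (N + 1) t ≠ 0 := ioC_ne t_ne
  set f := Del (N + 1) t * g with hfdef
  set D := io (N + 1) (Del (N + 1) t) with hD
  have hD0 : D ≠ 0 := by
    intro h0
    exact Del_ne _ _ (io_inj _ (h0.trans (map_zero _).symm))
  have hinv : ∀ k, k < N → Tinv (N + 1) t T k f = (-1 : K) • f := by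
    intro k hk
    simp only [Tinv, LinearMap.add_apply, LinearMap.sub_apply, LinearMap.smul_apply,
      LinearMap.id_apply, hf k hk, smul_neg, neg_smul, one_smul]
    abel
  have hom : io (N + 1) (omegaOp (N + 1) q f) = D * uA N g N := by
    have h1 := omega_Del N t
    have h2 : omegaOp (N + 1) q f =
        omegaOp (N + 1) q (Del (N + 1) t) * tauA (N + 1) q N g := by
      rw [omega_eq, hfdef, cyc_mul, map_mul, ← omega_eq, cyc_sym g hg N le_rfl]
    have e : (Icc 0 N).erase N = range N := by
      ext j; simp only [mem_erase, mem_Icc, mem_range]; omega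
    rw [h2, map_mul, uA, e, prod_div_distrib]
    have h3 : ∏ j ∈ range N, (ioC (N + 1) t * xL (N + 1) j - xL (N + 1) N) ≠ 0 := by
      rw [prod_ne_zero_iff]
      intro j hj
      simp at hj
      exact lin_ne_L t (by omega) (by omega) (by omega)
    rw [← hD] at h1
    field_simp
    linear_combination (io (N + 1) (tauA (N + 1) q N g)) * h1
  obtain ⟨hs1, hs2, hs3⟩ := swap_hs (N := N)
  have hsum := Z_sum N (ioC (N + 1) t)⁻¹ (xL (N + 1)) (hx_ne N) (sL (N + 1))
    (fun k _ => by rw [map_inv₀, sL_ioC]) hs1 hs2 hs3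
    (uA N g)
    (fun k hk => by rw [uA_swap g hg hk (by omega), Equiv.swap_apply_right])
    (fun k hk i hi hki => by
      rw [uA_swap g hg hk (by omega), Equiv.swap_apply_of_ne_of_ne (by omega) (by omega)])
    (fun i => ((-ioC (N + 1) t) ^ (N - i))⁻¹ * io (N + 1) (Zp N T (omegaOp (N + 1) q f) i) / D)
    (by simp only [Zp_N, hom]; simp; field_simp)
    (fun k hk => by
      have hx := hx_ne N k (k + 1) (by omega) (by omega) (by omega)
      simp only [Zp_step N T _ hk]
      rw [TL hT (show k + 1 < N + 1 by omega) hx]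
      set Y := io (N + 1) (Zp N T (omegaOp (N + 1) q f) (k + 1)) with hY
      have e : N - k = N - (k + 1) + 1 := by omega
      have h3 := sL_Del t (show k + 1 < N + 1 by omega)
      rw [← hD] at h3
      have hl := lin_ne_L (N := N) t (show k ≤ N by omega) (show k + 1 ≤ N by omega) (by omega)
      have hl' := lin_ne_L (N := N) t (show k + 1 ≤ N by omega) (show k ≤ N by omega) (by omega)
      have h4 : sL (N + 1) k D = D * (ioC (N + 1) t * xL (N + 1) (k + 1) - xL (N + 1) k) /
          (ioC (N + 1) t * xL (N + 1) k - xL (N + 1) (k + 1)) := by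
        rw [eq_div_iff hl]; exact h3
      simp only [map_div₀, map_mul, map_inv₀, map_pow, map_neg, sL_ioC, h4]
      rw [e, pow_succ]
      have hp : (-ioC (N + 1) t) ^ (N - (k + 1)) ≠ 0 := pow_ne_zero _ (neg_ne_zero.2 htL)
      generalize (-ioC (N + 1) t) ^ (N - (k + 1)) = p at hp ⊢
      generalize sL (N + 1) k Y = Y'
      simp only [Bf]
      generalize ioC (N + 1) t = tt at *
      generalize xL (N + 1) k = a at *
      field_simp
      ring)
  unfold MacEq
  have hterm : ∀ i ∈ range (N + 1), Pf N (ioC (N + 1) t)⁻¹ (xL (N + 1)) 0 i * uA N g i =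
      (-(ioC (N + 1) t)⁻¹) ^ N *
      (Pf N (ioC (N + 1) (q * t)) (xL (N + 1)) 0 i * io (N + 1) (tauA (N + 1) q i g)) := by
    intro i hi
    simp only [mem_range] at hi
    have hcard : ((Icc 0 N).erase i).card = N := by
      rw [card_erase_of_mem (by simp; omega)]; simp
    rw [uA, ← mul_assoc, ← mul_assoc]
    congr 1
    rw [Pf, Pf, ← prod_mul_distrib]
    have e5 : (-(ioC (N + 1) t)⁻¹) ^ N = ∏ j ∈ (Icc 0 N).erase i, (-(ioC (N + 1) t)⁻¹) := by
      rw [prod_const, hcard]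
    rw [e5, ← prod_mul_distrib]
    refine prod_congr rfl fun j hj => ?_
    simp only [mem_erase, mem_Icc] at hj
    have hx := hx_ne N i j (by omega) (by omega) (Ne.symm hj.1)
    have hl := lin_ne_L (N := N) t (show j ≤ N by omega) (show i ≤ N by omega) hj.1
    generalize ioC (N + 1) t = tt at *
    simp only [Bf]
    field_simp
    ring
  rw [sum_congr rfl hterm, ← mul_sum] at hsum
  have hE' := congrArg (fun g => t ^ N • g) hE
  simp only [LinearMap.sum_apply, smul_sum, smul_smul, mul_sum] at hE'
  have e1 : ∀ i : Fin (N + 1), t ^ N • Yop (N + 1) q t T i f =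
      (t ^ (i : ℕ) * (-1) ^ (i : ℕ)) • Zp N T (omegaOp (N + 1) q f) i := by
    intro i
    have hi := i.2
    rw [Yop_scal q t (-1) T i f hinv, smul_smul]
    congr 1
    have : t ^ N = t ^ (N - (i : ℕ)) * t ^ (i : ℕ) := by rw [← pow_add]; congr 1; omega
    have ht := t_ne
    rw [this]; field_simp
  have e2 : ∀ i : Fin (N + 1), t ^ N * (q ^ (κ i + (N - (i : ℕ))) * (t ^ (i : ℕ))⁻¹) =
      q ^ κ i * (q * t) ^ (N - (i : ℕ)) := by
    intro i
    have hi := i.2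
    have : t ^ N = t ^ (N - (i : ℕ)) * t ^ (i : ℕ) := by rw [← pow_add]; congr 1; omega
    have ht := t_ne
    rw [this, mul_pow, pow_add]; field_simp
  simp only [e1, e2] at hE'
  have hE2 := congrArg (io (N + 1)) hE'
  rw [map_sum, smul_eq_C_mul, RingHom.map_mul] at hE2
  have e3 : ∀ i : Fin (N + 1), io (N + 1)
      ((t ^ (i : ℕ) * (-1) ^ (i : ℕ)) • Zp N T (omegaOp (N + 1) q f) i) =
      (-ioC (N + 1) t) ^ N * D * (((-ioC (N + 1) t) ^ (N - (i : ℕ)))⁻¹ *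
        io (N + 1) (Zp N T (omegaOp (N + 1) q f) i) / D) := by
    intro i
    have hi := i.2
    have : (-ioC (N + 1) t) ^ N = (-ioC (N + 1) t) ^ (N - (i : ℕ)) * (-ioC (N + 1) t) ^ (i : ℕ) := by
      rw [← pow_add]; congr 1; omega
    rw [smul_eq_C_mul, RingHom.map_mul, this, ← mul_pow, C_pow, RingHom.map_pow]
    have h4 : io (N + 1) (C (t * -1)) = -ioC (N + 1) t := by simp
    rw [h4]
    have hp : (-ioC (N + 1) t) ^ (N - (i : ℕ)) ≠ 0 := pow_ne_zero _ (neg_ne_zero.2 htL)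
    field_simp
  simp only [e3] at hE2
  rw [← mul_sum, Fin.sum_univ_eq_sum_range (fun i => ((-ioC (N + 1) t) ^ (N - i))⁻¹ *
        io (N + 1) (Zp N T (omegaOp (N + 1) q f) i) / D), hsum, hfdef, RingHom.map_mul, ← hD] at hE2
  have e4 : (-ioC (N + 1) t) ^ N * (-(ioC (N + 1) t)⁻¹) ^ N = 1 := by
    rw [← mul_pow]; field_simp; simp
  apply mul_left_cancel₀ hD0
  generalize (-ioC (N + 1) t) ^ N = a at *
  generalize (-(ioC (N + 1) t)⁻¹) ^ N = b at *
  linear_combination hE2 - (D * ∑ i ∈ range (N + 1), Pf N (ioC (N + 1) (q * t)) (xL (N + 1)) 0 i *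
    io (N + 1) (tauA (N + 1) q i g)) * e4

end Stmt17

namespace Stmt17

theorem single_lt {n : ℕ} {p r : Fin n} (h : p < r) :
    MonomialOrder.lex.toSyn (Finsupp.single r 1 : Fin n →₀ ℕ) <
      MonomialOrder.lex.toSyn (Finsupp.single p 1) := by
  rw [MonomialOrder.lex_lt_iff]
  exact Finsupp.Lex.single_lt_iff.2 h

theorem lin_deg {n : ℕ} (a b : K) (ha : a ≠ 0) {p r : Fin n} (h : p < r) :
    MonomialOrder.lex.degree (C a * X p - C b * X r : P n) = Finsupp.single p 1 ∧
    MonomialOrder.lex.leadingCoeff (C a * X p - C b * X r : P n) = a := by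
  classical
  have h1 : (C a * X p : P n) = monomial (Finsupp.single p 1) a := by
    rw [C_mul_X_eq_monomial]
  have h2 : (C b * X r : P n) = monomial (Finsupp.single r 1) b := by
    rw [C_mul_X_eq_monomial]
  have h3 : MonomialOrder.lex.degree (monomial (Finsupp.single p 1) a : P n) =
      Finsupp.single p 1 := by
    rw [MonomialOrder.degree_monomial, if_neg ha]
  have h4 := (MonomialOrder.lex.degree_monomial_le (d := Finsupp.single r 1) b).trans_lt
    (single_lt h)
  rw [← h3] at h4
  rw [h1, h2]
  exact ⟨(MonomialOrder.degree_sub_of_lt h4).trans h3,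
    (MonomialOrder.leadingCoeff_sub_of_lt h4).trans (MonomialOrder.leadingCoeff_monomial a)⟩

/-- the staircase exponent -/
noncomputable def dl (n : ℕ) : Fin n →₀ ℕ := ∑ p ∈ prs n, Finsupp.single p.1 1

theorem prod_deg {n : ℕ} (a b : Fin n × Fin n → K) (ha : ∀ p, a p ≠ 0) :
    MonomialOrder.lex.degree (∏ p ∈ prs n, (C (a p) * X p.1 - C (b p) * X p.2) : P n) = dl n ∧
    MonomialOrder.lex.leadingCoeff (∏ p ∈ prs n, (C (a p) * X p.1 - C (b p) * X p.2) : P n) =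
      ∏ p ∈ prs n, a p := by
  have h0 : ∀ p ∈ prs n, IsRegular (MonomialOrder.lex.leadingCoeff
      (C (a p) * X p.1 - C (b p) * X p.2 : P n)) := by
    intro p hp
    rw [(lin_deg (a p) (b p) (ha p) (by simpa using hp)).2]
    exact IsRegular.of_ne_zero (ha p)
  constructor
  · rw [MonomialOrder.degree_prod_of_regular h0, dl]
    exact sum_congr rfl fun p hp => (lin_deg (a p) (b p) (ha p) (by simpa using hp)).1
  · rw [MonomialOrder.leadingCoeff_prod_of_regular h0]
    exact prod_congr rfl fun p hp => (lin_deg (a p) (b p) (ha p) (by simpa using hp)).2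

theorem coeff_tauA {n : ℕ} (qv : K) (i : Fin n) (g : P n) (ν : Fin n →₀ ℕ) :
    coeff ν (tauA n qv i g) = qv ^ (ν i) * coeff ν g := by
  classical
  induction g using MvPolynomial.induction_on' with
  | monomial u a =>
    have : tauA n qv i (monomial u a) = monomial u (qv ^ u i * a) := by
      rw [monomial_eq, monomial_eq, map_mul, tauA, aeval_C, Finsupp.prod_pow]
      simp only [map_prod, map_pow, aeval_X, C_mul]
      have : ∀ j : Fin n, ((if (j : ℕ) = i then C qv * X j else X j : P n)) ^ u j =
          (if j = i then C qv ^ u i else 1) * X j ^ u j := by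
        intro j
        by_cases h : j = i
        · subst h; simp [mul_pow]
        · simp [h, Fin.val_inj]
      rw [prod_congr rfl fun j _ => this j, prod_mul_distrib, prod_ite_eq' univ i]
      simp [algebraMap_eq]
      ring
    rw [this, coeff_monomial, coeff_monomial]
    split_ifs with h
    · rw [h]
    · simp
  | add p r hp hr => rw [map_add, coeff_add, coeff_add, hp, hr, mul_add]

theorem coeff_tau_mul {n : ℕ} (qv : K) (i : Fin n) (g W : P n) {c : K}
    (h1 : MonomialOrder.lex.degree W = dl n) (h2 : MonomialOrder.lex.leadingCoeff W = c) :
    coeff (dl n + MonomialOrder.lex.degree g) (W * tauA n qv i g) =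
      c * (qv ^ (MonomialOrder.lex.degree g i) * MonomialOrder.lex.leadingCoeff g) := by
  have h3 : MonomialOrder.lex.toSyn (MonomialOrder.lex.degree (tauA n qv i g)) ≤
      MonomialOrder.lex.toSyn (MonomialOrder.lex.degree g) := by
    apply MonomialOrder.degree_le_degree_of_support_subset
    intro ν hν
    rw [mem_support_iff, coeff_tauA] at hν
    rw [mem_support_iff]
    exact right_ne_zero_of_mul hν
  rw [MonomialOrder.coeff_mul_of_add_of_degree_le (m := MonomialOrder.lex) (congrArg _ h1).le h3, coeff_tauA,
    ← h1, ← h2]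
  rfl

theorem prod_star {n : ℕ} {F : Type*} [Field F] (B : Fin n → F) (i : Fin n) :
    ∏ p ∈ prs n, ((if p.1 = i then B p.2 else 1) * (if p.2 = i then B p.1 else 1)) =
      ∏ j, if j ≠ i then B j else 1 := by
  rw [prod_mul_distrib, prod_filter, prod_filter, ← univ_product_univ, prod_product,
    prod_product_right]
  have h1 : ∀ a : Fin n, (∏ b, if a < b then (if a = i then B b else 1) else 1) =
      if a = i then ∏ b, (if i < b then B b else 1) else 1 := by
    intro a
    split_ifs with h
    · subst h; rfl
    · simp
  have h2 : ∀ a : Fin n, (∏ b, if b < a then (if a = i then B b else 1) else 1) =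
      if a = i then ∏ b, (if b < i then B b else 1) else 1 := by
    intro a
    split_ifs with h
    · subst h; rfl
    · simp
  simp only [h1, h2, prod_ite_eq', mem_univ, if_true]
  rw [← prod_mul_distrib]
  refine prod_congr rfl fun j _ => ?_
  rcases lt_trichotomy i j with h | h | h
  · simp [h, h.ne', h.le]
  · simp [h]
  · simp [h, h.ne, h.le]

theorem Pf_fin {N : ℕ} {F : Type*} [Field F] (c : F) (x : ℕ → F) (i : Fin (N + 1)) :
    Pf N c x 0 i = ∏ j : Fin (N + 1), if j ≠ i then Bf c x i j else 1 := by
  have h1 : ∀ j : Fin (N + 1), (if j ≠ i then Bf c x i j else 1) =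
      (fun j : ℕ => if j ≠ i then Bf c x i j else 1) j := by
    intro j; simp [Fin.ext_iff]
  simp only [h1]
  rw [Fin.prod_univ_eq_prod_range (fun j : ℕ => if j ≠ i then Bf c x i j else 1), ← prod_filter,
    Pf]
  refine prod_congr ?_ fun _ _ => rfl
  ext j; simp; omega

/-- the numerators -/
noncomputable def Wp (n : ℕ) (c : K) (i : Fin n) : P n :=
  ∏ p ∈ prs n, (C (if p.1 = i then c else 1) * X p.1 - C (if p.2 = i then c else 1) * X p.2)

/-- the Vandermonde -/
noncomputable def Vp (n : ℕ) : P n := ∏ p ∈ prs n, (C 1 * X p.1 - C 1 * X p.2)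

theorem xL_fin {n : ℕ} (j : Fin n) : xL n j = io n (X j) := xL_of_lt j.2

theorem V_Pf {N : ℕ} (c : K) (i : Fin (N + 1)) :
    io (N + 1) (Vp (N + 1)) * Pf N (ioC (N + 1) c) (xL (N + 1)) 0 i =
      io (N + 1) (Wp (N + 1) c i) := by
  rw [Pf_fin, ← prod_star, Vp, Wp, map_prod, map_prod, ← prod_mul_distrib]
  refine prod_congr rfl fun p hp => ?_
  have hlt : p.1 < p.2 := by simpa using hp
  have hx := hx_ne N p.1 p.2 (by omega) (by omega) (by omega)
  have hx' := hx_ne N p.2 p.1 (by omega) (by omega) (by omega)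
  simp only [Bf, C_1, one_mul, map_sub, RingHom.map_mul, ← xL_fin]
  by_cases h1 : p.1 = i
  · have h2 : p.2 ≠ i := by rw [← h1]; exact hlt.ne'
    simp only [h1, h2, if_true, if_false, mul_one, map_one, one_mul]
    rw [h1] at hx
    field_simp
  · by_cases h2 : p.2 = i
    · simp only [h1, h2, if_true, if_false, map_one, one_mul]
      rw [h2] at hx'
      field_simp
      ring
    · simp only [h1, h2, if_false, mul_one, map_one, one_mul]

theorem card_prs_fst {N : ℕ} (c : K) (i : Fin (N + 1)) :
    ∏ p ∈ prs (N + 1), (if p.1 = i then c else 1) = c ^ (N - (i : ℕ)) := by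
  rw [prod_filter, ← univ_product_univ, prod_product]
  have h1 : ∀ a : Fin (N + 1), (∏ b, if a < b then (if a = i then c else 1) else 1) =
      if a = i then ∏ b, (if i < b then c else 1) else 1 := by
    intro a
    split_ifs with h
    · subst h; rfl
    · simp
  simp only [h1, prod_ite_eq', mem_univ, if_true]
  rw [← prod_filter, prod_const]
  congr 1
  have : (univ.filter fun b => i < b) = Ioi i := by ext; simp
  rw [this, Fin.card_Ioi]
  omega

theorem MacEq_lead {N : ℕ} {qv c e : K} (hc : c ≠ 0) (g : P (N + 1)) (hg : g ≠ 0)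
    (h : MacEq N qv c e g) :
    e = ∑ i : Fin (N + 1), qv ^ (MonomialOrder.lex.degree g i) * c ^ (N - (i : ℕ)) := by
  have hp : ∑ i : Fin (N + 1), Wp (N + 1) c i * tauA (N + 1) qv i g =
      C e * (Vp (N + 1) * g) := by
    apply io_inj
    rw [map_sum]
    unfold MacEq at h
    have h1 := congrArg (fun z => io (N + 1) (Vp (N + 1)) * z) h
    simp only [mul_sum] at h1
    rw [← Fin.sum_univ_eq_sum_range (fun i => io (N + 1) (Vp (N + 1)) *
      (Pf N (ioC (N + 1) c) (xL (N + 1)) 0 i * io (N + 1) (tauA (N + 1) qv i g)))] at h1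
    simp only [← mul_assoc, V_Pf] at h1
    simp only [RingHom.map_mul]
    rw [h1]; ring
  have h2 := congrArg (coeff (dl (N + 1) + MonomialOrder.lex.degree g)) hp
  have hV := prod_deg (n := N + 1) (fun _ => 1) (fun _ => 1) (by simp)
  rw [coeff_sum, coeff_C_mul,
    MonomialOrder.coeff_mul_of_add_of_degree_le (m := MonomialOrder.lex)
      (f := Vp (N + 1)) (congrArg _ hV.1).le le_rfl] at h2
  have h3 : coeff (dl (N + 1)) (Vp (N + 1)) = 1 := by
    rw [Vp, ← hV.1]
    exact hV.2.trans (by simp)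
  rw [h3, one_mul] at h2
  have h4 : ∀ i : Fin (N + 1), coeff (dl (N + 1) + MonomialOrder.lex.degree g)
      (Wp (N + 1) c i * tauA (N + 1) qv i g) =
      (qv ^ (MonomialOrder.lex.degree g i) * c ^ (N - (i : ℕ))) *
        MonomialOrder.lex.leadingCoeff g := by
    intro i
    have hW := prod_deg (n := N + 1) (fun p => if p.1 = i then c else 1)
      (fun p => if p.2 = i then c else 1) (by intro p; split_ifs <;> simp [hc])
    rw [coeff_tau_mul qv i g (Wp (N + 1) c i) hW.1 (hW.2.trans (card_prs_fst c i))]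
    ring
  rw [sum_congr rfl fun i _ => h4 i, ← sum_mul] at h2
  exact (mul_right_cancel₀ (MonomialOrder.leadingCoeff_ne_zero_iff.2 hg) h2).symm

/-- separation of eigenvalues -/
theorem eig_sep {N : ℕ} (μ κ : Fin (N + 1) → ℕ)
    (h : ∑ i : Fin (N + 1), q ^ κ i * (q * t) ^ (N - (i : ℕ)) =
      ∑ i : Fin (N + 1), q ^ μ i * (q * t) ^ (N - (i : ℕ))) : μ = κ := by
  classical
  have key : ∀ ρ : Fin (N + 1) → ℕ, ∑ i : Fin (N + 1), q ^ ρ i * (q * t) ^ (N - (i : ℕ)) =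
      algebraMap (MvPolynomial (Fin 2) ℚ) K (∑ i : Fin (N + 1),
        monomial (Finsupp.single 0 (ρ i + (N - (i : ℕ))) + Finsupp.single 1 (N - (i : ℕ))) 1) := by
    intro ρ
    rw [map_sum]
    refine sum_congr rfl fun i _ => ?_
    have : (monomial (Finsupp.single 0 (ρ i + (N - (i : ℕ))) + Finsupp.single 1 (N - (i : ℕ))) 1 :
        MvPolynomial (Fin 2) ℚ) = X 0 ^ (ρ i) * (X 0 * X 1) ^ (N - (i : ℕ)) := by
      rw [mul_pow, ← mul_assoc, ← pow_add, X_pow_eq_monomial, X_pow_eq_monomial, monomial_mul,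
        one_mul]
    rw [this, map_mul, map_pow, map_pow, map_mul]
    rfl
  rw [key, key] at h
  have h' := IsFractionRing.injective (MvPolynomial (Fin 2) ℚ) K h
  funext i
  have h2 := congrArg (coeff (Finsupp.single 0 (μ i + (N - (i : ℕ))) +
    Finsupp.single 1 (N - (i : ℕ)))) h'
  simp only [coeff_sum, coeff_monomial] at h2
  have inj : ∀ (ρ : Fin (N + 1) → ℕ) (j : Fin (N + 1)),
      ((Finsupp.single 0 (ρ j + (N - (j : ℕ))) + Finsupp.single 1 (N - (j : ℕ)) : Fin 2 →₀ ℕ) =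
      Finsupp.single 0 (μ i + (N - (i : ℕ))) + Finsupp.single 1 (N - (i : ℕ))) ↔
      j = i ∧ ρ i = μ i := by
    intro ρ j
    constructor
    · intro h
      have h0 := DFunLike.congr_fun h 0
      have h1 := DFunLike.congr_fun h 1
      simp at h0 h1
      have : j = i := by ext; omega
      subst this
      exact ⟨rfl, by omega⟩
    · rintro ⟨rfl, h⟩; rw [h]
  simp only [inj] at h2
  by_contra hne
  have hne' : ¬ κ i = μ i := fun h => hne h.symm
  simp [hne'] at h2

end Stmt17

namespace Stmt17

theorem t_pow_inj {a b : ℕ} (h : t ^ a = t ^ b) : a = b := by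
  unfold t at h
  rw [← map_pow, ← map_pow] at h
  have h1 := IsFractionRing.injective (MvPolynomial (Fin 2) ℚ) K h
  have h2 := congrArg totalDegree h1
  simpa using h2

theorem lin_irred {n : ℕ} {i j : Fin n} (h : i ≠ j) : Irreducible (C t * X i - X j : P n) := by
  classical
  have hc : coeff (Finsupp.single j 1) (C t * X i - X j : P n) = -1 := by
    rw [coeff_sub, coeff_C_mul, coeff_X, coeff_X', if_neg]
    · simp
    · intro h'
      exact h (Finsupp.single_left_injective one_ne_zero h')
  apply irreducible_of_totalDegree_eq_one
  · apply le_antisymm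
    · refine (totalDegree_sub _ _).trans (max_le ?_ ?_)
      · exact (totalDegree_mul _ _).trans (by simp)
      · simp
    · have := le_totalDegree (p := (C t * X i - X j : P n)) (s := Finsupp.single j 1)
        (by rw [mem_support_iff, hc]; simp)
      simpa using this
  · intro x hx
    have := hx (Finsupp.single j 1)
    rw [hc] at this
    exact isUnit_of_dvd_unit this (by simp)

theorem lin_relprime {n : ℕ} {i j a b : Fin n} (h : i < j) (h' : b < a) :
    IsRelPrime (C t * X i - X j : P n) (C t * X a - X b) := by
  rw [(lin_irred h.ne).isRelPrime_iff_not_dvd]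
  rintro ⟨u, hu⟩
  let e : Fin n → ℕ := fun k => if k = i then 0 else if k = j then 1 else 5
  have h1 := congrArg (eval (fun k => t ^ e k)) hu
  have hi : e i = 0 := by simp [e]
  have hj : e j = 1 := by simp [e, h.ne']
  simp only [map_mul, map_sub, eval_C, eval_X, hi, hj] at h1
  have h2 : t ^ (e a + 1) = t ^ e b := by rw [pow_succ]; linear_combination h1
  have h3 := t_pow_inj h2
  simp only [e] at h3
  split_ifs at h3 <;> omega

theorem rel_all {N : ℕ} {T : ℕ → P (N + 1) →ₗ[K] P (N + 1)} (hT : IsDL (N + 1) t T)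
    (S : P (N + 1)) (hS0 : S ≠ 0) (hS : ∀ k, k + 1 < N + 1 → T k S = -S)
    (σ : Equiv.Perm (Fin (N + 1))) :
    S * rename σ (Del (N + 1) t) = rename σ S * Del (N + 1) t := by
  have hσ : σ ∈ Submonoid.closure (Set.range fun i : Fin N ↦ Equiv.swap i.castSucc i.succ) := by
    rw [Equiv.Perm.mclosure_swap_castSucc_succ]; trivial
  induction hσ using Submonoid.closure_induction with
  | mem x hx =>
    obtain ⟨i, rfl⟩ := hx
    have hk : (i : ℕ) + 1 < N + 1 := by omega
    have e : Equiv.swap i.castSucc i.succ = sPerm (N + 1) i := by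
      rw [sPerm_of_lt hk]; rfl
    simp only [e]
    have h1 := anti_rel hT hk S (hS i hk)
    have h2 := Del_swap t hk
    have hl : (C t * X ⟨i, Nat.lt_of_succ_lt hk⟩ - X ⟨i + 1, hk⟩ : P (N + 1)) ≠ 0 :=
      lin_ne t (by simp)
    apply mul_right_cancel₀ hl
    linear_combination S * h2 - Del (N + 1) t * h1
  | one => simp
  | mul x y _ _ hx hy =>
    have h1 := congrArg (rename x) hy
    rw [map_mul, map_mul, rename_rename, rename_rename] at h1
    have hx0 : rename x S ≠ 0 := by
      intro h0
      exact hS0 (rename_injective x x.injective (h0.trans (map_zero _).symm))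
    rw [Equiv.Perm.coe_mul]
    apply mul_left_cancel₀ hx0
    linear_combination S * h1 + (rename (x ∘ y) S) * hx

theorem Del_dvd {N : ℕ} {T : ℕ → P (N + 1) →ₗ[K] P (N + 1)} (hT : IsDL (N + 1) t T)
    (S : P (N + 1)) (hS : ∀ k, k + 1 < N + 1 → T k S = -S) : Del (N + 1) t ∣ S := by
  by_cases hS0 : S = 0
  · rw [hS0]; exact dvd_zero _
  have h1 := rel_all hT S hS0 hS Fin.revPerm
  have h2 : Del (N + 1) t ∣ S * rename Fin.revPerm (Del (N + 1) t) := by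
    rw [h1]; exact dvd_mul_left _ _
  refine IsRelPrime.dvd_of_dvd_mul_right ?_ h2
  unfold Del
  rw [map_prod]
  refine IsRelPrime.prod_left fun p hp => IsRelPrime.prod_right fun r hr => ?_
  have hp' : p.1 < p.2 := by simpa using hp
  have hr' : r.1 < r.2 := by simpa using hr
  simp only [map_sub, map_mul, rename_C, rename_X]
  exact lin_relprime hp' (by simpa using hr')

end Stmt17

namespace Stmt17

/-- the quadratic weight of an exponent -/
def Qf {n : ℕ} (ν : Fin n → ℕ) : ℕ := ∑ i, ν i ^ 2

/-- polynomials all of whose exponents have quadratic weight below c -/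
def Low (n c : ℕ) : Submodule K (P n) where
  carrier := {f | ∀ ν : Fin n →₀ ℕ, coeff ν f ≠ 0 → Qf (ν : Fin n → ℕ) < c}
  zero_mem' := by intro ν h; simp at h
  add_mem' := by
    intro f g hf hg ν h
    rw [coeff_add] at h
    by_cases h1 : coeff ν f = 0
    · rw [h1, zero_add] at h; exact hg ν h
    · exact hf ν h1
  smul_mem' := by
    intro a f hf ν h
    rw [coeff_smul, smul_eq_mul] at h
    exact hf ν (right_ne_zero_of_mul h)

theorem mem_Low {n c : ℕ} {f : P n} :
    f ∈ Low n c ↔ ∀ ν : Fin n →₀ ℕ, coeff ν f ≠ 0 → Qf (ν : Fin n → ℕ) < c := Iff.rfl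

theorem Low_mono {n c d : ℕ} (h : c ≤ d) {f : P n} (hf : f ∈ Low n c) : f ∈ Low n d :=
  fun ν hν => (hf ν hν).trans_le h

theorem xmon_Low {n c : ℕ} (ν : Fin n → ℕ) (h : Qf ν < c) : xmon n ν ∈ Low n c := by
  classical
  intro μ hμ
  rw [xmon, coeff_monomial] at hμ
  split_ifs at hμ with h1
  · rw [← h1]; exact h
  · simp at hμ

theorem pres {n : ℕ} (L : P n →ₗ[K] P n) (hL : ∀ ν, L (xmon n ν) ∈ Low n (Qf ν + 1)) (c : ℕ)
    (f : P n) (hf : f ∈ Low n c) : L f ∈ Low n c := by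
  rw [← support_sum_monomial_coeff f, map_sum]
  refine Submodule.sum_mem _ fun ν hν => ?_
  have h1 : monomial ν (coeff ν f) = coeff ν f • xmon n ν := by
    rw [xmon, smul_monomial, smul_eq_mul, mul_one]
    rw [Finsupp.equivFunOnFinite_symm_coe]
  rw [h1, map_smul]
  refine Submodule.smul_mem _ _ (Low_mono ?_ (hL ν))
  exact hf ν (mem_support_iff.1 hν)

theorem xmon_prod {n : ℕ} (ν : Fin n → ℕ) : xmon n ν = ∏ i, X i ^ ν i := by
  rw [xmon, monomial_eq, Finsupp.prod_pow]
  simp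

theorem rename_xmon {n : ℕ} (σ : Equiv.Perm (Fin n)) (ν : Fin n → ℕ) :
    rename σ (xmon n ν) = xmon n (ν ∘ σ.symm) := by
  rw [xmon_prod, xmon_prod, map_prod]
  refine prod_equiv σ (by simp) ?_
  intro i _
  simp

theorem Qf_comp {n : ℕ} (σ : Equiv.Perm (Fin n)) (ν : Fin n → ℕ) : Qf (ν ∘ σ) = Qf ν := by
  unfold Qf
  exact Equiv.sum_comp σ (fun i => ν i ^ 2)

section step
variable {n : ℕ}

/-- the part of a monomial away from two indices -/
noncomputable def Rm (a b : Fin n) (ν : Fin n → ℕ) : P n :=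
  ∏ i ∈ (univ.erase a).erase b, X i ^ ν i

theorem xmon_split {a b : Fin n} (h : a ≠ b) (ν : Fin n → ℕ) :
    xmon n ν = X a ^ ν a * (X b ^ ν b * Rm a b ν) := by
  rw [xmon_prod, Rm, mul_prod_erase _ (fun i => (X i : P n) ^ ν i) (by simp [h.symm]),
    mul_prod_erase _ (fun i => (X i : P n) ^ ν i) (by simp)]

/-- change two entries -/
def upd (a b : Fin n) (ν : Fin n → ℕ) (x y : ℕ) : Fin n → ℕ :=
  fun i => if i = a then x else if i = b then y else ν i

theorem xmon_upd {a b : Fin n} (h : a ≠ b) (ν : Fin n → ℕ) (x y : ℕ) :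
    xmon n (upd a b ν x y) = X a ^ x * (X b ^ y * Rm a b ν) := by
  rw [xmon_split h]
  have : Rm a b (upd a b ν x y) = Rm a b ν := by
    refine prod_congr rfl fun i hi => ?_
    simp at hi
    simp [upd, hi]
  rw [this]
  simp [upd, h.symm]

theorem Qf_split {a b : Fin n} (h : a ≠ b) (ν : Fin n → ℕ) :
    Qf ν = ν a ^ 2 + (ν b ^ 2 + ∑ i ∈ (univ.erase a).erase b, ν i ^ 2) := by
  rw [Qf, add_sum_erase _ (fun i => ν i ^ 2) (by simp [h.symm]),
    add_sum_erase _ (fun i => ν i ^ 2) (by simp)]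

theorem Qf_upd {a b : Fin n} (h : a ≠ b) (ν : Fin n → ℕ) (x y : ℕ) :
    Qf (upd a b ν x y) = x ^ 2 + (y ^ 2 + ∑ i ∈ (univ.erase a).erase b, ν i ^ 2) := by
  rw [Qf_split h]
  have : ∑ i ∈ (univ.erase a).erase b, upd a b ν x y i ^ 2 =
      ∑ i ∈ (univ.erase a).erase b, ν i ^ 2 := by
    refine sum_congr rfl fun i hi => ?_
    simp at hi
    simp [upd, hi]
  rw [this]
  simp [upd, h.symm]

end step

theorem T_step {n : ℕ} {tv : K} {T : ℕ → P n →ₗ[K] P n} (hT : IsDL n tv T) {k : ℕ}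
    (h : k + 1 < n) (ν : Fin n → ℕ)
    (hν : ν ⟨k + 1, h⟩ < ν ⟨k, Nat.lt_of_succ_lt h⟩) :
    T k (xmon n ν) - rename (sPerm n k) (xmon n ν) ∈ Low n (Qf ν) := by
  set a : Fin n := ⟨k, Nat.lt_of_succ_lt h⟩ with ha
  set b : Fin n := ⟨k + 1, h⟩ with hb
  have hab : a ≠ b := by simp [ha, hb]
  have hlin : (X a - X b : P n) ≠ 0 := by
    rw [sub_ne_zero]; exact fun h => hab (X_injective h)
  obtain ⟨m, hm⟩ : ∃ m, ν a = ν b + (m + 1) := ⟨ν a - ν b - 1, by omega⟩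
  have hR : rename (sPerm n k) (Rm a b ν) = Rm a b ν := by
    rw [Rm, map_prod]
    refine prod_congr rfl fun i hi => ?_
    simp only [mem_erase, mem_univ, and_true] at hi
    rw [map_pow, rename_X, sPerm_of_lt h, Equiv.swap_apply_of_ne_of_ne hi.2 hi.1]
  have hsa : sPerm n k a = b := by rw [sPerm_of_lt h, Equiv.swap_apply_left]
  have hsb : sPerm n k b = a := by rw [sPerm_of_lt h, Equiv.swap_apply_right]
  have hs : rename (sPerm n k) (xmon n ν) = X b ^ ν a * (X a ^ ν b * Rm a b ν) := by
    rw [xmon_split hab, map_mul, map_mul, hR, map_pow, map_pow, rename_X, rename_X, hsa, hsb]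
  have key : T k (xmon n ν) - rename (sPerm n k) (xmon n ν) =
      ∑ j ∈ range m, (1 - tv) • xmon n (upd a b ν (ν b + (m - j)) (ν b + (j + 1))) := by
    apply mul_left_cancel₀ hlin
    have h1 := hT k h (xmon n ν)
    rw [sOp_eq, hs] at h1
    simp only [← ha, ← hb] at h1
    rw [mul_sub, hs, h1]
    have hgeo := (Commute.all (X a : P n) (X b)).mul_geom_sum₂ m
    have hterm : ∀ j ∈ range m, (1 - tv) • xmon n (upd a b ν (ν b + (m - j)) (ν b + (j + 1))) =
        (1 - C tv) * (X a * X b) ^ (ν b) * (X a * X b) * Rm a b ν *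
          (X b ^ j * X a ^ (m - 1 - j)) := by
      intro j hj
      rw [mem_range] at hj
      obtain ⟨l, hl⟩ : ∃ l, m - j = l + 1 := ⟨m - j - 1, by omega⟩
      have hl' : m - 1 - j = l := by omega
      rw [xmon_upd hab, hl, hl', smul_eq_C_mul, C_sub, C_1, mul_pow]
      ring
    rw [sum_congr rfl hterm, ← mul_sum]
    have hgeo' : (X a - X b : P n) * ∑ j ∈ range m, X b ^ j * X a ^ (m - 1 - j) =
        X a ^ m - X b ^ m := by
      have h5 := (Commute.all (X b : P n) (X a)).mul_geom_sum₂ m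
      linear_combination -h5
    rw [xmon_split hab, hm, mul_pow]
    linear_combination (-(1 - C tv) * (X a ^ ν b * X b ^ ν b) * (X a * X b) * Rm a b ν) * hgeo'
  rw [key]
  refine Submodule.sum_mem _ fun j hj => Submodule.smul_mem _ _ (xmon_Low _ ?_)
  rw [mem_range] at hj
  rw [Qf_upd hab, Qf_split hab ν, hm]
  obtain ⟨l, rfl⟩ : ∃ l, m = j + l + 1 := ⟨m - j - 1, by omega⟩
  have : j + l + 1 - j = l + 1 := by omega
  rw [this]
  nlinarith [Nat.zero_le (j * l), Nat.zero_le j, Nat.zero_le l]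

theorem T_pres1 {n : ℕ} {tv : K} {T : ℕ → P n →ₗ[K] P n} (hT : IsDL n tv T) {k : ℕ}
    (h : k + 1 < n) (ν : Fin n → ℕ) : T k (xmon n ν) ∈ Low n (Qf ν + 1) := by
  have hren : ∀ ν : Fin n → ℕ, rename (sPerm n k) (xmon n ν) = xmon n (ν ∘ sPerm n k) := by
    intro ν
    rw [rename_xmon]
    congr 2
    rw [sPerm_of_lt h]; simp
  have hgt : ∀ ν : Fin n → ℕ, ν ⟨k + 1, h⟩ < ν ⟨k, Nat.lt_of_succ_lt h⟩ →
      T k (xmon n ν) ∈ Low n (Qf ν + 1) := by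
    intro ν hν
    have h1 := Low_mono (Nat.le_succ _) (T_step hT h ν hν)
    have h2 : rename (sPerm n k) (xmon n ν) ∈ Low n (Qf ν + 1) := by
      rw [hren]
      exact xmon_Low _ (by rw [Qf_comp]; omega)
    have := Submodule.add_mem _ h1 h2
    simpa using this
  rcases lt_trichotomy (ν ⟨k + 1, h⟩) (ν ⟨k, Nat.lt_of_succ_lt h⟩) with h1 | h1 | h1
  · exact hgt ν h1
  · have h2 : rename (sPerm n k) (xmon n ν) = xmon n ν := by
      rw [hren]
      congr 1
      funext i
      simp only [Function.comp, sPerm_of_lt h, Equiv.swap_apply_def]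
      split_ifs with h3 h4
      · rw [h3, h1]
      · rw [h4, h1]
      · rfl
    rw [T_sym hT h _ h2]
    exact Submodule.smul_mem _ _ (xmon_Low _ (by omega))
  · have hss : sPerm n k ∘ sPerm n k = id := by
      funext i; rw [sPerm_of_lt h]; simp
    have h2 : rename (sPerm n k) (xmon n ν + xmon n (ν ∘ sPerm n k)) =
        xmon n ν + xmon n (ν ∘ sPerm n k) := by
      rw [map_add, hren, hren, Function.comp_assoc, hss, add_comm]; rfl
    have h3 := T_sym hT h _ h2
    rw [map_add] at h3
    have h4 := hgt (ν ∘ sPerm n k) (by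
      simp only [Function.comp, sPerm_of_lt h, Equiv.swap_apply_left, Equiv.swap_apply_right]
      exact h1)
    rw [Qf_comp] at h4
    rw [eq_sub_of_add_eq h3]
    refine Submodule.sub_mem _ (Submodule.smul_mem _ _ (Submodule.add_mem _ ?_ ?_)) h4
    · exact xmon_Low _ (by omega)
    · exact xmon_Low _ (by rw [Qf_comp]; omega)

end Stmt17

namespace Stmt17

theorem exists_desc {n : ℕ} (σ : Equiv.Perm (Fin n)) (hσ : σ ≠ 1) :
    ∃ k, ∃ h : k + 1 < n, σ ⟨k + 1, h⟩ < σ ⟨k, Nat.lt_of_succ_lt h⟩ := by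
  by_contra hcon
  push Not at hcon
  apply hσ
  cases n with
  | zero => exact Subsingleton.elim _ _
  | succ N =>
    have hm : StrictMono σ := by
      rw [Fin.strictMono_iff_lt_succ]
      intro i
      refine lt_of_le_of_ne (hcon i (by omega)) ?_
      intro h
      have := σ.injective h
      exact absurd this (Fin.castSucc_lt_succ (i := i)).ne
    have h1 : (σ : Fin (N + 1) → Fin (N + 1)) = id :=
      (StrictMono.range_inj hm strictMono_id).1
        (by rw [σ.surjective.range_eq, Set.range_id])
    ext i
    rw [h1]; rfl

theorem inv_step {n : ℕ} (σ : Equiv.Perm (Fin n)) {k : ℕ} (h : k + 1 < n)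
    (hσ : σ ⟨k + 1, h⟩ < σ ⟨k, Nat.lt_of_succ_lt h⟩) :
    inversions σ = inversions (σ * sPerm n k) + 1 := by
  have hu : ∀ τ : Equiv.Perm (Fin n), inversions τ =
      ((prs n).filter fun p => τ p.2 < τ p.1).card := by
    intro τ
    rw [inversions, filter_filter]
  rw [hu, hu, ← insert_erase (mem_prs h), filter_insert, filter_insert, if_pos hσ, if_neg,
    card_insert_of_notMem (by simp)]
  · congr 1
    refine card_equiv ((sPerm n k).prodCongr (sPerm n k)) ?_
    intro p
    rw [mem_filter, mem_filter]
    have hss : ∀ i, sPerm n k (sPerm n k i) = i := by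
      intro i; rw [sPerm_of_lt h]; simp
    have h1 := swap_pairs h p
    simp only [Equiv.prodCongr_apply, Prod.map, Equiv.Perm.mul_apply, hss]
    rw [h1]
  · simp only [Equiv.Perm.mul_apply, sPerm_of_lt h, Equiv.swap_apply_left, Equiv.swap_apply_right]
    exact not_lt.2 hσ.le

theorem Tw_main {n : ℕ} {tv : K} {T : ℕ → P n →ₗ[K] P n} (hT : IsDL n tv T)
    {Tw : Equiv.Perm (Fin n) → P n →ₗ[K] P n} (hTw : IsTsigma n T Tw) (m : ℕ) :
    ∀ σ : Equiv.Perm (Fin n), inversions σ = m →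
      (∀ c, ∀ f ∈ Low n c, Tw σ f ∈ Low n c) ∧
      ∀ ν : Fin n → ℕ, (∀ i j, i < j → σ j < σ i → ν j < ν i) →
        Tw σ (xmon n ν) - rename σ (xmon n ν) ∈ Low n (Qf ν) := by
  induction m with
  | zero =>
    intro σ hσ
    have h1 : σ = 1 := by
      by_contra hne
      obtain ⟨k, h, hk⟩ := exists_desc σ hne
      have := inv_step σ h hk
      omega
    subst h1
    rw [hTw.1]
    refine ⟨fun c f hf => hf, fun ν _ => ?_⟩
    have : rename (1 : Equiv.Perm (Fin n)) (xmon n ν) = xmon n ν := by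
      rw [Equiv.Perm.coe_one, rename_id_apply]
    rw [this, LinearMap.id_apply, sub_self]
    exact Submodule.zero_mem _
  | succ m ih =>
    intro σ hσ
    have hne : σ ≠ 1 := by
      rintro rfl
      have : inversions (1 : Equiv.Perm (Fin n)) = 0 := by
        rw [inversions, card_eq_zero, filter_eq_empty_iff]
        intro p _ hp
        exact absurd hp.1 (not_lt.2 hp.2.le)
      omega
    obtain ⟨k, h, hk⟩ := exists_desc σ hne
    have h1 := inv_step σ h hk
    have hss : sPerm n k * sPerm n k = 1 := by
      rw [sPerm_of_lt h]; simp
    have hssi : ∀ i, sPerm n k (sPerm n k i) = i := by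
      intro i; rw [sPerm_of_lt h]; simp
    have h2 : σ = σ * sPerm n k * sPerm n k := by rw [mul_assoc, hss, mul_one]
    set σ' := σ * sPerm n k with hσ'
    obtain ⟨ih1, ih2⟩ := ih σ' (by omega)
    have h3 : Tw σ = Tw σ' ∘ₗ T k := by
      rw [h2]
      exact hTw.2 σ' k h (by rw [← h2]; exact h1)
    refine ⟨fun c f hf => ?_, fun ν hν => ?_⟩
    · rw [h3]
      exact ih1 c _ (pres (T k) (T_pres1 hT h) c f hf)
    · have e1 := ih1 _ _ (T_step hT h ν (hν _ _ (by simp [Fin.lt_def]) hk))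
      have hren : rename (sPerm n k) (xmon n ν) = xmon n (ν ∘ sPerm n k) := by
        rw [rename_xmon]
        congr 2
        rw [sPerm_of_lt h]; simp
      have e2 := ih2 (ν ∘ sPerm n k) (by
        intro i j hij hji
        refine hν _ _ (swap_lt h i j hij ?_) ?_
        · rintro ⟨rfl, hj⟩
          have hj' : j = ⟨i + 1, h⟩ := Fin.ext hj
          subst hj'
          rw [hσ'] at hji
          simp only [Equiv.Perm.mul_apply, sPerm_of_lt h, Equiv.swap_apply_right] at hji
          replace hji : σ i < σ (Equiv.swap i ⟨i + 1, h⟩ i) := hji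
          rw [Equiv.swap_apply_left] at hji
          exact absurd hji (not_lt.2 hk.le)
        · rw [hσ'] at hji
          exact hji)
      rw [Qf_comp, ← hren] at e2
      have e3 := Submodule.add_mem _ e1 e2
      have e4 : rename σ' (rename (sPerm n k) (xmon n ν)) = rename σ (xmon n ν) := by
        rw [rename_rename, ← Equiv.Perm.coe_mul, ← h2]
      rw [map_sub, e4, sub_add_sub_cancel] at e3
      rw [h3]
      exact e3

theorem U_lead {n : ℕ} {tv : K} {T : ℕ → P n →ₗ[K] P n} (hT : IsDL n tv T)
    {Tw : Equiv.Perm (Fin n) → P n →ₗ[K] P n} (hTw : IsTsigma n T Tw) (ν : Fin n → ℕ)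
    (hν : StrictAnti ν) :
    coeff (Finsupp.equivFunOnFinite.symm ν) (Uminus n tv Tw (xmon n ν)) = 1 := by
  classical
  have hlow : ∀ f ∈ Low n (Qf ν), coeff (Finsupp.equivFunOnFinite.symm ν) f = 0 := by
    intro f hf
    by_contra hne
    exact lt_irrefl _ (hf _ hne)
  have h1 : ∀ σ : Equiv.Perm (Fin n),
      coeff (Finsupp.equivFunOnFinite.symm ν) (Tw σ (xmon n ν)) = if σ = 1 then 1 else 0 := by
    intro σ
    have h2 := hlow _ ((Tw_main hT hTw _ σ rfl).2 ν (fun i j hij _ => hν hij))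
    rw [coeff_sub, sub_eq_zero] at h2
    rw [h2, rename_xmon, xmon, coeff_monomial]
    refine if_congr ?_ rfl rfl
    rw [Equiv.apply_eq_iff_eq]
    constructor
    · intro h3
      ext i
      have h4 := congrFun h3 (σ i)
      simp only [Function.comp, Equiv.symm_apply_apply] at h4
      have := hν.injective h4
      rw [← this]; rfl
    · rintro rfl; rfl
  rw [Uminus, LinearMap.sum_apply, coeff_sum]
  simp only [LinearMap.smul_apply, coeff_smul, h1, smul_eq_mul, mul_ite, mul_one, mul_zero,
    sum_ite_eq', mem_univ, if_true]
  have : inversions (1 : Equiv.Perm (Fin n)) = 0 := by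
    rw [inversions, card_eq_zero, filter_eq_empty_iff]
    intro p _ hp
    exact absurd hp.1 (not_lt.2 hp.2.le)
  rw [this]; simp

theorem U_low {n : ℕ} {tv : K} {T : ℕ → P n →ₗ[K] P n} (hT : IsDL n tv T)
    {Tw : Equiv.Perm (Fin n) → P n →ₗ[K] P n} (hTw : IsTsigma n T Tw) (ν μ : Fin n → ℕ)
    (h : Qf μ < Qf ν) :
    coeff (Finsupp.equivFunOnFinite.symm ν) (Uminus n tv Tw (xmon n μ)) = 0 := by
  have h1 : Uminus n tv Tw (xmon n μ) ∈ Low n (Qf ν) := by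
    rw [Uminus, LinearMap.sum_apply]
    exact Submodule.sum_mem _ fun σ _ => Submodule.smul_mem _ _
      ((Tw_main hT hTw _ σ rfl).1 _ _ (xmon_Low _ h))
  by_contra hne
  exact lt_irrefl _ (h1 _ hne)

theorem abel_sum (d a : ℕ → ℤ) (m : ℕ) (hD : ∀ k ≤ m, 0 ≤ ∑ i ∈ range k, d i)
    (ha : ∀ k, k < m → a (k + 1) ≤ a k) :
    a m * ∑ i ∈ range m, d i ≤ ∑ i ∈ range m, d i * a i := by
  induction m with
  | zero => simp
  | succ m ih =>
    have h1 := ih (fun k hk => hD k (by omega)) (fun k hk => ha k (by omega))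
    have h2 := hD (m + 1) le_rfl
    rw [sum_range_succ] at h2 ⊢
    rw [sum_range_succ]
    have h3 := ha m (by omega)
    nlinarith

theorem Qf_lt {n : ℕ} (μ ν : Fin n → ℕ) (hμ : Antitone μ) (h : domLT n μ ν) : Qf μ < Qf ν := by
  obtain ⟨⟨hs, hp⟩, hne⟩ := h
  let ex : (Fin n → ℕ) → ℕ → ℤ := fun ρ i => if h : i < n then (ρ ⟨i, h⟩ : ℤ) else 0
  have exf : ∀ ρ (i : Fin n), ex ρ i = ρ i := by intro ρ i; simp [ex]
  let d : ℕ → ℤ := fun i => ex ν i - ex μ i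
  have hD : ∀ k ≤ n, 0 ≤ ∑ i ∈ range k, d i := by
    intro k hk
    cases k with
    | zero => simp
    | succ k =>
      have hconv : ∀ ρ : Fin n → ℕ, ∑ i ∈ range (k + 1), ex ρ i =
          ((∑ i ∈ univ.filter (· ≤ (⟨k, hk⟩ : Fin n)), ρ i : ℕ) : ℤ) := by
        intro ρ
        rw [sum_filter]
        push_cast
        have e : ∀ i : Fin n, (if i ≤ (⟨k, hk⟩ : Fin n) then (ρ i : ℤ) else 0) =
            (fun i : ℕ => if i ≤ k then ex ρ i else 0) i := by
          intro i; simp only [exf, Fin.le_def]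
        rw [sum_congr rfl fun i _ => e i,
          Fin.sum_univ_eq_sum_range (fun i : ℕ => if i ≤ k then ex ρ i else 0) n, ← sum_filter]
        refine sum_congr ?_ fun _ _ => rfl
        ext i; simp; omega
      simp only [d]
      rw [sum_sub_distrib, hconv, hconv, sub_nonneg]
      exact_mod_cast hp ⟨k, hk⟩
  have h1 : 0 ≤ ∑ i ∈ range n, d i * ex μ i := by
    have := abel_sum d (ex μ) n hD (by
      intro k hk
      by_cases h2 : k + 1 < n
      · simp only [ex, h2, hk, dif_pos]
        exact_mod_cast hμ (by simp [Fin.le_def])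
      · simp only [ex, h2, hk, dif_pos, dif_neg, not_false_iff]
        positivity)
    refine le_trans ?_ this
    simp [ex]
  rw [← Fin.sum_univ_eq_sum_range (fun i => d i * ex μ i)] at h1
  simp only [d, exf] at h1
  have h2 : 0 < ∑ i : Fin n, ((ν i : ℤ) - μ i) ^ 2 := by
    obtain ⟨i, hi⟩ := Function.ne_iff.1 hne
    refine sum_pos' (fun i _ => sq_nonneg _) ⟨i, mem_univ _, ?_⟩
    have : (ν i : ℤ) - μ i ≠ 0 := by omega
    positivity
  have h3 : (Qf ν : ℤ) - Qf μ = ∑ i : Fin n, ((ν i : ℤ) - μ i) ^ 2 +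
      2 * ∑ i : Fin n, ((ν i : ℤ) - μ i) * μ i := by
    simp only [Qf]
    push_cast
    rw [mul_sum, ← sum_add_distrib, ← sum_sub_distrib]
    exact sum_congr rfl fun i _ => by ring
  have : (Qf μ : ℤ) < Qf ν := by linarith
  exact_mod_cast this

theorem S_lead {n : ℕ} {qv tv : K} {T : ℕ → P n →ₗ[K] P n} (hT : IsDL n tv T)
    {Tw : Equiv.Perm (Fin n) → P n →ₗ[K] P n} (hTw : IsTsigma n T Tw) (ν : Fin n → ℕ)
    (hν : StrictAnti ν) (S : P n) (hS : IsQASMac n qv tv T Tw ν S) :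
    coeff (Finsupp.equivFunOnFinite.symm ν) S = 1 := by
  obtain ⟨v, hv⟩ := hS.2.1
  rw [hv, coeff_add, U_lead hT hTw ν hν, add_eq_left]
  refine finsum_mem_induction (fun f : P n => coeff (Finsupp.equivFunOnFinite.symm ν) f = 0)
    (by simp) (fun _ _ hx hy => by rw [coeff_add, hx, hy, add_zero]) ?_
  intro μ hμ
  rw [coeff_smul, U_low hT hTw ν μ (Qf_lt μ ν hμ.1.antitone hμ.2), smul_zero]

end Stmt17

namespace Stmt17

theorem dl_apply (N : ℕ) (i : Fin (N + 1)) : dl (N + 1) i = N - (i : ℕ) := by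
  classical
  rw [dl, Finsupp.finsetSum_apply]
  simp only [Finsupp.single_apply]
  rw [sum_filter, ← univ_product_univ, sum_product]
  have h1 : ∀ a : Fin (N + 1), (∑ b, if a < b then (if a = i then 1 else 0) else 0) =
      if a = i then ∑ b, (if i < b then 1 else 0) else 0 := by
    intro a
    split_ifs with h
    · subst h; rfl
    · simp
  simp only [h1, sum_ite_eq', mem_univ, if_true]
  rw [← sum_filter, sum_const, smul_eq_mul, mul_one]
  have : (univ.filter fun b => i < b) = Ioi i := by ext; simp
  rw [this, Fin.card_Ioi]
  omega

theorem card_prs (N : ℕ) : (prs (N + 1)).card = (N + 1) * N / 2 := by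
  classical
  rw [card_filter, ← univ_product_univ, sum_product]
  have h1 : ∀ a : Fin (N + 1), (∑ b, if a < b then 1 else 0) = N - (a : ℕ) := by
    intro a
    rw [← card_filter]
    have : (univ.filter fun b => a < b) = Ioi a := by ext; simp
    rw [this, Fin.card_Ioi]
    omega
  simp only [h1]
  rw [Fin.sum_univ_eq_sum_range (fun i => N - i)]
  have h2 := sum_range_reflect (fun i => i) (N + 1)
  simp only [Nat.add_sub_cancel] at h2
  rw [h2, sum_range_id]
  simp

theorem MacEq_sub {N : ℕ} {qv c e : K} {g f : P (N + 1)} (a : K) (hg : MacEq N qv c e g)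
    (hf : MacEq N qv c e f) : MacEq N qv c e (g - C a * f) := by
  unfold MacEq at *
  have hC : ∀ i, tauA (N + 1) qv i (C a) = C a := by
    intro i; simp [tauA, algebraMap_eq]
  simp only [map_sub, map_mul, hC, mul_sub, sum_sub_distrib]
  rw [hg]
  have h1 : ∀ i, Pf N (ioC (N + 1) c) (xL (N + 1)) 0 i *
      (ioC (N + 1) a * io (N + 1) (tauA (N + 1) qv i f)) =
      ioC (N + 1) a * (Pf N (ioC (N + 1) c) (xL (N + 1)) 0 i *
        io (N + 1) (tauA (N + 1) qv i f)) := by intro i; ring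
  rw [sum_congr rfl fun i _ => h1 i, ← mul_sum, hf]
  ring

theorem main_succ (N : ℕ) (κ : Fin (N + 1) → ℕ) (hκ : Antitone κ)
    (T : ℕ → P (N + 1) →ₗ[K] P (N + 1)) (hT : IsDL (N + 1) t T)
    (Tw : Equiv.Perm (Fin (N + 1)) → P (N + 1) →ₗ[K] P (N + 1)) (hTw : IsTsigma (N + 1) T Tw)
    (T' : ℕ → P (N + 1) →ₗ[K] P (N + 1)) (hT' : IsDL (N + 1) (q * t) T')
    (Pp : P (N + 1)) (hPp : IsSymMac (N + 1) q (q * t) T' κ Pp)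
    (S : P (N + 1))
    (hS : IsQASMac (N + 1) q t T Tw (fun i => κ i + (N - (i : ℕ))) S) :
    S = C ((t ^ ((N + 1) * N / 2))⁻¹) * Del (N + 1) t * Pp := by
  have hqt : q * t ≠ 0 := mul_ne_zero q_ne t_ne
  have hsa : StrictAnti (fun i : Fin (N + 1) => κ i + (N - (i : ℕ))) := by
    intro i j hij
    have h1 := hκ hij.le
    have h2 : (i : ℕ) < j := hij
    have := j.2
    simp only
    omega
  have hlead := S_lead hT hTw _ hsa S hS
  obtain ⟨g, rfl⟩ := Del_dvd hT S hS.1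
  have hg : g ≠ 0 := by
    rintro rfl
    simp at hlead
  have M1 := MacEq_anti hT g (fun k hk => hS.1 k (by omega)) κ hS.2.2
  have M2 := MacEq_sym hqt hT' Pp (fun k _ => hPp.1 _) κ hPp.2.2.2
  have hdeg : ∀ f : P (N + 1), f ≠ 0 →
      MacEq N q (q * t) (∑ i : Fin (N + 1), q ^ κ i * (q * t) ^ (N - (i : ℕ))) f →
      MonomialOrder.lex.degree f = Finsupp.equivFunOnFinite.symm κ := by
    intro f hf hM
    have h1 := eig_sep _ _ (MacEq_lead hqt f hf hM)
    ext i
    rw [h1]; rfl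
  set a := coeff (Finsupp.equivFunOnFinite.symm κ) g with ha
  have hgP : g = C a * Pp := by
    rw [← sub_eq_zero]
    by_contra hne
    have h1 := hdeg _ hne (MacEq_sub a M1 M2)
    have h2 := MonomialOrder.leadingCoeff_ne_zero_iff (m := MonomialOrder.lex).2 hne
    rw [MonomialOrder.leadingCoeff, h1, coeff_sub, coeff_C_mul, hPp.2.1, ← ha] at h2
    simp at h2
  have hD : Del (N + 1) t = ∏ p ∈ prs (N + 1), (C t * X p.1 - C 1 * X p.2) := by
    simp [Del]
  have hpd := prod_deg (n := N + 1) (fun _ => t) (fun _ => 1) (fun _ => t_ne)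
  rw [← hD, prod_const, card_prs] at hpd
  have hdl : Finsupp.equivFunOnFinite.symm (fun i : Fin (N + 1) => κ i + (N - (i : ℕ))) =
      dl (N + 1) + Finsupp.equivFunOnFinite.symm κ := by
    ext i
    simp [dl_apply, add_comm]
  rw [hdl, MonomialOrder.coeff_mul_of_add_of_degree_le (m := MonomialOrder.lex)
    (congrArg _ hpd.1).le (congrArg _ (hdeg g hg M1)).le, ← ha, ← hpd.1] at hlead
  have hlc : MonomialOrder.lex.leadingCoeff (Del (N + 1) t) * a = 1 := hlead
  rw [hpd.2] at hlc
  rw [← eq_inv_of_mul_eq_one_right hlc, hgP]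
  ring

end Stmt17
open Stmt17

theorem stmt_17 (n : ℕ) (κ : Fin n → ℕ) (hκ : Antitone κ)
    -- Demazure–Lustig operators and T_σ for parameter t, and the operators for parameter q·t
    (T : ℕ → P n →ₗ[K] P n) (hT : IsDL n t T)
    (Tw : Equiv.Perm (Fin n) → P n →ₗ[K] P n) (hTw : IsTsigma n T Tw)
    (T' : ℕ → P n →ₗ[K] P n) (hT' : IsDL n (q * t) T')
    -- the symmetric Macdonald polynomial P_κ(x;q,qt)
    (Pp : P n) (hPp : IsSymMac n q (q * t) T' κ Pp)
    -- the q-antisymmetric Macdonald polynomial S_{κ+δ}(x;q,t)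
    (S : P n) (hS : IsQASMac n q t T Tw (fun i => κ i + (n - 1 - (i : ℕ))) S) :
    S = C ((t ^ (n * (n - 1) / 2))⁻¹) *
        (∏ p ∈ univ.filter fun p : Fin n × Fin n => p.1 < p.2, (C t * X p.1 - X p.2)) *
        Pp := by
  cases n with
  | zero =>
    have h1 := S_lead hT hTw _ (fun i => i.elim0) S hS
    have h2 := hPp.2.1
    have h3 : S = Pp := by
      ext m
      rw [Subsingleton.elim m (Finsupp.equivFunOnFinite.symm κ), h2, ← h1]
      congr 1
      exact Subsingleton.elim _ _
    rw [h3]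
    simp
  | succ N => exact main_succ N κ hκ T hT Tw hTw T' hT' Pp hPp S hS
end

section
/- Let η∈ℕ^n, let η^R be the weakly increasing rearrangement of η, and let f_j := #{i : η_i=j} for j≥0. Assume the non-symmetric Macdonald polynomial E_{η^R} and the symmetric Macdonald polynomial P_{η^+} exist. Then U^+ E_{η^R} = t^{n(n−1)/2}·( ∏_{j=0}^{η^+_1} [f_j]_{t^{−1}}! )·P_{η^+}, where [m]_s! := ∏_{k=1}^m (1−s^k)/(1−s). -/
/- STATEMENT 18: U⁺ E_{η^R} = t^{n(n−1)/2}·(∏_{j=0}^{η⁺_1} [f_j]_{t⁻¹}!)·P_{η⁺}, where η^R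
is the weakly increasing rearrangement of η, f_j = #{i : η_i = j} and
[m]_s! = ∏_{k=1}^m (1−s^k)/(1−s). -/

open Finset MvPolynomial

namespace Stmt18

/-- leg colength l'_η(i) -/
def legCo (n : ℕ) (η : Fin n → ℕ) (i : Fin n) : ℕ :=
  (univ.filter fun k => k < i ∧ η i ≤ η k).card +
  (univ.filter fun k => i < k ∧ η i < η k).card

/-- leg length l(s) of the node s = (i,j) -/
def leg (n : ℕ) (η : Fin n → ℕ) (i : Fin n) (j : ℕ) : ℕ :=
  (univ.filter fun k => i < k ∧ j ≤ η k ∧ η k ≤ η i).card +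
  (univ.filter fun k => k < i ∧ j ≤ η k + 1 ∧ η k + 1 ≤ η i).card

/-- The field K = ℚ(q,t). -/
abbrev K : Type := FractionRing (MvPolynomial (Fin 2) ℚ)

noncomputable def q : K := algebraMap (MvPolynomial (Fin 2) ℚ) K (X 0)
noncomputable def t : K := algebraMap (MvPolynomial (Fin 2) ℚ) K (X 1)

/-- The polynomial ring K[x_1,…,x_n]. -/
abbrev P (n : ℕ) : Type := MvPolynomial (Fin n) K

/-- the automorphism s_k exchanging x_k and x_{k+1} (0-indexed; identity out of range) -/
noncomputable def sOp (n : ℕ) (k : ℕ) : P n →ₗ[K] P n :=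
  if h : k + 1 < n then
    (rename (Equiv.swap (⟨k, Nat.lt_of_succ_lt h⟩ : Fin n) ⟨k + 1, h⟩)).toLinearMap
  else LinearMap.id

/-- τ_1 : x_1 ↦ qv·x_1 (the first variable is 0-indexed) -/
noncomputable def tauOp (n : ℕ) (qv : K) : P n →ₗ[K] P n :=
  (aeval (fun j : Fin n => if (j : ℕ) = 0 then C qv * X j else X j)).toLinearMap

/-- ω := s_{n−1}⋯s_2 s_1 τ_1 -/
noncomputable def omegaOp (n : ℕ) (qv : K) : P n →ₗ[K] P n :=
  (List.range (n - 1)).foldl (fun acc k => sOp n k ∘ₗ acc) (tauOp n qv)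

/-- The defining property of the Demazure–Lustig operators T_k (0-indexed), for the
parameter value tv: (x_k − x_{k+1})·(T_k f) = (x_k − x_{k+1})·tv·f
+ (tv·x_k − x_{k+1})·(s_k f − f), i.e. T_k f is the polynomial quotient from the usual
definition. -/
def IsDL (n : ℕ) (tv : K) (T : ℕ → P n →ₗ[K] P n) : Prop :=
  ∀ k, ∀ hk : k + 1 < n, ∀ f : P n,
    (X (⟨k, Nat.lt_of_succ_lt hk⟩ : Fin n) - X ⟨k + 1, hk⟩) * T k f =
      (X (⟨k, Nat.lt_of_succ_lt hk⟩ : Fin n) - X ⟨k + 1, hk⟩) * (C tv * f) +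
      (C tv * X (⟨k, Nat.lt_of_succ_lt hk⟩ : Fin n) - X ⟨k + 1, hk⟩) * (sOp n k f - f)

/-- T_k⁻¹ = tv⁻¹ − 1 + tv⁻¹ T_k -/
noncomputable def Tinv (n : ℕ) (tv : K) (T : ℕ → P n →ₗ[K] P n) (k : ℕ) : P n →ₗ[K] P n :=
  tv⁻¹ • LinearMap.id - LinearMap.id + tv⁻¹ • T k

/-- The Cherednik operator Y_i (0-indexed i):
Y_i = tv^{i+1−n}·T_i⋯T_{n−2}·ω·T_0⁻¹⋯T_{i−1}⁻¹. -/
noncomputable def Yop (n : ℕ) (qv tv : K) (T : ℕ → P n →ₗ[K] P n) (i : Fin n) :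
    P n →ₗ[K] P n :=
  (tv ^ (n - 1 - (i : ℕ)))⁻¹ •
    (((List.range' (i : ℕ) (n - 1 - (i : ℕ))).foldr (fun k acc => T k ∘ₗ acc) LinearMap.id) ∘ₗ
      omegaOp n qv ∘ₗ
      ((List.range (i : ℕ)).foldr (fun k acc => Tinv n tv T k ∘ₗ acc) LinearMap.id))

/-- the decreasing rearrangement η⁺ of η -/
noncomputable def sortDesc (n : ℕ) (η : Fin n → ℕ) : Fin n → ℕ :=
  fun i => η (Tuple.sort η i.rev)

/-- dominance order on n-tuples (of equal sum) -/
def domLE (n : ℕ) (ν μ : Fin n → ℕ) : Prop :=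
  (∑ i, ν i = ∑ i, μ i) ∧
  ∀ p : Fin n, ∑ i ∈ univ.filter (· ≤ p), ν i ≤ ∑ i ∈ univ.filter (· ≤ p), μ i

def domLT (n : ℕ) (ν μ : Fin n → ℕ) : Prop := domLE n ν μ ∧ ν ≠ μ

/-- the order ≺ : ν ≺ η iff ν⁺ < η⁺, or ν⁺ = η⁺ and ν < η (dominance order) -/
noncomputable def prec (n : ℕ) (ν η : Fin n → ℕ) : Prop :=
  domLT n (sortDesc n ν) (sortDesc n η) ∨ (sortDesc n ν = sortDesc n η ∧ domLT n ν η)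

/-- E is the non-symmetric Macdonald polynomial for the composition η (with parameters
qv, tv and Demazure–Lustig operators T): it has the triangular form
E = x^η + Σ_{ν≺η} b_{ην} x^ν and satisfies Y_i E = qv^{η_i}·tv^{−l'_η(i)}·E for all i. -/
noncomputable def IsNSMac (n : ℕ) (qv tv : K) (T : ℕ → P n →ₗ[K] P n)
    (η : Fin n → ℕ) (E : P n) : Prop :=
  coeff (Finsupp.equivFunOnFinite.symm η) E = 1 ∧
  (∀ ν : Fin n →₀ ℕ, coeff ν E ≠ 0 → (ν : Fin n → ℕ) = η ∨ prec n (ν : Fin n → ℕ) η) ∧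
  ∀ i : Fin n, Yop n qv tv T i E = (qv ^ η i / tv ^ legCo n η i) • E

/-- the adjacent transposition s_k as a permutation (identity out of range, 0-indexed) -/
def sPerm (n : ℕ) (k : ℕ) : Equiv.Perm (Fin n) :=
  if h : k + 1 < n then Equiv.swap ⟨k, Nat.lt_of_succ_lt h⟩ ⟨k + 1, h⟩ else 1

/-- the length l(σ) of a permutation, i.e. its number of inversions -/
def inversions {n : ℕ} (σ : Equiv.Perm (Fin n)) : ℕ :=
  (univ.filter fun p : Fin n × Fin n => p.1 < p.2 ∧ σ p.2 < σ p.1).card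

/-- The defining property of σ ↦ T_σ: T_1 = id and T_{σ·s_k} = T_σ ∘ T_k whenever
l(σ·s_k) = l(σ)+1; by the braid relations this determines T_σ = T_{i_1}⋯T_{i_p} for any
reduced word σ = s_{i_1}⋯s_{i_p}. -/
def IsTsigma (n : ℕ) (T : ℕ → P n →ₗ[K] P n)
    (Tw : Equiv.Perm (Fin n) → P n →ₗ[K] P n) : Prop :=
  Tw 1 = LinearMap.id ∧
  ∀ σ : Equiv.Perm (Fin n), ∀ k, k + 1 < n →
    inversions (σ * sPerm n k) = inversions σ + 1 →
    Tw (σ * sPerm n k) = Tw σ ∘ₗ T k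

/-- U⁺ := Σ_σ T_σ -/
noncomputable def Uplus (n : ℕ) (Tw : Equiv.Perm (Fin n) → P n →ₗ[K] P n) :
    P n →ₗ[K] P n := ∑ σ : Equiv.Perm (Fin n), Tw σ

/-- U⁻ := Σ_σ (−tv)^{−l(σ)} T_σ -/
noncomputable def Uminus (n : ℕ) (tv : K) (Tw : Equiv.Perm (Fin n) → P n →ₗ[K] P n) :
    P n →ₗ[K] P n := ∑ σ : Equiv.Perm (Fin n), ((-tv) ^ inversions σ)⁻¹ • Tw σ

/-- the monomial x^η -/
noncomputable def xmon (n : ℕ) (η : Fin n → ℕ) : P n :=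
  monomial (Finsupp.equivFunOnFinite.symm η) 1

/-- Pp is the symmetric Macdonald polynomial for the partition κ (with parameters qv, tv
and Demazure–Lustig operators T): it is symmetric, of the triangular form
m_κ + Σ_{μ<κ} u_{κμ} m_μ, and satisfies (Σ_i Y_i) Pp = (Σ_i qv^{κ_i}·tv^{1−i}) Pp. -/
noncomputable def IsSymMac (n : ℕ) (qv tv : K) (T : ℕ → P n →ₗ[K] P n)
    (κ : Fin n → ℕ) (Pp : P n) : Prop :=
  Pp.IsSymmetric ∧
  coeff (Finsupp.equivFunOnFinite.symm κ) Pp = 1 ∧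
  (∀ ν : Fin n →₀ ℕ, coeff ν Pp ≠ 0 →
    sortDesc n (ν : Fin n → ℕ) = κ ∨ domLT n (sortDesc n (ν : Fin n → ℕ)) κ) ∧
  (∑ i : Fin n, Yop n qv tv T i) Pp = (∑ i : Fin n, qv ^ κ i * (tv ^ (i : ℕ))⁻¹) • Pp

/-- the weakly increasing rearrangement η^R of η -/
noncomputable def sortAsc (n : ℕ) (η : Fin n → ℕ) : Fin n → ℕ :=
  fun i => η (Tuple.sort η i)

/-- the q-factorial [m]_s! = ∏_{k=1}^m (1−s^k)/(1−s) -/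
noncomputable def qfact (s : K) (m : ℕ) : K :=
  ∏ k ∈ Finset.range m, (1 - s ^ (k + 1)) / (1 - s)

end Stmt18


open Finset MvPolynomial
namespace Stmt18

lemma sPerm_eq {n k : ℕ} (h : k + 1 < n) :
    sPerm n k = Equiv.swap ⟨k, Nat.lt_of_succ_lt h⟩ ⟨k + 1, h⟩ := by
  simp [sPerm, h]

lemma sPerm_lt {n k : ℕ} (h : k + 1 < n) (i j : Fin n) (hij : i < j)
    (hne : ¬ (i.val = k ∧ j.val = k + 1)) : sPerm n k i < sPerm n k j := by
  rw [sPerm_eq h]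
  simp only [Equiv.swap_apply_def, Fin.ext_iff]
  rw [Fin.lt_def] at hij ⊢
  split_ifs <;> simp_all <;> omega

lemma sPerm_mul_self (n k : ℕ) : sPerm n k * sPerm n k = 1 := by
  unfold sPerm; split_ifs <;> simp

lemma sPerm_inv (n k : ℕ) : (sPerm n k)⁻¹ = sPerm n k := by
  unfold sPerm; split_ifs <;> simp

lemma sPerm_sPerm (n k : ℕ) (i : Fin n) : sPerm n k (sPerm n k i) = i := by
  rw [← Equiv.Perm.mul_apply, sPerm_mul_self]; rfl

lemma sPerm_left {n k : ℕ} (h : k + 1 < n) :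
    sPerm n k ⟨k, Nat.lt_of_succ_lt h⟩ = ⟨k + 1, h⟩ := by
  simp [sPerm_eq h]

lemma sPerm_right {n k : ℕ} (h : k + 1 < n) :
    sPerm n k ⟨k + 1, h⟩ = ⟨k, Nat.lt_of_succ_lt h⟩ := by
  simp [sPerm_eq h]

lemma inversions_mul_sPerm {n k : ℕ} (h : k + 1 < n) (σ : Equiv.Perm (Fin n))
    (hσ : σ ⟨k, Nat.lt_of_succ_lt h⟩ < σ ⟨k + 1, h⟩) :
    inversions (σ * sPerm n k) = inversions σ + 1 := by
  unfold inversions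
  set s := sPerm n k with hs
  let e : Fin n × Fin n ≃ Fin n × Fin n := Equiv.prodCongr s s
  have key : (univ.filter fun p : Fin n × Fin n => p.1 < p.2 ∧ (σ * s) p.2 < (σ * s) p.1) =
      insert (⟨k, Nat.lt_of_succ_lt h⟩, ⟨k + 1, h⟩)
        ((univ.filter fun p : Fin n × Fin n => p.1 < p.2 ∧ σ p.2 < σ p.1).map e.toEmbedding) := by
    ext ⟨i, j⟩
    simp only [mem_filter, mem_univ, true_and, mem_insert, mem_map_equiv, Prod.mk.injEq]
    have he : e.symm (i, j) = (s i, s j) := by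
      apply e.injective
      simp [e, hs, sPerm_sPerm]
    rw [he]
    simp only [Equiv.Perm.mul_apply]
    by_cases hc : i.val = k ∧ j.val = k + 1
    · have hi : i = ⟨k, Nat.lt_of_succ_lt h⟩ := Fin.ext hc.1
      have hj : j = ⟨k + 1, h⟩ := Fin.ext hc.2
      subst hi; subst hj
      simp [hs, sPerm_left h, sPerm_right h, hσ]
    · have hc' : ¬ (i = ⟨k, Nat.lt_of_succ_lt h⟩ ∧ j = ⟨k + 1, h⟩) := by
        simpa [Fin.ext_iff] using hc
      simp only [hc', false_or]
      constructor
      · rintro ⟨h1, h2⟩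
        exact ⟨sPerm_lt h i j h1 hc, h2⟩
      · rintro ⟨h1, h2⟩
        refine ⟨?_, h2⟩
        by_cases hd : (s i).val = k ∧ (s j).val = k + 1
        · exfalso
          have hi : s i = ⟨k, Nat.lt_of_succ_lt h⟩ := Fin.ext hd.1
          have hj : s j = ⟨k + 1, h⟩ := Fin.ext hd.2
          rw [hi, hj] at h2
          exact absurd h2 (not_lt.mpr hσ.le)
        · have := sPerm_lt h _ _ h1 hd
          rwa [hs, sPerm_sPerm, sPerm_sPerm] at this
  rw [key, card_insert_of_notMem, card_map]
  simp only [mem_map_equiv, mem_filter, mem_univ, true_and]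
  have he : e.symm (⟨k, Nat.lt_of_succ_lt h⟩, ⟨k + 1, h⟩) =
      (⟨k + 1, h⟩, ⟨k, Nat.lt_of_succ_lt h⟩) := by
    apply e.injective
    simp [e, hs, sPerm_left h, sPerm_right h]
  rw [he]
  simp

lemma inversions_mul_sPerm_desc {n k : ℕ} (h : k + 1 < n) (σ : Equiv.Perm (Fin n))
    (hσ : σ ⟨k + 1, h⟩ < σ ⟨k, Nat.lt_of_succ_lt h⟩) :
    inversions σ = inversions (σ * sPerm n k) + 1 := by
  have := inversions_mul_sPerm h (σ * sPerm n k)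
    (by simpa [sPerm_left h, sPerm_right h] using hσ)
  rwa [mul_assoc, sPerm_mul_self, mul_one] at this

lemma asc_of_inversions {n k : ℕ} (h : k + 1 < n) (σ : Equiv.Perm (Fin n))
    (hl : inversions (σ * sPerm n k) = inversions σ + 1) :
    σ ⟨k, Nat.lt_of_succ_lt h⟩ < σ ⟨k + 1, h⟩ := by
  rcases lt_trichotomy (σ ⟨k, Nat.lt_of_succ_lt h⟩) (σ ⟨k + 1, h⟩) with h1 | h1 | h1
  · exact h1
  · have := σ.injective h1
    simp at this
  · have := inversions_mul_sPerm_desc h σ h1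
    omega

lemma inversions_inv {n : ℕ} (σ : Equiv.Perm (Fin n)) : inversions σ⁻¹ = inversions σ := by
  unfold inversions
  refine Finset.card_bij' (fun p _ => (σ⁻¹ p.2, σ⁻¹ p.1)) (fun p _ => (σ p.2, σ p.1)) ?_ ?_ ?_ ?_
  all_goals simp
  all_goals tauto

lemma exists_desc {n : ℕ} (σ : Equiv.Perm (Fin n)) (hσ : σ ≠ 1) :
    ∃ k, ∃ h : k + 1 < n, σ ⟨k + 1, h⟩ < σ ⟨k, Nat.lt_of_succ_lt h⟩ := by
  by_contra hcon
  push Not at hcon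
  apply hσ
  have hm : Monotone σ := by
    cases n with
    | zero => intro i; exact i.elim0
    | succ m =>
      rw [Fin.monotone_iff_le_succ]
      intro i
      exact hcon i.val (by omega)
  have hsm : StrictMono σ := hm.strictMono_of_injective σ.injective
  ext i
  have : (⇑σ) = id := by
    have h2 := Subsingleton.elim (hsm.orderIsoOfSurjective σ σ.surjective) (OrderIso.refl (Fin n))
    funext i
    have := congrArg (fun e => e i) h2
    simpa using this
  simp [this]

/-- Induction on permutations by length, adding a letter to the right. -/
lemma perm_induction {n : ℕ} (p : Equiv.Perm (Fin n) → Prop) (h1 : p 1)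
    (hs : ∀ σ k, ∀ h : k + 1 < n, σ ⟨k, Nat.lt_of_succ_lt h⟩ < σ ⟨k + 1, h⟩ → p σ →
      p (σ * sPerm n k)) (σ : Equiv.Perm (Fin n)) : p σ := by
  induction hN : inversions σ using Nat.strong_induction_on generalizing σ with
  | _ N ih =>
    by_cases hσ : σ = 1
    · rw [hσ]; exact h1
    · obtain ⟨k, h, hk⟩ := exists_desc σ hσ
      have hl := inversions_mul_sPerm_desc h σ hk
      have := hs (σ * sPerm n k) k h (by simpa [sPerm_left h, sPerm_right h] using hk)
        (ih _ (by omega) _ rfl)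
      rwa [mul_assoc, sPerm_mul_self, mul_one] at this

lemma card_pairs (n : ℕ) :
    (univ.filter fun p : Fin n × Fin n => p.1 < p.2).card = n * (n - 1) / 2 := by
  rw [← Finset.sum_range_id n, ← Fin.sum_univ_eq_sum_range (fun i => i) n,
    Finset.card_filter, Fintype.sum_prod_type_right]
  refine Finset.sum_congr rfl fun j _ => ?_
  rw [← Finset.card_filter]
  have : (univ.filter fun i : Fin n => i < j) = Finset.Iio j := by ext; simp
  rw [this, Fin.card_Iio]

lemma inversions_rev {n : ℕ} (τ : Equiv.Perm (Fin n)) :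
    inversions (τ * Fin.revPerm) + inversions τ = n * (n - 1) / 2 := by
  have h1 : inversions (τ * Fin.revPerm) =
      (univ.filter fun p : Fin n × Fin n => p.1 < p.2 ∧ ¬ τ p.2 < τ p.1).card := by
    unfold inversions
    refine Finset.card_bij' (fun p _ => (p.2.rev, p.1.rev)) (fun p _ => (p.2.rev, p.1.rev))
      ?_ ?_ ?_ ?_
    · rintro ⟨i, j⟩ h
      simp only [mem_filter, mem_univ, true_and, Equiv.Perm.mul_apply, Fin.revPerm_apply,
        not_lt, Fin.rev_lt_rev] at h ⊢
      exact ⟨h.1, h.2.le⟩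
    · rintro ⟨i, j⟩ h
      simp only [mem_filter, mem_univ, true_and, Equiv.Perm.mul_apply, Fin.revPerm_apply,
        not_lt, Fin.rev_lt_rev, Fin.rev_rev] at h ⊢
      refine ⟨h.1, lt_of_le_of_ne h.2 fun h3 => ?_⟩
      exact absurd (τ.injective h3) h.1.ne
    · simp
    · simp
  rw [h1, ← card_pairs, add_comm]
  unfold inversions
  rw [← Finset.filter_filter, ← Finset.filter_filter, Finset.card_filter_add_card_filter_not]

end Stmt18

open Finset MvPolynomial
namespace Stmt18

/-- inversion code -/
def code {n : ℕ} (τ : Equiv.Perm (Fin n)) (i : Fin n) : ℕ :=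
  (univ.filter fun j => i < j ∧ τ j < τ i).card

/-- number of later positions with the same value -/
def mlt {n : ℕ} (κ : Fin n → ℕ) (i : Fin n) : ℕ :=
  (univ.filter fun j => i < j ∧ κ j = κ i).card

lemma inversions_eq_sum_code {n : ℕ} (τ : Equiv.Perm (Fin n)) :
    inversions τ = ∑ i, code τ i := by
  unfold inversions code
  rw [Finset.card_filter, Fintype.sum_prod_type]
  refine Finset.sum_congr rfl fun i _ => ?_
  rw [← Finset.card_filter]

lemma code_le {n : ℕ} {κ : Fin n → ℕ} (hκ : Antitone κ) {τ : Equiv.Perm (Fin n)}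
    (hτ : κ ∘ τ = κ) (i : Fin n) : code τ i ≤ mlt κ i := by
  apply Finset.card_le_card
  intro j
  simp only [mem_filter, mem_univ, true_and]
  rintro ⟨h1, h2⟩
  refine ⟨h1, le_antisymm (hκ h1.le) ?_⟩
  have := hκ h2.le
  have e1 := congrFun hτ i
  have e2 := congrFun hτ j
  simp only [Function.comp_apply] at e1 e2
  omega

lemma code_lt_of {n : ℕ} (σ τ : Equiv.Perm (Fin n)) (i : Fin n) (h : ∀ j < i, σ j = τ j)
    (hi : σ i < τ i) : code σ i < code τ i := by
  have aux : ∀ ρ : Equiv.Perm (Fin n), code ρ i =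
      (univ.filter fun v => v < ρ i ∧ ∀ j < i, ρ j ≠ v).card := by
    intro ρ
    unfold code
    refine Finset.card_bij' (fun j _ => ρ j) (fun v _ => ρ.symm v) ?_ ?_ ?_ ?_
    · intro j
      simp only [mem_filter, mem_univ, true_and]
      rintro ⟨h1, h2⟩
      refine ⟨h2, fun j' hj' he => ?_⟩
      have := ρ.injective he
      subst this
      exact absurd h1 (not_lt.mpr hj'.le)
    · intro v
      simp only [mem_filter, mem_univ, true_and, Equiv.apply_symm_apply]
      rintro ⟨h1, h2⟩
      refine ⟨?_, h1⟩
      by_contra hc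
      rcases (not_lt.mp hc).lt_or_eq with h3 | h3
      · exact h2 _ h3 (by simp)
      · rw [← h3] at h1; simp at h1
    · simp
    · simp
  rw [aux, aux]
  apply Finset.card_lt_card
  rw [Finset.ssubset_iff_of_subset]
  · refine ⟨σ i, ?_, by simp⟩
    simp only [mem_filter, mem_univ, true_and]
    refine ⟨hi, fun j hj he => ?_⟩
    rw [← h j hj] at he
    exact absurd (σ.injective he) hj.ne
  · intro v
    simp only [mem_filter, mem_univ, true_and]
    rintro ⟨h1, h2⟩
    exact ⟨h1.trans hi, fun j hj => by rw [← h j hj]; exact h2 j hj⟩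

lemma code_injective {n : ℕ} : Function.Injective (code (n := n)) := by
  intro σ τ h
  by_contra hne
  have hex : ∃ i, σ i ≠ τ i := by
    by_contra hc
    push Not at hc
    exact hne (Equiv.ext hc)
  obtain ⟨i, hi, hmin⟩ := (wellFounded_lt (α := Fin n)).has_min {i | σ i ≠ τ i} hex
  have hlt : ∀ j < i, σ j = τ j := fun j hj => by
    by_contra hc
    exact hmin j hc hj
  rcases lt_or_gt_of_ne hi with h1 | h1
  · exact absurd (congrFun h i) (code_lt_of σ τ i hlt h1).ne
  · exact absurd (congrFun h i) (code_lt_of τ σ i (fun j hj => (hlt j hj).symm) h1).ne'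

lemma prod_mlt {n : ℕ} {M : Type*} [CommMonoid M] (κ : Fin n → ℕ) (S : Finset ℕ)
    (hS : ∀ i, κ i ∈ S) (g : ℕ → M) :
    ∏ i, g (mlt κ i) = ∏ j ∈ S, ∏ m ∈ range (univ.filter fun i => κ i = j).card, g m := by
  rw [← Finset.prod_fiberwise_of_maps_to (s := univ) (t := S) (g := κ) (fun i _ => hS i)]
  refine Finset.prod_congr rfl fun j _ => ?_
  have hinj : Set.InjOn (mlt κ) (univ.filter fun i => κ i = j : Finset (Fin n)) := by
    have key : ∀ a b : Fin n, κ a = j → κ b = j → a < b → mlt κ b < mlt κ a := by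
      intro a b ha hb hab
      apply Finset.card_lt_card
      rw [Finset.ssubset_iff_of_subset]
      · exact ⟨b, by simp [hab, ha, hb], by simp⟩
      · intro c
        simp only [mem_filter, mem_univ, true_and]
        rintro ⟨h1, h2⟩
        exact ⟨hab.trans h1, by rw [h2, ha, hb]⟩
    intro a ha b hb hab
    simp only [coe_filter, mem_univ, true_and, Set.mem_ofPred_eq] at ha hb
    rcases lt_trichotomy a b with h | h | h
    · exact absurd hab (key a b ha hb h).ne'
    · exact h
    · exact absurd hab (key b a hb ha h).ne
  have himg : (univ.filter fun i => κ i = j).image (mlt κ) =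
      range (univ.filter fun i => κ i = j).card := by
    apply Finset.eq_of_subset_of_card_le
    · intro m
      simp only [mem_image, mem_filter, mem_univ, true_and, mem_range]
      rintro ⟨i, hi, rfl⟩
      apply Finset.card_lt_card
      rw [Finset.ssubset_iff_of_subset]
      · exact ⟨i, by simp [hi], by simp⟩
      · intro c
        simp only [mem_filter, mem_univ, true_and]
        rintro ⟨h1, h2⟩
        rw [h2, hi]
    · rw [Finset.card_image_of_injOn hinj, card_range]
  rw [← himg, Finset.prod_image hinj]

lemma sum_stab {n : ℕ} {κ : Fin n → ℕ} (hκ : Antitone κ) (s : K) (S : Finset ℕ)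
    (hS : ∀ i, κ i ∈ S) :
    ∑ τ ∈ univ.filter (fun τ : Equiv.Perm (Fin n) => κ ∘ ⇑τ = κ), s ^ inversions τ =
      ∏ j ∈ S, ∏ m ∈ range (univ.filter fun i => κ i = j).card, ∑ c ∈ range (m + 1), s ^ c := by
  classical
  rw [← prod_mlt κ S hS (fun m => ∑ c ∈ range (m + 1), s ^ c), Finset.prod_univ_sum]
  have himg : (univ.filter fun τ : Equiv.Perm (Fin n) => κ ∘ ⇑τ = κ).image code =
      Fintype.piFinset fun i => range (mlt κ i + 1) := by
    apply Finset.eq_of_subset_of_card_le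
    · intro c
      simp only [mem_image, mem_filter, mem_univ, true_and, Fintype.mem_piFinset, mem_range]
      rintro ⟨τ, hτ, rfl⟩ i
      have := code_le hκ hτ i
      omega
    · rw [Finset.card_image_of_injective _ code_injective, Fintype.card_piFinset]
      simp only [card_range]
      rw [prod_mlt κ (univ.image κ) (by simp) (fun m => m + 1)]
      apply le_of_eq
      have h2 := DomMulAct.stabilizer_card' κ
      rw [← Fintype.card_subtype]
      simp only [Finset.prod_range_add_one_eq_factorial]
      simp only [Fintype.card_subtype] at h2 ⊢
      rw [← h2]
  rw [← himg, Finset.sum_image code_injective.injOn]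
  refine Finset.sum_congr rfl fun τ _ => ?_
  rw [inversions_eq_sum_code, Finset.prod_pow_eq_pow_sum]

end Stmt18

open Finset MvPolynomial
namespace Stmt18

/-- coefficient of `x^ν` -/
noncomputable def cf {n : ℕ} (h : P n) (ν : Fin n → ℕ) : K :=
  coeff (Finsupp.equivFunOnFinite.symm ν) h

lemma cf_ext {n : ℕ} {f g : P n} (h : ∀ ν, cf f ν = cf g ν) : f = g := by
  ext m
  have := h m
  simpa [cf] using this

lemma cf_add {n : ℕ} (f g : P n) (ν : Fin n → ℕ) : cf (f + g) ν = cf f ν + cf g ν := by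
  simp [cf]
lemma cf_sub {n : ℕ} (f g : P n) (ν : Fin n → ℕ) : cf (f - g) ν = cf f ν - cf g ν := by
  simp [cf]
lemma cf_smul {n : ℕ} (c : K) (g : P n) (ν : Fin n → ℕ) : cf (c • g) ν = c * cf g ν := by
  simp [cf]
lemma cf_C_mul {n : ℕ} (c : K) (g : P n) (ν : Fin n → ℕ) : cf (C c * g) ν = c * cf g ν := by
  simp [cf]
lemma cf_sum {n : ℕ} {ι : Type*} (s : Finset ι) (g : ι → P n) (ν : Fin n → ℕ) :
    cf (∑ i ∈ s, g i) ν = ∑ i ∈ s, cf (g i) ν := by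
  simp [cf, coeff_sum]

lemma cf_X_mul {n : ℕ} (i : Fin n) (g : P n) (ν β : Fin n → ℕ) (h : ν = β + Pi.single i 1) :
    cf (X i * g) ν = cf g β := by
  subst h
  unfold cf
  have : (Finsupp.equivFunOnFinite.symm (β + Pi.single i 1) : Fin n →₀ ℕ) =
      Finsupp.single i 1 + Finsupp.equivFunOnFinite.symm β := by
    ext j
    simp [Finsupp.single_apply, Pi.single_apply, add_comm, eq_comm]
  rw [this, coeff_X_mul]

lemma cf_X_mul_zero {n : ℕ} (i : Fin n) (g : P n) (ν : Fin n → ℕ) (h : ν i = 0) :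
    cf (X i * g) ν = 0 := by
  unfold cf
  rw [coeff_X_mul', if_neg]
  simp [h]

lemma coeff_rename_perm {n : ℕ} (σ : Equiv.Perm (Fin n)) (h : P n) (ν : Fin n → ℕ) :
    cf (rename σ h) ν = cf h (ν ∘ σ) := by
  unfold cf
  have : (Finsupp.equivFunOnFinite.symm ν : Fin n →₀ ℕ) =
      Finsupp.mapDomain σ (Finsupp.equivFunOnFinite.symm (ν ∘ σ)) := by
    ext j
    obtain ⟨i, rfl⟩ := σ.surjective j
    rw [Finsupp.mapDomain_apply σ.injective]
    simp
  rw [this, coeff_rename_mapDomain _ σ.injective]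

lemma sOp_eq {n k : ℕ} (f : P n) : sOp n k f = rename (sPerm n k) f := by
  unfold sOp sPerm
  split_ifs with h
  · rfl
  · simp

lemma cf_sOp {n k : ℕ} (f : P n) (ν : Fin n → ℕ) :
    cf (sOp n k f) ν = cf f (ν ∘ sPerm n k) := by
  rw [sOp_eq, coeff_rename_perm]

/-- sum of squares -/
def nsq {n : ℕ} (ν : Fin n → ℕ) : ℕ := ∑ i, ν i ^ 2

lemma nsq_comp {n : ℕ} (ν : Fin n → ℕ) (σ : Equiv.Perm (Fin n)) : nsq (ν ∘ σ) = nsq ν :=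
  Equiv.sum_comp σ (fun i => ν i ^ 2)

lemma nsq_add_single {n : ℕ} (β : Fin n → ℕ) (i : Fin n) :
    nsq (β + Pi.single i 1) = nsq β + 2 * β i + 1 := by
  unfold nsq
  rw [← Finset.add_sum_erase _ _ (mem_univ i), ← Finset.add_sum_erase univ (fun j => β j ^ 2) (mem_univ i)]
  have : ∑ x ∈ univ.erase i, (β + Pi.single i 1 : Fin n → ℕ) x ^ 2 = ∑ x ∈ univ.erase i, β x ^ 2 := by
    refine Finset.sum_congr rfl fun x hx => ?_
    simp [Pi.single_apply, (Finset.mem_erase.mp hx).1]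
  rw [this]
  simp
  ring

/-- all monomials have sum of squares at most `M` -/
def Bdd {n : ℕ} (M : ℕ) (h : P n) : Prop := ∀ ν, M < nsq ν → cf h ν = 0

section DL
variable {n : ℕ} {T : ℕ → P n →ₗ[K] P n} (hT : IsDL n t T)
variable {k : ℕ} (hk : k + 1 < n) (h : P n)

lemma exists_sub_single {n : ℕ} (ν : Fin n → ℕ) (i : Fin n) (d : ℕ) (h : ν i = d + 1) :
    ∃ β : Fin n → ℕ, ν = β + Pi.single i 1 ∧ β i = d := by
  refine ⟨Function.update ν i d, ?_, by simp⟩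
  ext j
  by_cases hj : j = i
  · subst hj; simp [h]
  · simp [hj]

include hT in
lemma DL_rec (β : Fin n → ℕ) :
    cf (T k h) (β + Pi.single ⟨k + 1, hk⟩ 1) -
        cf (T k h) (β + Pi.single ⟨k, Nat.lt_of_succ_lt hk⟩ 1) =
      t * cf (sOp n k h) (β + Pi.single ⟨k + 1, hk⟩ 1)
      - cf (sOp n k h) (β + Pi.single ⟨k, Nat.lt_of_succ_lt hk⟩ 1)
      + (1 - t) * cf h (β + Pi.single ⟨k, Nat.lt_of_succ_lt hk⟩ 1) := by
  have e := congrArg (fun f => cf f (β + Pi.single ⟨k, Nat.lt_of_succ_lt hk⟩ 1 +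
    Pi.single ⟨k + 1, hk⟩ 1)) (hT k hk h)
  have e1 : ∀ f : P n, cf (X ⟨k, Nat.lt_of_succ_lt hk⟩ * f)
      (β + Pi.single ⟨k, Nat.lt_of_succ_lt hk⟩ 1 + Pi.single ⟨k + 1, hk⟩ 1) =
      cf f (β + Pi.single ⟨k + 1, hk⟩ 1) := fun f =>
    cf_X_mul _ _ _ _ (by rw [add_right_comm])
  have e2 : ∀ f : P n, cf (X ⟨k + 1, hk⟩ * f)
      (β + Pi.single ⟨k, Nat.lt_of_succ_lt hk⟩ 1 + Pi.single ⟨k + 1, hk⟩ 1) =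
      cf f (β + Pi.single ⟨k, Nat.lt_of_succ_lt hk⟩ 1) := fun f =>
    cf_X_mul _ _ _ _ rfl
  simp only [sub_mul, mul_assoc, cf_add, cf_sub, cf_C_mul, e1, e2] at e
  linear_combination e

include hT in
lemma DL_right0 (β : Fin n → ℕ) (h0 : β ⟨k + 1, hk⟩ = 0) :
    cf (T k h) β = t * cf (sOp n k h) β := by
  have e := congrArg (fun f => cf f (β + Pi.single ⟨k, Nat.lt_of_succ_lt hk⟩ 1)) (hT k hk h)
  have e1 : ∀ f : P n, cf (X ⟨k, Nat.lt_of_succ_lt hk⟩ * f)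
      (β + Pi.single ⟨k, Nat.lt_of_succ_lt hk⟩ 1) = cf f β := fun f => cf_X_mul _ _ _ _ rfl
  have e2 : ∀ f : P n, cf (X ⟨k + 1, hk⟩ * f)
      (β + Pi.single ⟨k, Nat.lt_of_succ_lt hk⟩ 1) = 0 := fun f =>
    cf_X_mul_zero _ _ _ (by simp [h0])
  simp only [sub_mul, mul_assoc, cf_add, cf_sub, cf_C_mul, e1, e2] at e
  linear_combination e

include hT in
lemma DL_left0 (β : Fin n → ℕ) (h0 : β ⟨k, Nat.lt_of_succ_lt hk⟩ = 0) :
    cf (T k h) β = (t - 1) * cf h β + cf (sOp n k h) β := by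
  have e := congrArg (fun f => cf f (β + Pi.single ⟨k + 1, hk⟩ 1)) (hT k hk h)
  have e1 : ∀ f : P n, cf (X ⟨k, Nat.lt_of_succ_lt hk⟩ * f)
      (β + Pi.single ⟨k + 1, hk⟩ 1) = 0 := fun f =>
    cf_X_mul_zero _ _ _ (by simp [h0])
  have e2 : ∀ f : P n, cf (X ⟨k + 1, hk⟩ * f)
      (β + Pi.single ⟨k + 1, hk⟩ 1) = cf f β := fun f => cf_X_mul _ _ _ _ rfl
  simp only [sub_mul, mul_assoc, cf_add, cf_sub, cf_C_mul, e1, e2] at e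
  linear_combination -e

include hT hk in
lemma Bdd_T {M : ℕ} (hM : Bdd M h) : Bdd M (T k h) := by
  have hs : Bdd M (sOp n k h) := by
    intro ν hν
    rw [cf_sOp]
    exact hM _ (by rwa [nsq_comp])
  have ne : (⟨k, Nat.lt_of_succ_lt hk⟩ : Fin n) ≠ ⟨k + 1, hk⟩ := by simp
  have c1 : ∀ d, ∀ ν : Fin n → ℕ, ν ⟨k + 1, hk⟩ = d → d ≤ ν ⟨k, Nat.lt_of_succ_lt hk⟩ →
      M < nsq ν → cf (T k h) ν = 0 := by
    intro d
    induction d with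
    | zero =>
      intro ν h0 _ hν
      rw [DL_right0 hT hk h ν h0, hs ν hν, mul_zero]
    | succ d ih =>
      intro ν h0 hle hν
      obtain ⟨β, rfl, hβ⟩ := exists_sub_single ν _ d h0
      have hle' : d + 1 ≤ β ⟨k, Nat.lt_of_succ_lt hk⟩ := by
        simpa [Pi.single_apply, ne] using hle
      have h2 : M < nsq (β + Pi.single ⟨k, Nat.lt_of_succ_lt hk⟩ 1) := by
        rw [nsq_add_single] at hν ⊢
        omega
      have := DL_rec hT hk h β
      have hz := ih _ (by simp [ne.symm, hβ]) (by simp; omega) h2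
      rw [hs _ hν, hs _ h2, hM _ h2, hz] at this
      simpa using this
  have c2 : ∀ d, ∀ ν : Fin n → ℕ, ν ⟨k, Nat.lt_of_succ_lt hk⟩ = d → d ≤ ν ⟨k + 1, hk⟩ →
      M < nsq ν → cf (T k h) ν = 0 := by
    intro d
    induction d with
    | zero =>
      intro ν h0 _ hν
      rw [DL_left0 hT hk h ν h0, hs ν hν, hM ν hν]
      ring
    | succ d ih =>
      intro ν h0 hle hν
      obtain ⟨β, rfl, hβ⟩ := exists_sub_single ν _ d h0
      have hle' : d + 1 ≤ β ⟨k + 1, hk⟩ := by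
        simpa [Pi.single_apply, ne.symm] using hle
      have h2 : M < nsq (β + Pi.single ⟨k + 1, hk⟩ 1) := by
        rw [nsq_add_single] at hν ⊢
        omega
      have := DL_rec hT hk h β
      have hz := ih _ (by simp [ne, hβ]) (by simp; omega) h2
      rw [hs _ hν, hs _ h2, hM _ hν, hz] at this
      simpa using this
  intro ν hν
  rcases le_total (ν ⟨k + 1, hk⟩) (ν ⟨k, Nat.lt_of_succ_lt hk⟩) with hc | hc
  · exact c1 _ ν rfl hc hν
  · exact c2 _ ν rfl hc hν

include hT hk in
lemma cf_T_top (ν : Fin n → ℕ) (hM : Bdd (nsq ν) h)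
    (hν : ν ⟨k + 1, hk⟩ ≤ ν ⟨k, Nat.lt_of_succ_lt hk⟩) :
    cf (T k h) ν = t * cf h (ν ∘ sPerm n k) := by
  rw [← cf_sOp]
  have ne : (⟨k, Nat.lt_of_succ_lt hk⟩ : Fin n) ≠ ⟨k + 1, hk⟩ := by simp
  have hs : Bdd (nsq ν) (sOp n k h) := by
    intro ν hν
    rw [cf_sOp]
    exact hM _ (by rwa [nsq_comp])
  rcases hd : ν ⟨k + 1, hk⟩ with _ | d
  · exact DL_right0 hT hk h ν hd
  · obtain ⟨β, hβ, hβ'⟩ := exists_sub_single ν _ d hd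
    have hle' : d + 1 ≤ β ⟨k, Nat.lt_of_succ_lt hk⟩ := by
      rw [hd, hβ] at hν
      simpa [Pi.single_apply, ne] using hν
    have h2 : nsq ν < nsq (β + Pi.single ⟨k, Nat.lt_of_succ_lt hk⟩ 1) := by
      rw [hβ, nsq_add_single, nsq_add_single]
      omega
    have := DL_rec hT hk h β
    rw [hs _ h2, hM _ h2, Bdd_T hT hk h hM _ h2, ← hβ] at this
    simpa using this

end DL

end Stmt18

open Finset MvPolynomial
namespace Stmt18

lemma t_ne_zero : t ≠ 0 := by
  unfold t
  rw [Ne, FaithfulSMul.algebraMap_eq_zero_iff]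
  exact X_ne_zero _

section DL
variable {n : ℕ} {T : ℕ → P n →ₗ[K] P n} (hT : IsDL n t T)
variable {k : ℕ} (hk : k + 1 < n)

lemma X_sub_ne {n : ℕ} (i j : Fin n) (hij : i ≠ j) : (X i - X j : P n) ≠ 0 := by
  rw [sub_ne_zero]
  intro h
  exact hij (X_injective h)

lemma sOp_mul (f g : P n) : sOp n k (f * g) = sOp n k f * sOp n k g := by
  simp [sOp_eq]

lemma sOp_sOp (f : P n) : sOp n k (sOp n k f) = f := by
  simp only [sOp_eq]
  rw [rename_rename]
  have : ⇑(sPerm n k) ∘ ⇑(sPerm n k) = id := by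
    funext i; simp [sPerm_sPerm]
  rw [this, rename_id]; rfl

include hT hk in
lemma T_quad (f : P n) : T k (T k f) = (t - 1) • T k f + t • f := by
  set x : P n := X ⟨k, Nat.lt_of_succ_lt hk⟩ with hx
  set y : P n := X ⟨k + 1, hk⟩ with hy
  have hne : x - y ≠ 0 := X_sub_ne _ _ (by simp)
  have sx : sOp n k x = y := by rw [hx, sOp_eq, rename_X, sPerm_left hk]
  have sy : sOp n k y = x := by rw [hy, sOp_eq, rename_X, sPerm_right hk]
  have sC : ∀ c : K, sOp n k (C c) = C c := fun c => by rw [sOp_eq, rename_C]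
  have e1 := hT k hk f
  have e2 := hT k hk (T k f)
  rw [← hx, ← hy] at e1 e2
  have e3 := congrArg (sOp n k) e1
  simp only [sOp_mul, map_add, map_sub, sx, sy, sC, sOp_sOp] at e3
  apply mul_left_cancel₀ hne
  apply mul_left_cancel₀ hne
  simp only [smul_eq_C_mul, map_sub, map_one]
  generalize sOp n k (T k f) = a at *
  generalize T k (T k f) = b at *
  generalize T k f = c at *
  generalize sOp n k f = d at *
  generalize (C t : P n) = u at *
  linear_combination (x - y) * e2 - (u * x - y) * e3 + (x - u * x) * e1

include hT hk in
lemma sOp_eq_of_T (f : P n) (h : T k f = t • f) : sOp n k f = f := by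
  have e := hT k hk f
  rw [h, smul_eq_C_mul] at e
  have e2 : (C t * X (⟨k, Nat.lt_of_succ_lt hk⟩ : Fin n) - X ⟨k + 1, hk⟩) *
      (sOp n k f - f) = 0 := by linear_combination -e
  rcases mul_eq_zero.mp e2 with h1 | h1
  · exfalso
    have := congrArg (coeff (Finsupp.single (⟨k + 1, hk⟩ : Fin n) 1)) h1
    simp [coeff_C_mul, coeff_X, Finsupp.single_left_inj] at this
  · exact sub_eq_zero.mp h1

include hT hk in
lemma T_of_sOp (f : P n) (h : sOp n k f = f) : T k f = t • f := by
  have e := hT k hk f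
  rw [h, sub_self, mul_zero, add_zero] at e
  rw [smul_eq_C_mul]
  exact mul_left_cancel₀ (X_sub_ne _ _ (by simp)) e

end DL

lemma isSymmetric_of_sOp {n : ℕ} (f : P n) (h : ∀ k, k + 1 < n → sOp n k f = f) :
    f.IsSymmetric := by
  intro σ
  induction σ using perm_induction with
  | h1 =>
    have : (⇑(1 : Equiv.Perm (Fin n))) = id := rfl
    rw [this, rename_id]; rfl
  | hs σ k hk _ ih =>
    have h2 := h k hk
    rw [sOp_eq] at h2
    have : ⇑(σ * sPerm n k) = ⇑σ ∘ ⇑(sPerm n k) := rfl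
    rw [this, ← rename_rename, h2, ih]

lemma inversions_one (n : ℕ) : inversions (1 : Equiv.Perm (Fin n)) = 0 := by
  unfold inversions
  rw [Finset.card_eq_zero, Finset.filter_eq_empty_iff]
  rintro ⟨a, b⟩ _ ⟨h1, h2⟩
  exact absurd h1 (not_lt.mpr h2.le)

section Tw
variable {n : ℕ} {T : ℕ → P n →ₗ[K] P n} (hT : IsDL n t T)
variable {Tw : Equiv.Perm (Fin n) → P n →ₗ[K] P n} (hTw : IsTsigma n T Tw)

include hTw in
lemma Tw_right {k : ℕ} (hk : k + 1 < n) (σ : Equiv.Perm (Fin n))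
    (hσ : σ ⟨k, Nat.lt_of_succ_lt hk⟩ < σ ⟨k + 1, hk⟩) :
    Tw (σ * sPerm n k) = Tw σ * T k :=
  hTw.2 σ k hk (inversions_mul_sPerm hk σ hσ)

lemma inversions_sPerm_mul {k : ℕ} (hk : k + 1 < n) (σ : Equiv.Perm (Fin n))
    (hσ : σ⁻¹ ⟨k, Nat.lt_of_succ_lt hk⟩ < σ⁻¹ ⟨k + 1, hk⟩) :
    inversions (sPerm n k * σ) = inversions σ + 1 := by
  rw [← inversions_inv, mul_inv_rev, sPerm_inv, inversions_mul_sPerm hk _ hσ, inversions_inv]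

lemma inversions_mul_le {k : ℕ} (hk : k + 1 < n) (σ : Equiv.Perm (Fin n)) :
    inversions (σ * sPerm n k) ≤ inversions σ + 1 := by
  rcases lt_or_ge (σ ⟨k, Nat.lt_of_succ_lt hk⟩) (σ ⟨k + 1, hk⟩) with h1 | h1
  · exact (inversions_mul_sPerm hk σ h1).le
  · have h2 := inversions_mul_sPerm_desc hk σ (lt_of_le_of_ne h1 (by simp))
    omega

include hTw in
lemma Tw_left {k : ℕ} (hk : k + 1 < n) (σ : Equiv.Perm (Fin n)) :
    inversions (sPerm n k * σ) = inversions σ + 1 → Tw (sPerm n k * σ) = T k * Tw σ := by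
  induction σ using perm_induction with
  | h1 =>
    intro h
    have := hTw.2 1 k hk (by rw [one_mul]; rwa [mul_one] at h)
    rw [one_mul, hTw.1] at this
    rw [mul_one, this, hTw.1]; rfl
  | hs σ j hj hσ ih =>
    intro h
    have h1 := inversions_mul_sPerm hj σ hσ
    have h2 := inversions_mul_le hj (sPerm n k * σ)
    rw [← mul_assoc] at h ⊢
    have h3 : inversions (sPerm n k * σ) = inversions σ + 1 := by
      rcases lt_or_ge (σ⁻¹ ⟨k, Nat.lt_of_succ_lt hk⟩) (σ⁻¹ ⟨k + 1, hk⟩) with h4 | h4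
      · exact inversions_sPerm_mul hk σ h4
      · have h5 := inversions_mul_sPerm_desc hk σ⁻¹ (lt_of_le_of_ne h4 (by simp))
        rw [inversions_inv] at h5
        have h6 : inversions (σ⁻¹ * sPerm n k) = inversions (sPerm n k * σ) := by
          rw [← inversions_inv, mul_inv_rev, sPerm_inv, inv_inv]
        omega
    rw [hTw.2 _ j hj (by omega), ih h3, Tw_right hTw hj σ hσ]
    rfl

include hT hTw in
lemma T_Uplus {k : ℕ} (hk : k + 1 < n) : T k * Uplus n Tw = t • Uplus n Tw := by
  classical
  unfold Uplus
  let A : Finset (Equiv.Perm (Fin n)) :=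
    univ.filter fun σ => σ⁻¹ ⟨k, Nat.lt_of_succ_lt hk⟩ < σ⁻¹ ⟨k + 1, hk⟩
  have hsplit : ∀ F : Equiv.Perm (Fin n) → (P n →ₗ[K] P n),
      ∑ σ, F σ = ∑ σ ∈ A, (F σ + F (sPerm n k * σ)) := by
    intro F
    rw [Finset.sum_add_distrib, ← Finset.sum_filter_add_sum_filter_not univ
      (fun σ : Equiv.Perm (Fin n) => σ⁻¹ ⟨k, Nat.lt_of_succ_lt hk⟩ < σ⁻¹ ⟨k + 1, hk⟩)]
    congr 1
    refine Finset.sum_bij' (fun σ _ => sPerm n k * σ) (fun σ _ => sPerm n k * σ) ?_ ?_ ?_ ?_ ?_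
    · intro σ
      simp only [mem_filter, mem_univ, true_and, A, mul_inv_rev, sPerm_inv, Equiv.Perm.mul_apply,
        sPerm_left hk, sPerm_right hk]
      intro h
      exact lt_of_le_of_ne (not_lt.mp h) (by simp)
    · intro σ
      simp only [mem_filter, mem_univ, true_and, A, mul_inv_rev, sPerm_inv, Equiv.Perm.mul_apply,
        sPerm_left hk, sPerm_right hk]
      intro h
      exact not_lt.mpr h.le
    · intro σ _; simp [← mul_assoc, sPerm_mul_self]
    · intro σ _; simp [← mul_assoc, sPerm_mul_self]
    · intro σ _; simp [← mul_assoc, sPerm_mul_self]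
  rw [hsplit Tw, Finset.mul_sum, Finset.smul_sum]
  refine Finset.sum_congr rfl fun σ hσ => ?_
  simp only [A, mem_filter, mem_univ, true_and] at hσ
  rw [Tw_left hTw hk σ (inversions_sPerm_mul hk σ hσ)]
  refine LinearMap.ext fun f => ?_
  simp only [Module.End.mul_apply, LinearMap.add_apply, LinearMap.smul_apply, map_add,
    T_quad hT hk, smul_eq_C_mul, map_sub, map_one]
  ring

include hT hTw in
lemma Uplus_symm (f : P n) : (Uplus n Tw f).IsSymmetric := by
  apply isSymmetric_of_sOp
  intro k hk
  apply sOp_eq_of_T hT hk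
  exact LinearMap.congr_fun (T_Uplus hT hTw hk) f

include hT hTw in
lemma cf_Tw {κ : Fin n → ℕ} (hκ : Antitone κ) (σ : Equiv.Perm (Fin n)) :
    ∀ h : P n, Bdd (nsq κ) h → cf (Tw σ h) κ = t ^ inversions σ * cf h (κ ∘ σ) := by
  induction σ using perm_induction with
  | h1 =>
    intro h _
    rw [hTw.1, inversions_one]
    simp
  | hs σ k hk hσ ih =>
    intro h hh
    rw [Tw_right hTw hk σ hσ, inversions_mul_sPerm hk σ hσ, Module.End.mul_apply,
      ih _ (Bdd_T hT hk h hh), cf_T_top hT hk h (κ ∘ σ) (by rwa [nsq_comp]) (hκ hσ.le)]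
    rw [pow_succ]
    simp only [mul_assoc]
    rfl

end Tw
end Stmt18

open Finset MvPolynomial
namespace Stmt18

section Abstract
variable {R : Type*} [Ring R] [Algebra K R] (n : ℕ) (T : ℕ → R) (W : R)

noncomputable def aTi (k : ℕ) : R := t⁻¹ • (1 : R) - 1 + t⁻¹ • T k
noncomputable def aA (i : ℕ) : R := ((List.range' i (n - 1 - i)).map T).prod
noncomputable def aB (i : ℕ) : R := ((List.range i).map (aTi T)).prod
noncomputable def aY (i : ℕ) : R := (t ^ (n - 1 - i))⁻¹ • (aA n T i * (W * aB T i))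

/-- Hecke relations -/
structure Hecke : Prop where
  quad : ∀ k, k + 1 < n → T k * T k = (t - 1) • T k + t • (1 : R)
  braid : ∀ k, k + 2 < n → T k * T (k + 1) * T k = T (k + 1) * T k * T (k + 1)
  comm : ∀ i j, i + 1 < j → j + 1 < n → T i * T j = T j * T i
  shift : ∀ k, k + 2 < n → W * T (k + 1) = T k * W

variable {n T W} (H : Hecke n T W)

include H in
lemma T_aTi {k : ℕ} (hk : k + 1 < n) : T k * aTi T k = 1 := by
  have ht := t_ne_zero
  unfold aTi
  rw [mul_add, mul_sub, mul_smul_comm, mul_smul_comm, H.quad k hk, mul_one, smul_add, smul_smul,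
    smul_smul, inv_mul_cancel₀ ht, mul_sub, inv_mul_cancel₀ ht, sub_smul, mul_one]
  simp only [one_smul]
  abel

include H in
lemma aTi_T {k : ℕ} (hk : k + 1 < n) : aTi T k * T k = 1 := by
  rw [← T_aTi H hk]
  unfold aTi
  simp [add_mul, mul_add, sub_mul, mul_sub]

lemma aA_succ {i : ℕ} (hi : i + 1 < n) : aA n T i = T i * aA n T (i + 1) := by
  unfold aA
  have : n - 1 - i = (n - 1 - (i + 1)) + 1 := by omega
  rw [this, List.range'_succ, List.map_cons, List.prod_cons]

lemma aA_last {i : ℕ} (hi : n ≤ i + 1) : aA n T i = 1 := by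
  unfold aA
  have : n - 1 - i = 0 := by omega
  rw [this]; simp

lemma aB_zero : aB T 0 = 1 := by simp [aB]

lemma aB_succ (i : ℕ) : aB T (i + 1) = aB T i * aTi T i := by
  unfold aB
  rw [List.range_succ]; simp

lemma aTi_comm {i : ℕ} {x : R} (h : x * T i = T i * x) : x * aTi T i = aTi T i * x := by
  unfold aTi
  simp [add_mul, mul_add, sub_mul, mul_sub, h]

include H in
lemma T_aA_comm {j : ℕ} : ∀ d i, n = i + 1 + d → j + 1 < i → T j * aA n T i = aA n T i * T j := by
  intro d
  induction d with
  | zero => intro i hi _; rw [aA_last (by omega)]; simp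
  | succ d ih =>
    intro i hi hj
    rw [aA_succ (by omega), ← mul_assoc, H.comm j i hj (by omega), mul_assoc,
      ih (i + 1) (by omega) (by omega), mul_assoc]

include H in
lemma aA_T {k : ℕ} (hk : k + 2 < n) (d : ℕ) :
    ∀ i, i + d = k → aA n T i * T k = T (k + 1) * aA n T i := by
  induction d with
  | zero =>
    rintro i hi
    have hi' : i = k := by omega
    subst hi'
    rw [aA_succ (by omega), aA_succ (by omega), mul_assoc, mul_assoc,
      ← T_aA_comm H (n - (i + 1 + 1 + 1)) (i + 1 + 1) (by omega) (by omega),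
      ← mul_assoc, ← mul_assoc, H.braid i hk]
    simp only [mul_assoc]
  | succ d ih =>
    intro i hi
    rw [aA_succ (by omega), mul_assoc, ih (i + 1) (by omega), ← mul_assoc,
      H.comm i (k + 1) (by omega) (by omega), mul_assoc]

include H in
lemma T_aB_comm {k : ℕ} (hk : k + 1 < n) : ∀ i, i < k → T k * aB T i = aB T i * T k := by
  intro i
  induction i with
  | zero => intro _; rw [aB_zero]; simp
  | succ i ih =>
    intro hi
    rw [aB_succ, ← mul_assoc, ih (by omega), mul_assoc,
      aTi_comm (H.comm i k hi hk).symm, mul_assoc]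

include H in
lemma T_aB {k : ℕ} (d : ℕ) : ∀ i, i = k + 2 + d → i < n →
    T (k + 1) * aB T i = aB T i * T k := by
  induction d with
  | zero =>
    rintro i rfl hi
    rw [add_zero, aB_succ, aB_succ]
    have e : T (k + 1) * (aTi T k * aTi T (k + 1)) = aTi T k * aTi T (k + 1) * T k := by
      calc T (k + 1) * (aTi T k * aTi T (k + 1))
          = aTi T k * (aTi T (k + 1) * T (k + 1)) * T k * T (k + 1) *
              (aTi T k * aTi T (k + 1)) := by
            rw [aTi_T H (by omega), mul_one, aTi_T H (by omega), one_mul]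
        _ = aTi T k * aTi T (k + 1) * (T (k + 1) * T k * T (k + 1)) *
              (aTi T k * aTi T (k + 1)) := by simp only [mul_assoc]
        _ = aTi T k * aTi T (k + 1) * T k * T (k + 1) * (T k * aTi T k) * aTi T (k + 1) := by
            rw [← H.braid k (by omega)]; simp only [mul_assoc]
        _ = aTi T k * aTi T (k + 1) * T k := by
            rw [T_aTi H (by omega), mul_one, mul_assoc _ (T (k + 1)), T_aTi H (by omega), mul_one]
    rw [mul_assoc, ← mul_assoc, T_aB_comm H (by omega) k (by omega), mul_assoc, e]
    simp only [mul_assoc]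
  | succ d ih =>
    intro i hi hn
    obtain ⟨i', rfl⟩ : ∃ i', i = i' + 1 := ⟨i - 1, by omega⟩
    rw [aB_succ, ← mul_assoc, ih i' (by omega) (by omega), mul_assoc,
      aTi_comm (H.comm k i' (by omega) (by omega)), mul_assoc]

include H in
lemma aY_comm {k i : ℕ} (hk : k + 1 < n) (hi : i < n) (h1 : i ≠ k) (h2 : i ≠ k + 1) :
    T k * aY n T W i = aY n T W i * T k := by
  unfold aY
  rw [mul_smul_comm, smul_mul_assoc]
  congr 1
  rcases lt_or_ge i k with h | h
  · obtain ⟨k, rfl⟩ : ∃ k', k = k' + 1 := ⟨k - 1, by omega⟩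
    rw [← mul_assoc, ← aA_T H (by omega) (k - i) i (by omega), mul_assoc, ← mul_assoc (T k),
      ← H.shift k (by omega), mul_assoc, T_aB_comm H hk i h]
    simp only [mul_assoc]
  · rw [← mul_assoc, T_aA_comm H (n - (i + 1)) i (by omega) (by omega), mul_assoc,
      ← mul_assoc (T k), ← H.shift k (by omega), mul_assoc, T_aB H (i - (k + 2)) i (by omega) hi]
    simp only [mul_assoc]

include H in
lemma aY_rel {k : ℕ} (hk : k + 1 < n) :
    T k * aY n T W (k + 1) * T k = t • aY n T W k := by
  have ht := t_ne_zero
  unfold aY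
  rw [aB_succ, aA_succ hk, mul_smul_comm, smul_mul_assoc, smul_smul]
  have : t * (t ^ (n - 1 - k))⁻¹ = (t ^ (n - 1 - (k + 1)))⁻¹ := by
    have : n - 1 - k = (n - 1 - (k + 1)) + 1 := by omega
    rw [this, pow_succ]
    field_simp
  rw [this]
  congr 1
  simp only [mul_assoc]
  rw [aTi_T H hk, mul_one]

include H in
lemma aY_pair {k : ℕ} (hk : k + 1 < n) :
    T k * (aY n T W k + aY n T W (k + 1)) = (aY n T W k + aY n T W (k + 1)) * T k := by
  have ht := t_ne_zero
  have e : aY n T W k = t⁻¹ • (T k * aY n T W (k + 1) * T k) := by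
    rw [aY_rel H hk, smul_smul, inv_mul_cancel₀ ht, one_smul]
  rw [e]
  generalize aY n T W (k + 1) = y
  have q1 : T k * (T k * y * T k) = (t - 1) • (T k * y * T k) + t • (y * T k) := by
    rw [← mul_assoc, ← mul_assoc, H.quad k hk]
    simp only [add_mul, smul_mul_assoc, one_mul]
  have q2 : (T k * y * T k) * T k = (t - 1) • (T k * y * T k) + t • (T k * y) := by
    rw [mul_assoc, H.quad k hk]
    simp only [mul_add, mul_smul_comm, mul_one]
  rw [mul_add, add_mul, mul_smul_comm, smul_mul_assoc, q1, q2, smul_add, smul_add, smul_smul t⁻¹ t,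
    smul_smul t⁻¹ t, inv_mul_cancel₀ ht, one_smul, one_smul]
  abel

include H in
lemma aY_sum {k : ℕ} (hk : k + 1 < n) :
    T k * (∑ i : Fin n, aY n T W i) = (∑ i : Fin n, aY n T W i) * T k := by
  have hs : ∑ i : Fin n, aY n T W i = (aY n T W k + aY n T W (k + 1)) +
      ∑ i ∈ (univ.erase (⟨k, Nat.lt_of_succ_lt hk⟩ : Fin n)).erase ⟨k + 1, hk⟩, aY n T W i := by
    rw [add_assoc, Finset.add_sum_erase _ (fun i : Fin n => aY n T W i) (a := ⟨k + 1, hk⟩) (by simp),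
      Finset.add_sum_erase _ (fun i : Fin n => aY n T W i) (a := ⟨k, Nat.lt_of_succ_lt hk⟩) (by simp)]
  rw [hs, mul_add, add_mul, aY_pair H hk, Finset.mul_sum, Finset.sum_mul]
  congr 1
  refine Finset.sum_congr rfl fun i hi => ?_
  simp only [mem_erase, ne_eq, Fin.ext_iff, mem_univ, and_true] at hi
  exact aY_comm H hk i.2 hi.2 hi.1

end Abstract
end Stmt18

open Finset MvPolynomial
namespace Stmt18

lemma sPerm_val {n k : ℕ} (h : k + 1 < n) (i : Fin n) :
    (sPerm n k i).val = if i.val = k then k + 1 else if i.val = k + 1 then k else i.val := by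
  rw [sPerm_eq h]
  simp only [Equiv.swap_apply_def, Fin.ext_iff]
  split_ifs <;> simp_all

lemma sPerm_braid {n k : ℕ} (h : k + 2 < n) :
    sPerm n k * sPerm n (k + 1) * sPerm n k = sPerm n (k + 1) * sPerm n k * sPerm n (k + 1) := by
  ext i
  simp only [Equiv.Perm.mul_apply, sPerm_val (show k + 1 < n by omega),
    sPerm_val (show k + 1 + 1 < n by omega)]
  split_ifs <;> omega

lemma sPerm_comm {n i j : ℕ} (hij : i + 1 < j) (h : j + 1 < n) :
    sPerm n i * sPerm n j = sPerm n j * sPerm n i := by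
  ext l
  simp only [Equiv.Perm.mul_apply, sPerm_val (show i + 1 < n by omega), sPerm_val h]
  split_ifs <;> omega

section Tw
variable {n : ℕ} {T : ℕ → P n →ₗ[K] P n} (hT : IsDL n t T)
variable {Tw : Equiv.Perm (Fin n) → P n →ₗ[K] P n} (hTw : IsTsigma n T Tw)

include hTw in
lemma Tw_one : Tw 1 = 1 := hTw.1

include hTw in
lemma Tw_s {k : ℕ} (hk : k + 1 < n) : Tw (sPerm n k) = T k := by
  have := Tw_right hTw hk 1 (by simp [Fin.lt_def])
  rwa [one_mul, Tw_one hTw, one_mul] at this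

include hTw in
lemma T_braid {k : ℕ} (hk : k + 2 < n) :
    T k * T (k + 1) * T k = T (k + 1) * T k * T (k + 1) := by
  have hk1 : k + 1 < n := by omega
  have hk2 : k + 1 + 1 < n := by omega
  have e1 := Tw_right hTw hk1 (sPerm n k * sPerm n (k + 1)) (by
    simp only [Fin.lt_def, Equiv.Perm.mul_apply, sPerm_val hk1, sPerm_val hk2]
    split_ifs <;> omega)
  have e2 := Tw_right hTw hk2 (sPerm n k) (by
    simp only [Fin.lt_def, sPerm_val hk1]
    split_ifs <;> omega)
  have e3 := Tw_right hTw hk2 (sPerm n (k + 1) * sPerm n k) (by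
    simp only [Fin.lt_def, Equiv.Perm.mul_apply, sPerm_val hk1, sPerm_val hk2]
    split_ifs <;> omega)
  have e4 := Tw_right hTw hk1 (sPerm n (k + 1)) (by
    simp only [Fin.lt_def, sPerm_val hk2]
    split_ifs <;> omega)
  rw [e2, Tw_s hTw hk1] at e1
  rw [e4, Tw_s hTw hk2] at e3
  rw [← e1, ← e3, sPerm_braid hk]

include hTw in
lemma T_comm {i j : ℕ} (hij : i + 1 < j) (hj : j + 1 < n) : T i * T j = T j * T i := by
  have hi : i + 1 < n := by omega
  have e1 := Tw_right hTw hj (sPerm n i) (by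
    simp only [Fin.lt_def, sPerm_val hi]
    split_ifs <;> omega)
  have e2 := Tw_right hTw hi (sPerm n j) (by
    simp only [Fin.lt_def, sPerm_val hj]
    split_ifs <;> omega)
  rw [Tw_s hTw hi] at e1
  rw [Tw_s hTw hj] at e2
  rw [← e1, ← e2, sPerm_comm hij hj]

end Tw

/-- ω as an algebra homomorphism -/
lemma omega_partial (n : ℕ) (hn : 0 < n) (m : ℕ) (hm : m + 1 ≤ n) :
    ∃ φ : P n →ₐ[K] P n,
      (List.range m).foldl (fun acc k => sOp n k ∘ₗ acc) (tauOp n q) = φ.toLinearMap ∧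
      ∀ j : Fin n, φ (X j) = if j.val = 0 then C q * X ⟨m, by omega⟩ else
        if j.val ≤ m then X ⟨j.val - 1, by omega⟩ else X j := by
  induction m with
  | zero =>
    refine ⟨aeval (fun j : Fin n => if (j : ℕ) = 0 then C q * X j else X j), rfl, fun j => ?_⟩
    rw [aeval_X]
    split_ifs with h1 h2
    · have : j = ⟨0, by omega⟩ := Fin.ext h1
      subst this; rfl
    · omega
    · rfl
  | succ m ih =>
    obtain ⟨φ, h1, h2⟩ := ih (by omega)
    refine ⟨(rename (sPerm n m)).comp φ, ?_, fun j => ?_⟩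
    · rw [List.range_succ, List.foldl_append, h1]
      refine LinearMap.ext fun f => ?_
      simp [sOp_eq]
    · rw [AlgHom.comp_apply, h2 j]
      have hm1 : m + 1 < n := by omega
      split_ifs with h3 h4 h5 h6
      · rw [map_mul, rename_C, rename_X, sPerm_left]
      · rw [rename_X]
        congr 1; ext; rw [sPerm_val hm1]; simp; split_ifs <;> omega
      · omega
      · rw [rename_X]
        congr 1; ext; rw [sPerm_val hm1]; simp; split_ifs <;> omega
      · rw [rename_X]
        congr 1; ext; rw [sPerm_val hm1]; split_ifs <;> omega

lemma omega_hom (n : ℕ) (hn : 0 < n) :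
    ∃ φ : P n →ₐ[K] P n, omegaOp n q = φ.toLinearMap ∧
      ∀ j : Fin n, φ (X j) = if j.val = 0 then C q * X ⟨n - 1, by omega⟩ else
        X ⟨j.val - 1, by omega⟩ := by
  obtain ⟨φ, h1, h2⟩ := omega_partial n hn (n - 1) (by omega)
  refine ⟨φ, h1, fun j => ?_⟩
  rw [h2 j]
  split_ifs with h3 h4
  · rfl
  · rfl
  · omega

section
variable {n : ℕ} (hn : 0 < n) {T : ℕ → P n →ₗ[K] P n} (hT : IsDL n t T)
variable {Tw : Equiv.Perm (Fin n) → P n →ₗ[K] P n} (hTw : IsTsigma n T Tw)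

include hn hT in
lemma omega_T {k : ℕ} (hk : k + 2 < n) : omegaOp n q * T (k + 1) = T k * omegaOp n q := by
  obtain ⟨φ, h1, h2⟩ := omega_hom n hn
  have hk1 : k + 1 < n := by omega
  have hk2 : k + 1 + 1 < n := by omega
  have hs : ∀ f, φ (sOp n (k + 1) f) = sOp n k (φ f) := by
    intro f
    simp only [sOp_eq]
    have : φ.comp (rename (sPerm n (k + 1))) = (rename (sPerm n k)).comp φ := by
      apply algHom_ext
      intro j
      rw [AlgHom.comp_apply, AlgHom.comp_apply, rename_X, h2, h2]
      simp only [sPerm_val hk2]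
      by_cases hj : j.val = 0
      · rw [if_pos (by split_ifs <;> omega), if_pos hj, map_mul, rename_C, rename_X]
        congr 2; ext; rw [sPerm_val hk1]; simp; split_ifs <;> omega
      · have hc : ¬ (if j.val = k + 1 then k + 1 + 1 else if j.val = k + 1 + 1 then k + 1
            else j.val) = 0 := by
          intro hc
          split_ifs at hc
          omega
        rw [if_neg hc, if_neg hj, rename_X]
        congr 1; ext; rw [sPerm_val hk1]; simp; split_ifs <;> omega
    exact congrArg (fun ψ => ψ f) this
  refine LinearMap.ext fun f => ?_
  rw [Module.End.mul_apply, Module.End.mul_apply, h1]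
  simp only [AlgHom.toLinearMap_apply]
  apply mul_left_cancel₀ (X_sub_ne (⟨k, Nat.lt_of_succ_lt hk1⟩ : Fin n) ⟨k + 1, hk1⟩ (by simp))
  rw [hT k hk1]
  have e := congrArg φ (hT (k + 1) hk2 f)
  have hC : ∀ c : K, φ (C c) = C c := fun c => φ.commutes c
  simp only [map_mul, map_add, map_sub, hC, h2, hs] at e
  simpa using e

include hn hT hTw in
lemma hecke : Hecke n T (omegaOp n q) where
  quad k hk := by
    refine LinearMap.ext fun f => ?_
    rw [Module.End.mul_apply, T_quad hT hk]
    simp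
  braid k hk := T_braid hTw hk
  comm i j hij hj := T_comm hTw hij hj
  shift k hk := omega_T hn hT hk

lemma Yop_eq (i : Fin n) : Yop n q t T i = aY n T (omegaOp n q) i := by
  unfold Yop aY aA aB
  have h1 : ∀ l : List ℕ, l.foldr (fun k acc => T k ∘ₗ acc) LinearMap.id = (l.map T).prod := by
    intro l
    induction l with
    | nil => rfl
    | cons a l ih => rw [List.foldr_cons, ih, List.map_cons, List.prod_cons]; rfl
  have h2 : ∀ l : List ℕ, l.foldr (fun k acc => Tinv n t T k ∘ₗ acc) LinearMap.id =
      (l.map (aTi T)).prod := by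
    intro l
    induction l with
    | nil => rfl
    | cons a l ih => rw [List.foldr_cons, ih, List.map_cons, List.prod_cons]; rfl
  rw [h1, h2]
  rfl

include hn hT hTw in
lemma D_T {k : ℕ} (hk : k + 1 < n) :
    T k * (∑ i : Fin n, Yop n q t T i) = (∑ i : Fin n, Yop n q t T i) * T k := by
  simp only [Yop_eq]
  exact aY_sum (hecke hn hT hTw) hk

include hn hT hTw in
lemma D_Uplus :
    Uplus n Tw * (∑ i : Fin n, Yop n q t T i) = (∑ i : Fin n, Yop n q t T i) * Uplus n Tw := by
  have h : ∀ σ, Tw σ * (∑ i : Fin n, Yop n q t T i) = (∑ i : Fin n, Yop n q t T i) * Tw σ := by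
    intro σ
    induction σ using perm_induction with
    | h1 => rw [Tw_one hTw, one_mul, mul_one]
    | hs σ k hk hσ ih =>
      rw [Tw_right hTw hk σ hσ, mul_assoc, D_T hn hT hTw hk, ← mul_assoc, ih, mul_assoc]
  unfold Uplus
  rw [Finset.sum_mul, Finset.mul_sum]
  exact Finset.sum_congr rfl fun σ _ => h σ

end
end Stmt18

open Finset MvPolynomial
namespace Stmt18

lemma cf_tau {n : ℕ} (hn : 0 < n) (g : P n) (ν : Fin n → ℕ) :
    cf (tauOp n q g) ν = q ^ ν ⟨0, hn⟩ * cf g ν := by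
  induction g using MvPolynomial.induction_on' with
  | add f g hf hg => rw [map_add, cf_add, cf_add, hf, hg, mul_add]
  | monomial m a =>
    have h1 : tauOp n q (monomial m a) = monomial m (q ^ m ⟨0, hn⟩ * a) := by
      unfold tauOp
      rw [AlgHom.toLinearMap_apply, aeval_monomial]
      have : ∀ j : Fin n, (if (j : ℕ) = 0 then C q * X j else X j : P n) =
          C (if j = ⟨0, hn⟩ then q else 1) * X j := by
        intro j
        by_cases hj : j.val = 0
        · simp [hj, Fin.ext_iff]
        · simp [hj, Fin.ext_iff]
      simp only [this, mul_pow]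
      rw [Finsupp.prod_mul, monomial_eq, C_mul]
      have h2 : (m.prod fun (a : Fin n) b => (C (if a = ⟨0, hn⟩ then q else 1) : P n) ^ b) =
          C (q ^ m ⟨0, hn⟩) := by
        rw [Finsupp.prod_fintype _ _ (by simp)]
        rw [Finset.prod_eq_single ⟨0, hn⟩]
        · simp
        · intro b _ hb; simp [hb]
        · simp
      rw [h2]
      change C a * _ = _
      ring
    rw [h1]
    unfold cf
    simp only [coeff_monomial]
    split_ifs with h
    · rw [h]; rfl
    · simp

lemma omega_rename {n : ℕ} (hn : 0 < n) (m : ℕ) (hm : m < n) :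
    ∃ ρ : Equiv.Perm (Fin n), ρ ⟨0, hn⟩ = ⟨m, hm⟩ ∧
      ∀ f, (List.range m).foldl (fun acc k => sOp n k ∘ₗ acc) (tauOp n q) f =
        rename ρ (tauOp n q f) := by
  induction m with
  | zero =>
    refine ⟨1, rfl, fun f => ?_⟩
    have : (⇑(1 : Equiv.Perm (Fin n))) = id := rfl
    rw [this, rename_id]; rfl
  | succ m ih =>
    obtain ⟨ρ, h1, h2⟩ := ih (by omega)
    refine ⟨sPerm n m * ρ, ?_, fun f => ?_⟩
    · rw [Equiv.Perm.mul_apply, h1, sPerm_left]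
    · rw [List.range_succ, List.foldl_append]
      simp only [List.foldl_cons, List.foldl_nil, LinearMap.comp_apply]
      rw [h2, sOp_eq, rename_rename]
      rfl

lemma cf_omega {n : ℕ} (hn : 0 < n) :
    ∃ ρ : Equiv.Perm (Fin n), ∀ (f : P n) (ν : Fin n → ℕ),
      cf (omegaOp n q f) ν = q ^ ν ⟨n - 1, by omega⟩ * cf f (ν ∘ ρ) := by
  obtain ⟨ρ, h1, h2⟩ := omega_rename hn (n - 1) (by omega)
  refine ⟨ρ, fun f ν => ?_⟩
  unfold omegaOp
  rw [h2, coeff_rename_perm, cf_tau hn, Function.comp_apply, h1]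

lemma cf_symm {n : ℕ} {g : P n} (hg : g.IsSymmetric) (σ : Equiv.Perm (Fin n)) (ν : Fin n → ℕ) :
    cf g (ν ∘ σ) = cf g ν := by
  rw [← coeff_rename_perm, hg σ]

section
variable {n : ℕ} (hn : 0 < n) {T : ℕ → P n →ₗ[K] P n} (hT : IsDL n t T)

include hT in
lemma Bdd_aA {M : ℕ} {h : P n} (hM : Bdd M h) (d : ℕ) :
    ∀ i, i + d + 1 = n → Bdd M (aA n T i h) := by
  induction d with
  | zero => intro i hi; rw [aA_last (by omega)]; exact hM
  | succ d ih =>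
    intro i hi
    rw [aA_succ (by omega), Module.End.mul_apply]
    exact Bdd_T hT (by omega) _ (ih (i + 1) (by omega))

include hT in
lemma cf_aA (h : P n) (d : ℕ) :
    ∀ i, ∀ hi : i + d + 1 = n, ∃ ρ : Equiv.Perm (Fin n), ρ ⟨n - 1, by omega⟩ = ⟨i, by omega⟩ ∧
      ∀ ν : Fin n → ℕ, Bdd (nsq ν) h → (∀ j : Fin n, i ≤ j.val → ν j ≤ ν ⟨i, by omega⟩) →
      cf (aA n T i h) ν = t ^ (n - 1 - i) * cf h (ν ∘ ρ) := by
  induction d with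
  | zero =>
    intro i hi
    refine ⟨1, ?_, fun ν _ _ => ?_⟩
    · ext; simp; omega
    · rw [aA_last (by omega)]
      have : n - 1 - i = 0 := by omega
      rw [this]
      simp
  | succ d ih =>
    intro i hi
    obtain ⟨ρ, h1, h2⟩ := ih (i + 1) (by omega)
    have hk : i + 1 < n := by omega
    refine ⟨sPerm n i * ρ, ?_, fun ν hb hν => ?_⟩
    · rw [Equiv.Perm.mul_apply, h1, sPerm_right]
    · rw [aA_succ hk, Module.End.mul_apply,
        cf_T_top hT hk _ ν (Bdd_aA hT hb d (i + 1) (by omega)) (hν _ (by simp)), h2]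
      · have : n - 1 - i = (n - 1 - (i + 1)) + 1 := by omega
        rw [this, pow_succ, Equiv.Perm.coe_mul, Function.comp_assoc]
        ring
      · rwa [nsq_comp]
      · intro j hj
        simp only [Function.comp_apply, sPerm_right hk]
        apply hν
        rw [sPerm_val hk]
        split_ifs <;> omega

include hT in
lemma aB_symm {g : P n} (hg : g.IsSymmetric) (i : ℕ) (hi : i < n) :
    aB T i g = (t ^ i)⁻¹ • g := by
  induction i with
  | zero => rw [aB_zero]; simp
  | succ i ih =>
    have e : aTi T i g = t⁻¹ • g := by
      have := T_of_sOp hT (by omega : i + 1 < n) g (by rw [sOp_eq]; exact hg _)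
      unfold aTi
      simp only [LinearMap.add_apply, LinearMap.sub_apply, LinearMap.smul_apply, this,
        Module.End.one_apply, smul_smul, inv_mul_cancel₀ t_ne_zero, one_smul]
      abel
    rw [aB_succ, Module.End.mul_apply, e, map_smul, ih (by omega), smul_smul, pow_succ, mul_inv,
      mul_comm]

include hn hT in
lemma cf_Yop {g : P n} (hg : g.IsSymmetric) {μ : Fin n → ℕ} (hμ : Antitone μ)
    (hb : Bdd (nsq μ) g) (i : Fin n) :
    cf (Yop n q t T i g) μ = q ^ μ i * (t ^ (i : ℕ))⁻¹ * cf g μ := by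
  obtain ⟨ρ, h1⟩ := cf_omega hn
  obtain ⟨ρ', h2, h3⟩ := cf_aA hn hT (omegaOp n q (aB T i g)) (n - 1 - i) i (by omega)
  have ht := t_ne_zero
  rw [Yop_eq]
  unfold aY
  rw [LinearMap.smul_apply, cf_smul, Module.End.mul_apply, Module.End.mul_apply, h3, h1,
    aB_symm hT hg i i.2, cf_smul, Function.comp_apply, h2, cf_symm hg, cf_symm hg]
  · field_simp
  · intro ν hν
    rw [h1, aB_symm hT hg i i.2, cf_smul, hb _ (by rwa [nsq_comp])]
    ring
  · intro j hj
    exact hμ hj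

end

lemma eig_inj {n : ℕ} (μ κ : Fin n → ℕ)
    (h : ∑ i : Fin n, q ^ μ i * (t ^ (i : ℕ))⁻¹ = ∑ i : Fin n, q ^ κ i * (t ^ (i : ℕ))⁻¹) :
    μ = κ := by
  have ht := t_ne_zero
  have key : ∀ ν : Fin n → ℕ, t ^ n * ∑ i : Fin n, q ^ ν i * (t ^ (i : ℕ))⁻¹ =
      algebraMap (MvPolynomial (Fin 2) ℚ) K (∑ i : Fin n,
        monomial (Finsupp.single 0 (ν i) + Finsupp.single 1 (n - (i : ℕ))) 1) := by
    intro ν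
    rw [Finset.mul_sum, map_sum]
    refine Finset.sum_congr rfl fun i _ => ?_
    have e : (monomial (Finsupp.single 0 (ν i) + Finsupp.single 1 (n - (i : ℕ))) 1 :
        MvPolynomial (Fin 2) ℚ) = X 0 ^ ν i * X 1 ^ (n - (i : ℕ)) := by
      rw [X_pow_eq_monomial, X_pow_eq_monomial, monomial_mul, one_mul]
    rw [e, map_mul, map_pow, map_pow]
    change _ = q ^ ν i * t ^ (n - (i : ℕ))
    have : t ^ n = t ^ (n - (i : ℕ)) * t ^ (i : ℕ) := by
      rw [← pow_add]; congr 1; omega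
    rw [this]
    field_simp
  have h2 := congrArg (t ^ n * ·) h
  simp only [key] at h2
  have h3 := FaithfulSMul.algebraMap_injective (MvPolynomial (Fin 2) ℚ) K h2
  funext i
  have cm : ∀ ν : Fin n → ℕ, coeff (Finsupp.single 0 (κ i) + Finsupp.single 1 (n - (i : ℕ)))
      (∑ i : Fin n, monomial (Finsupp.single 0 (ν i) + Finsupp.single 1 (n - (i : ℕ))) 1 :
        MvPolynomial (Fin 2) ℚ) = if ν i = κ i then 1 else 0 := by
    intro ν
    rw [coeff_sum, Finset.sum_eq_single i]
    · rw [coeff_monomial]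
      simp [(Finsupp.single_injective (M := ℕ) (0 : Fin 2)).eq_iff]
    · intro j _ hj
      rw [coeff_monomial, if_neg]
      intro he
      have := congrArg (fun f => f 1) he
      simp at this
      exact hj (Fin.ext (by omega))
    · simp
  have h4 := congrArg (coeff (Finsupp.single 0 (κ i) + Finsupp.single 1 (n - (i : ℕ)))) h3
  rw [cm, cm] at h4
  by_contra hne
  simp [hne] at h4

end Stmt18

open Finset MvPolynomial
namespace Stmt18

lemma t_ne_one : t ≠ 1 := by
  unfold t
  rw [Ne, FaithfulSMul.algebraMap_eq_one_iff]
  intro h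
  have := congrArg (coeff (Finsupp.single (1 : Fin 2) 1)) h
  simp [coeff_one, eq_comm] at this

lemma sortAsc_mono {n : ℕ} (η : Fin n → ℕ) : Monotone (sortAsc n η) := Tuple.monotone_sort η

lemma sortDesc_eq_asc {n : ℕ} (η : Fin n → ℕ) :
    sortDesc n η = sortAsc n η ∘ Fin.revPerm := rfl

lemma sortDesc_anti {n : ℕ} (η : Fin n → ℕ) : Antitone (sortDesc n η) := by
  intro i j hij
  exact sortAsc_mono η (Fin.rev_le_rev.mpr hij)

lemma sortDesc_comp {n : ℕ} (η : Fin n → ℕ) :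
    ∃ σ : Equiv.Perm (Fin n), sortDesc n η = η ∘ σ :=
  ⟨Tuple.sort η * Fin.revPerm, rfl⟩

lemma eq_sortDesc {n : ℕ} (η : Fin n → ℕ) (σ : Equiv.Perm (Fin n)) (h : Antitone (η ∘ σ)) :
    η ∘ σ = sortDesc n η := by
  have h1 : Monotone (η ∘ ⇑(σ * Fin.revPerm : Equiv.Perm (Fin n))) := by
    intro i j hij
    exact h (Fin.rev_le_rev.mpr hij)
  have h2 := Tuple.unique_monotone h1 (Tuple.monotone_sort η)
  funext i
  have := congrFun h2 i.rev
  simp only [Function.comp_apply, Equiv.Perm.mul_apply, Fin.revPerm_apply, Fin.rev_rev] at this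
  exact this

lemma abel_nonneg {n : ℕ} (a : Fin n → ℕ) (ha : Antitone a) (d : Fin n → ℤ)
    (hd : ∀ p, 0 ≤ ∑ i ∈ univ.filter (· ≤ p), d i) : 0 ≤ ∑ i, (a i : ℤ) * d i := by
  set M := ∑ i, a i
  have hM : ∀ i, a i ≤ M := fun i =>
    Finset.single_le_sum (f := a) (fun _ _ => Nat.zero_le _) (mem_univ i)
  have h1 : ∀ i, (a i : ℤ) * d i = ∑ c ∈ range M, if c < a i then d i else 0 := by
    intro i
    rw [← Finset.sum_filter]
    have : (range M).filter (· < a i) = range (a i) := by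
      ext c; simp; intro h; exact h.trans_le (hM i)
    rw [this]; simp
  simp only [h1]
  rw [Finset.sum_comm]
  refine Finset.sum_nonneg fun c _ => ?_
  rw [← Finset.sum_filter]
  by_cases hne : (univ.filter fun i => c < a i).Nonempty
  · set p := (univ.filter fun i => c < a i).max' hne with hp
    have : (univ.filter fun i => c < a i) = univ.filter (· ≤ p) := by
      ext i
      constructor
      · intro hi
        simp only [mem_filter, mem_univ, true_and]
        exact Finset.le_max' _ _ hi
      · intro hi
        have h2 := Finset.max'_mem _ hne
        rw [← hp] at h2
        simp only [mem_filter, mem_univ, true_and] at hi h2 ⊢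
        exact h2.trans_le (ha hi)
    rw [this]
    exact hd p
  · rw [Finset.not_nonempty_iff_eq_empty.mp hne]; simp

lemma nsq_cast {n : ℕ} (ν : Fin n → ℕ) : (nsq ν : ℤ) = ∑ i, (ν i : ℤ) ^ 2 := by
  simp [nsq]

lemma nsq_lt_of_domLT {n : ℕ} (ν κ : Fin n → ℕ) (hν : Antitone ν) (h : domLT n ν κ) :
    nsq ν < nsq κ := by
  obtain ⟨⟨_, h2⟩, h3⟩ := h
  have h4 := abel_nonneg ν hν (fun i => (κ i : ℤ) - ν i) (fun p => by
    rw [Finset.sum_sub_distrib, sub_nonneg]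
    exact_mod_cast h2 p)
  have h5 : 0 < ∑ i, ((κ i : ℤ) - ν i) ^ 2 := by
    obtain ⟨i, hi⟩ := Function.ne_iff.mp h3
    apply Finset.sum_pos' (fun i _ => sq_nonneg _)
    refine ⟨i, mem_univ i, ?_⟩
    have : (κ i : ℤ) - ν i ≠ 0 := by omega
    positivity
  zify
  rw [nsq_cast, nsq_cast]
  have : ∑ i, (κ i : ℤ) ^ 2 = ∑ i, (ν i : ℤ) ^ 2 + 2 * ∑ i, (ν i : ℤ) * ((κ i : ℤ) - ν i) +
      ∑ i, ((κ i : ℤ) - ν i) ^ 2 := by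
    rw [Finset.mul_sum, ← Finset.sum_add_distrib, ← Finset.sum_add_distrib]
    exact Finset.sum_congr rfl fun i _ => by ring
  linarith

lemma eq_of_domLE {n : ℕ} (ν α : Fin n → ℕ) (hα : Monotone α) (h : domLE n ν α)
    (hn : nsq ν = nsq α) : ν = α := by
  obtain ⟨h1, h2⟩ := h
  have hM : ∀ i, α i ≤ ∑ i, α i := fun i =>
    Finset.single_le_sum (f := α) (fun _ _ => Nat.zero_le _) (mem_univ i)
  have h4 := abel_nonneg (fun i => ∑ i, α i - α i) (fun i j hij => Nat.sub_le_sub_left (hα hij) _)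
    (fun i => (α i : ℤ) - ν i) (fun p => by
    rw [Finset.sum_sub_distrib, sub_nonneg]
    exact_mod_cast h2 p)
  have h1' : ∑ i, ((α i : ℤ) - ν i) = 0 := by
    rw [Finset.sum_sub_distrib, sub_eq_zero]
    exact_mod_cast h1.symm
  have h5 : ∑ i, ((∑ i, α i - α i : ℕ) : ℤ) * ((α i : ℤ) - ν i) =
      - ∑ i, (α i : ℤ) * ((α i : ℤ) - ν i) := by
    have : ∀ i, ((∑ i, α i - α i : ℕ) : ℤ) * ((α i : ℤ) - ν i) =
        ((∑ i, α i : ℕ) : ℤ) * ((α i : ℤ) - ν i) - (α i : ℤ) * ((α i : ℤ) - ν i) := by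
      intro i
      rw [Nat.cast_sub (hM i)]
      ring
    simp only [this]
    rw [Finset.sum_sub_distrib, ← Finset.mul_sum, h1']
    ring
  have h6 : ∑ i, ((α i : ℤ) - ν i) ^ 2 = 2 * ∑ i, (α i : ℤ) * ((α i : ℤ) - ν i) +
      (∑ i, (ν i : ℤ) ^ 2 - ∑ i, (α i : ℤ) ^ 2) := by
    rw [Finset.mul_sum, ← Finset.sum_sub_distrib, ← Finset.sum_add_distrib]
    exact Finset.sum_congr rfl fun i _ => by ring
  rw [← nsq_cast, ← nsq_cast, hn] at h6
  have h7 : ∑ i, ((α i : ℤ) - ν i) ^ 2 ≤ 0 := by linarith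
  have h8 := (Finset.sum_eq_zero_iff_of_nonneg (fun i _ => sq_nonneg ((α i : ℤ) - ν i))).mp
    (le_antisymm h7 (Finset.sum_nonneg fun i _ => sq_nonneg _))
  funext i
  have := h8 i (mem_univ i)
  have := pow_eq_zero_iff (two_ne_zero) |>.mp this
  omega

/-- the eigenvalues of `E_{η^R}` and `P_{η^+}` agree -/
lemma eig_sum {n : ℕ} (η : Fin n → ℕ) :
    ∑ i : Fin n, q ^ sortAsc n η i / t ^ legCo n (sortAsc n η) i =
      ∑ i : Fin n, q ^ sortDesc n η i * (t ^ (i : ℕ))⁻¹ := by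
  set α := sortAsc n η with hα
  let pr : Fin n → Fin n → Prop := fun k i => (k < i ∧ α i ≤ α k) ∨ (i < k ∧ α i < α k)
  classical
  have hleg : ∀ i, legCo n α i = (univ.filter fun k => pr k i).card := by
    intro i
    unfold legCo
    rw [← Finset.card_union_of_disjoint, ← Finset.filter_or]
    rw [Finset.disjoint_filter]
    rintro k _ ⟨h1, _⟩ ⟨h2, _⟩
    exact absurd h1 (not_lt.mpr h2.le)
  have hpr_lt : ∀ i j, pr j i → legCo n α j < legCo n α i := by
    intro i j h
    rw [hleg, hleg]
    apply Finset.card_lt_card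
    rw [Finset.ssubset_iff_of_subset]
    · refine ⟨j, by simpa using h, by simp [pr]⟩
    · intro k
      simp only [mem_filter, mem_univ, true_and, pr, Fin.lt_def] at h ⊢
      intro hk
      by_cases hki : k = i
      · subst hki
        omega
      · rw [Fin.ext_iff] at hki
        omega
  have hlt : ∀ i, legCo n α i < n := by
    intro i
    rw [hleg]
    calc _ < (univ : Finset (Fin n)).card := by
          apply Finset.card_lt_card
          rw [Finset.ssubset_iff_of_subset (Finset.subset_univ _)]
          exact ⟨i, mem_univ i, by simp [pr]⟩
      _ = n := by simp
  let r : Fin n → Fin n := fun i => ⟨legCo n α i, hlt i⟩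
  have hinj : Function.Injective r := by
    intro i j hij
    have hij' : legCo n α i = legCo n α j := congrArg Fin.val hij
    by_contra hne
    have : pr i j ∨ pr j i := by
      simp only [pr, Fin.lt_def]
      rw [Fin.ext_iff] at hne
      omega
    rcases this with h | h
    · have := hpr_lt _ _ h; omega
    · have := hpr_lt _ _ h; omega
  let π : Equiv.Perm (Fin n) := Equiv.ofBijective r (Finite.injective_iff_bijective.mp hinj)
  have hanti : Antitone (α ∘ π.symm) := by
    intro i j hij
    simp only [Function.comp_apply]
    by_contra hc
    push Not at hc
    have hp : pr (π.symm j) (π.symm i) := by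
      rcases lt_trichotomy (π.symm j) (π.symm i) with h | h | h
      · exact Or.inl ⟨h, hc.le⟩
      · rw [h] at hc; omega
      · exact Or.inr ⟨h, hc⟩
    have h1 := hpr_lt _ _ hp
    have h2 : ∀ l, legCo n α (π.symm l) = l.val := fun l => by
      have : π (π.symm l) = l := π.apply_symm_apply l
      exact congrArg Fin.val this
    rw [h2, h2] at h1
    exact absurd hij (not_le.mpr h1)
  have hκ := eq_sortDesc η (Tuple.sort η * π.symm) hanti
  rw [← Equiv.sum_comp π (fun i : Fin n => q ^ sortDesc n η i * (t ^ (i : ℕ))⁻¹)]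
  refine Finset.sum_congr rfl fun i _ => ?_
  rw [← hκ, div_eq_mul_inv]
  have e1 : (η ∘ ⇑(Tuple.sort η * π.symm)) (π i) = α i := by
    simp [Equiv.Perm.mul_apply, hα, sortAsc]
  rw [e1]
  rfl

end Stmt18

open Finset MvPolynomial
namespace Stmt18

lemma nsq_sortDesc {n : ℕ} (η : Fin n → ℕ) : nsq (sortDesc n η) = nsq η := by
  obtain ⟨σ, h⟩ := sortDesc_comp η
  rw [h, nsq_comp]

lemma nsq_sortAsc {n : ℕ} (η : Fin n → ℕ) : nsq (sortAsc n η) = nsq η :=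
  nsq_comp η (Tuple.sort η)

/-- monomials of `E_{η^R}` -/
lemma E_supp {n : ℕ} {T : ℕ → P n →ₗ[K] P n} {η : Fin n → ℕ} {E : P n}
    (hE : IsNSMac n q t T (sortAsc n η) E) (ν : Fin n → ℕ) (h : cf E ν ≠ 0) :
    ν = sortAsc n η ∨ nsq ν < nsq η := by
  have h1 := hE.2.1 _ h
  rcases h1 with h1 | h1 | ⟨h1, h2⟩
  · exact Or.inl h1
  · right
    have := nsq_lt_of_domLT _ _ (sortDesc_anti _) h1
    rw [nsq_sortDesc, nsq_sortDesc, nsq_sortAsc] at this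
    exact this
  · left
    refine eq_of_domLE _ _ (sortAsc_mono η) h2.1 ?_
    have := congrArg nsq h1
    rw [nsq_sortDesc, nsq_sortDesc] at this
    exact this

lemma qfact_eq (m : ℕ) : qfact t⁻¹ m = ∏ k ∈ range m, ∑ c ∈ range (k + 1), t⁻¹ ^ c := by
  unfold qfact
  refine Finset.prod_congr rfl fun k _ => ?_
  have h : t⁻¹ ≠ 1 := by
    rw [Ne, inv_eq_one]
    exact t_ne_one
  rw [geom_sum_eq h, ← neg_sub, ← neg_sub t⁻¹ 1, neg_div_neg_eq]

section
variable {n : ℕ} (hn : 0 < n) {T : ℕ → P n →ₗ[K] P n} (hT : IsDL n t T)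
  {Tw : Equiv.Perm (Fin n) → P n →ₗ[K] P n} (hTw : IsTsigma n T Tw)

include hT hTw in
/-- the leading coefficient of `U⁺ E_{η^R}` -/
lemma lead_coeff {η : Fin n → ℕ} {E : P n} (hE : IsNSMac n q t T (sortAsc n η) E) :
    cf (Uplus n Tw E) (sortDesc n η) = t ^ (n * (n - 1) / 2) *
          ∏ j ∈ Finset.range (sortDesc n η ⟨0, hn⟩ + 1),
            qfact t⁻¹ ((univ.filter fun i : Fin n => η i = j).card) := by
  classical
  have hb : Bdd (nsq (sortDesc n η)) E := by
    intro ν hν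
    by_contra hc
    rw [nsq_sortDesc] at hν
    rcases E_supp hE ν hc with h | h
    · rw [h, nsq_sortAsc] at hν
      omega
    · omega
  have h1 : cf E (sortAsc n η) = 1 := hE.1
  have hrev : ∀ τ : Equiv.Perm (Fin n),
      sortDesc n η ∘ ⇑(τ * Fin.revPerm : Equiv.Perm (Fin n)) = sortAsc n η ↔
        sortDesc n η ∘ ⇑τ = sortDesc n η := by
    intro τ
    constructor
    · intro h
      funext i
      have := congrFun h i.rev
      simpa [sortDesc_eq_asc] using this
    · intro h
      funext i
      have := congrFun h i.rev
      simpa [sortDesc_eq_asc] using this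
  have h2 : ∀ τ : Equiv.Perm (Fin n), cf (Tw (τ * Fin.revPerm) E) (sortDesc n η) =
      if sortDesc n η ∘ ⇑τ = sortDesc n η then
        t ^ (n * (n - 1) / 2) * t⁻¹ ^ inversions τ else 0 := by
    intro τ
    rw [cf_Tw hT hTw (sortDesc_anti η) _ E hb]
    split_ifs with h
    · rw [(hrev τ).mpr h, h1, ← inversions_rev τ, pow_add, inv_pow, mul_one, mul_assoc,
        mul_inv_cancel₀ (pow_ne_zero _ t_ne_zero), mul_one]
    · by_cases hc : cf E (sortDesc n η ∘ ⇑(τ * Fin.revPerm : Equiv.Perm (Fin n))) = 0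
      · rw [hc, mul_zero]
      · exfalso
        rcases E_supp hE _ hc with h' | h'
        · exact h ((hrev τ).mp h')
        · rw [nsq_comp, nsq_sortDesc] at h'
          omega
  have h3 : cf (Uplus n Tw E) (sortDesc n η) =
      ∑ τ : Equiv.Perm (Fin n), cf (Tw (τ * Fin.revPerm) E) (sortDesc n η) := by
    unfold Uplus
    rw [LinearMap.sum_apply, cf_sum]
    exact (Equiv.sum_comp (Equiv.mulRight (Fin.revPerm : Equiv.Perm (Fin n)))
      (fun σ => cf (Tw σ E) (sortDesc n η))).symm
  rw [h3]
  simp only [h2]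
  rw [← Finset.sum_filter, ← Finset.mul_sum,
    sum_stab (sortDesc_anti η) t⁻¹ (range (sortDesc n η ⟨0, hn⟩ + 1))]
  · congr 1
    refine Finset.prod_congr rfl fun j _ => ?_
    rw [qfact_eq]
    congr 2
    obtain ⟨σ, hσ⟩ := sortDesc_comp η
    rw [hσ]
    refine Finset.card_bij (fun i _ => σ i) ?_ ?_ ?_
    · intro i hi
      simpa using hi
    · intro i _ j _ h
      exact σ.injective h
    · intro i hi
      refine ⟨σ.symm i, by simpa using hi, by simp⟩
  · intro i
    rw [mem_range, Nat.lt_succ_iff]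
    exact sortDesc_anti η (Fin.mk_le_of_le_val (Nat.zero_le _))

include hn hT in
lemma symm_eig_zero {g : P n} (hg : g.IsSymmetric) (κ : Fin n → ℕ)
    (hD : (∑ i : Fin n, Yop n q t T i) g = (∑ i : Fin n, q ^ κ i * (t ^ (i : ℕ))⁻¹) • g)
    (h0 : cf g κ = 0) : g = 0 := by
  by_contra hne
  have hs : g.support.Nonempty := by
    rw [Finset.nonempty_iff_ne_empty, Ne, support_eq_empty]
    exact hne
  obtain ⟨ν, hν, hmax⟩ := Finset.exists_max_image g.support (fun m => nsq (m : Fin n → ℕ)) hs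
  have hν' : cf g ν ≠ 0 := by
    rw [mem_support_iff] at hν
    simpa [cf] using hν
  obtain ⟨σ, hσ⟩ := sortDesc_comp (ν : Fin n → ℕ)
  have hμ : cf g (sortDesc n ν) ≠ 0 := by
    rw [hσ, cf_symm hg]
    exact hν'
  have hb : Bdd (nsq (sortDesc n ν)) g := by
    intro m hm
    by_contra hc
    rw [nsq_sortDesc] at hm
    have : nsq m ≤ nsq (ν : Fin n → ℕ) :=
      hmax (Finsupp.equivFunOnFinite.symm m) (mem_support_iff.mpr hc)
    exact absurd hm (not_lt.mpr this)
  have h1 := congrArg (fun f => cf f (sortDesc n ν)) hD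
  simp only [LinearMap.sum_apply, cf_sum, cf_smul,
    cf_Yop hn hT hg (sortDesc_anti (ν : Fin n → ℕ)) hb] at h1
  rw [← Finset.sum_mul] at h1
  have h2 := eig_inj _ _ (mul_right_cancel₀ hμ h1)
  rw [h2] at hμ
  exact hμ h0

end

end Stmt18

open Finset MvPolynomial
open Stmt18

theorem stmt_18 (n : ℕ) (hn : 0 < n) (η : Fin n → ℕ)
    (T : ℕ → P n →ₗ[K] P n) (hT : IsDL n t T)
    (Tw : Equiv.Perm (Fin n) → P n →ₗ[K] P n) (hTw : IsTsigma n T Tw)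
    (E : P n) (hE : IsNSMac n q t T (sortAsc n η) E)
    (Pp : P n) (hPp : IsSymMac n q t T (sortDesc n η) Pp) :
    Uplus n Tw E =
      C (t ^ (n * (n - 1) / 2) *
          ∏ j ∈ Finset.range (sortDesc n η ⟨0, hn⟩ + 1),
            qfact t⁻¹ ((univ.filter fun i : Fin n => η i = j).card)) * Pp := by
  have hc := lead_coeff hn hT hTw hE
  set c := t ^ (n * (n - 1) / 2) *
          ∏ j ∈ Finset.range (sortDesc n η ⟨0, hn⟩ + 1),
            qfact t⁻¹ ((univ.filter fun i : Fin n => η i = j).card) with hcdef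
  obtain ⟨p1, p2, _, p4⟩ := hPp
  have hsy : (Uplus n Tw E - C c * Pp).IsSymmetric := by
    refine MvPolynomial.IsSymmetric.sub (Uplus_symm hT hTw E) ?_
    exact MvPolynomial.IsSymmetric.mul (MvPolynomial.IsSymmetric.C c) p1
  have hDE : (∑ i : Fin n, Yop n q t T i) E =
      (∑ i : Fin n, q ^ sortDesc n η i * (t ^ (i : ℕ))⁻¹) • E := by
    rw [← eig_sum, LinearMap.sum_apply, Finset.sum_smul]
    exact Finset.sum_congr rfl fun i _ => hE.2.2 i
  have hDU : (∑ i : Fin n, Yop n q t T i) (Uplus n Tw E) =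
      (∑ i : Fin n, q ^ sortDesc n η i * (t ^ (i : ℕ))⁻¹) • Uplus n Tw E := by
    have := LinearMap.congr_fun (D_Uplus hn hT hTw) E
    rw [Module.End.mul_apply, Module.End.mul_apply, hDE, map_smul] at this
    exact this.symm
  have hD : (∑ i : Fin n, Yop n q t T i) (Uplus n Tw E - C c * Pp) =
      (∑ i : Fin n, q ^ sortDesc n η i * (t ^ (i : ℕ))⁻¹) • (Uplus n Tw E - C c * Pp) := by
    rw [← smul_eq_C_mul, map_sub, map_smul, hDU, p4, smul_sub, smul_comm c]
  have h0 : cf (Uplus n Tw E - C c * Pp) (sortDesc n η) = 0 := by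
    rw [cf_sub, cf_C_mul, hc]
    have : cf Pp (sortDesc n η) = 1 := p2
    rw [this, mul_one, sub_self]
  exact sub_eq_zero.mp (symm_eig_zero hn hT hsy _ hD h0)
end
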